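/- Under Conditions (A)–(D) with b_j ≠ 0 for all j ≥ 1, let u₀ be a random variable in H, independent of {η_k}, whose law is supported by 𝒜, and for an integer m ≥ 1 let ζ_k^m = k⁻¹ Σ_{n=0}^{k−1} δ_{(u_n,…,u_{n+m−1})}. Then the family {ζ_k^m, k ≥ 1}, regarded as random probability measures on 𝒜^{(m)}, satisfies the large deviation principle with a good rate function I_m : 𝒫(𝒜^{(m)}) → [0,+∞] which can be written as I_m(σ) = sup_{V ∈ C(𝒜^{(m)})} (⟨V,σ⟩ − Q_m(V)), where Q_m is a 1-Lipschitz convex function on C(𝒜^{(m)}) with Q_m(C) = C for every constant C ∈ ℝ. -/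

import Mathlib

open MeasureTheory ProbabilityTheory Filter Topology BoundedContinuousFunction
open scoped ENNReal NNReal Pointwise

noncomputable section

/-- The sets `𝒜_k(B)`: `𝒜_0(B) = B`, `𝒜_k(B) = S(𝒜_{k-1}(B)) + 𝒦`. -/
def attain {H : Type*} [AddCommGroup H] (S : H → H) (K : Set H) (B : Set H) : ℕ → Set H
  | 0 => B
  | n + 1 => S '' attain S K B n + K

/-- The domain of attainability `𝒜(B)` from `B`: the closure of `⋃_k 𝒜_k(B)`. -/
def attainDom {H : Type*} [AddCommGroup H] [TopologicalSpace H]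
    (S : H → H) (K : Set H) (B : Set H) : Set H :=
  closure (⋃ n, attain S K B n)

variable {H : Type} [NormedAddCommGroup H] [InnerProductSpace ℝ H] [CompleteSpace H]

/-- The orthogonal projection `𝖯_N` onto the span of the first `N` vectors of an orthonormal
basis. -/
def projB (e : HilbertBasis ℕ ℝ H) (N : ℕ) (u : H) : H :=
  ∑ j ∈ Finset.range N, e.repr u j • (e j : H)

/-- Condition (A): regularity and stability. -/
def CondA (S : H → H) : Prop :=
  ContDiff ℝ 1 S ∧
  ∀ R r : ℝ, 0 < r → r < R →
    ∃ C : ℝ, 0 < C ∧ ∃ a : ℝ, 0 < a ∧ a < 1 ∧ ∃ n₀ : ℕ, 1 ≤ n₀ ∧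
      (∀ u₁ ∈ Metric.closedBall (0 : H) R, ∀ u₂ ∈ Metric.closedBall (0 : H) R,
          ‖S u₁ - S u₂‖ ≤ C * ‖u₁ - u₂‖) ∧
      ∀ u ∈ Metric.closedBall (0 : H) R, ∀ n : ℕ, n₀ ≤ n →
          ‖S^[n] u‖ ≤ max (a * ‖u‖) r

/-- Condition (B): dissipativity. -/
def CondB (S : H → H) (K : Set H) : Prop :=
  ∃ ρ : ℝ, 0 < ρ ∧ ∃ k₀ : ℝ → ℕ, Monotone k₀ ∧
    ∀ R : ℝ, 0 ≤ R → ∀ k : ℕ, k₀ R ≤ k →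
      attain S K (Metric.closedBall 0 R) k ⊆ Metric.closedBall (0 : H) ρ

/-- Condition (C): squeezing. -/
def CondC (S : H → H) (e : HilbertBasis ℕ ℝ H) : Prop :=
  ∀ R : ℝ, 0 < R → ∃ γ : ℕ → ℝ, (∀ N, 0 < γ N) ∧ Antitone γ ∧
    Tendsto γ atTop (𝓝 0) ∧
    ∀ N : ℕ, ∀ u₁ ∈ Metric.closedBall (0 : H) R, ∀ u₂ ∈ Metric.closedBall (0 : H) R,
      ‖(S u₁ - S u₂) - projB e N (S u₁ - S u₂)‖ ≤ γ N * ‖u₁ - u₂‖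

/-- Condition (D): structure of the noise, `η_k = ∑_j b_j ξ_{jk} e_j` with `∑ b_j² < ∞`,
independent scalar `ξ_{jk}` whose laws have Lipschitz densities `p_j` with `p_j(0) > 0` and
support in `[-1,1]`. -/
def CondD [MeasurableSpace H] {Ω : Type*} [MeasurableSpace Ω] (P : Measure Ω)
    (e : HilbertBasis ℕ ℝ H) (η : ℕ → Ω → H)
    (b : ℕ → ℝ) (ξ : ℕ → ℕ → Ω → ℝ) (p : ℕ → ℝ → ℝ) : Prop :=
  (∀ j, 0 ≤ b j) ∧ Summable (fun j => (b j) ^ 2) ∧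
  (∀ k ω, HasSum (fun j => (b j * ξ j k ω) • (e j : H)) (η k ω)) ∧
  (∀ j k, Measurable (ξ j k)) ∧
  iIndepFun (fun jk : ℕ × ℕ => ξ jk.1 jk.2) P ∧
  (∀ j k, Measure.map (ξ j k) P
      = (volume : Measure ℝ).withDensity fun x => ENNReal.ofReal (p j x)) ∧
  (∀ j, ∃ L : ℝ≥0, LipschitzWith L (p j)) ∧
  (∀ j, 0 < p j 0) ∧
  (∀ j, Function.support (p j) ⊆ Set.Icc (-1 : ℝ) 1)

/-- The trajectory `u_k = S(u_{k-1}) + η_k` of the random dynamical system issued from `u₀`. -/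
def traj {Ω : Type*} (S : H → H) (η : ℕ → Ω → H) (u₀ : Ω → H) : ℕ → Ω → H
  | 0 => u₀
  | k + 1 => fun ω => S (traj S η u₀ k ω) + η (k + 1) ω

/-- The (topological) support of a measure. -/
def msupp {X : Type*} [TopologicalSpace X] [MeasurableSpace X] (μ : Measure X) : Set X :=
  {x | ∀ U ∈ 𝓝 x, 0 < μ U}

/-- The occupation measures `ζ_k = k⁻¹ ∑_{n=0}^{k-1} δ_{x_n}` of a sequence. -/
def occ {X : Type*} [MeasurableSpace X] (x : ℕ → X) (k : ℕ) : ProbabilityMeasure X :=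
  if hk : k = 0 then ⟨Measure.dirac (x 0), Measure.dirac.isProbabilityMeasure⟩
  else
    ⟨(k : ℝ≥0∞)⁻¹ • ∑ n ∈ Finset.range k, Measure.dirac (x n), by
      refine ⟨?_⟩
      simp only [Measure.smul_apply, Measure.finset_sum_apply, measure_univ,
        Finset.sum_const, Finset.card_range, nsmul_eq_mul, mul_one, smul_eq_mul]
      exact ENNReal.inv_mul_cancel (Nat.cast_ne_zero.mpr hk) (ENNReal.natCast_ne_top k)⟩

/-- Large deviation principle for the sequence of events `prob k` (the laws of random
probability measures in `Z`), with rate function `I`. -/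
def LDPof {Z : Type*} [TopologicalSpace Z] (prob : ℕ → Set Z → ℝ≥0∞) (I : Z → ℝ≥0∞) : Prop :=
  (∀ F : Set Z, IsClosed F →
    Filter.limsup (fun k : ℕ => (((k : ℝ)⁻¹ : ℝ) : EReal) * ENNReal.log (prob k F)) atTop
      ≤ -(⨅ σ ∈ F, (I σ : EReal))) ∧
  (∀ G : Set Z, IsOpen G →
    -(⨅ σ ∈ G, (I σ : EReal))
      ≤ Filter.liminf (fun k : ℕ => (((k : ℝ)⁻¹ : ℝ) : EReal) * ENNReal.log (prob k G)) atTop)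

/-- A good rate function: lower semicontinuous with compact level sets. -/
def GoodRate {Z : Type*} [TopologicalSpace Z] (I : Z → ℝ≥0∞) : Prop :=
  LowerSemicontinuous I ∧ ∀ c : ℝ≥0∞, c ≠ ⊤ → IsCompact {σ : Z | I σ ≤ c}

/-- The set `𝒜^{(m)}` of `m`-segments of trajectories: vectors `(v₁,…,v_m) ∈ H^m` with
`v₁ ∈ 𝒜` and `v_k = S(v_{k-1}) + ζ'_k`, `ζ'_k ∈ 𝒦`, for `2 ≤ k ≤ m`. -/
def attainM {H : Type*} [AddCommGroup H] [TopologicalSpace H]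
    (S : H → H) (K : Set H) (A : Set H) (m : ℕ) : Set (Fin m → H) :=
  {v | (∀ h : 0 < m, v ⟨0, h⟩ ∈ A) ∧
    ∀ i : ℕ, ∀ h : i + 1 < m,
      ∃ z ∈ K, v ⟨i + 1, h⟩ = S (v ⟨i, Nat.lt_of_succ_lt h⟩) + z}

/-!
The finite-dimensional projections of the noise have Lipschitz densities, so a shift of finitely
many coordinates of `η_k` cancels the low modes of `S(u) - S(u')` at a cost proportional to
`‖u - u'‖`, while squeezing contracts the high modes. This shift coupling bounds the variation of
Feynman–Kac functionals `u ↦ 𝔼_u exp F(∑ V(u_n))`, and together with uniform irreducibility (the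
dynamics is attracted to `0`) it yields a Harnack inequality for them, uniformly over
`1`-Lipschitz functions `F` of vector-valued sums. By the Markov property `log 𝔼 exp F(∑ V(u_n))`
is then almost superadditive in the number of steps, so the pressure `Q_m` exists. The upper bound
is Chernoff's inequality on a compact set of measures. The lower bound does not need
differentiability of `Q_m`: superadditivity for `F = -‖· - y‖` produces a concave limit as a
function of `y`, and affine majorants of that limit identify it with the Legendre transform.
-/

section OfRealExp

lemma ofReal_exp_add (a b : ℝ) : ENNReal.ofReal (Real.exp (a + b)) =
    ENNReal.ofReal (Real.exp a) * ENNReal.ofReal (Real.exp b) := by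
  rw [Real.exp_add, ENNReal.ofReal_mul (Real.exp_pos _).le]

lemma ofReal_exp_le {a b : ℝ} (h : a ≤ b) :
    ENNReal.ofReal (Real.exp a) ≤ ENNReal.ofReal (Real.exp b) :=
  ENNReal.ofReal_le_ofReal (Real.exp_le_exp.2 h)

lemma ofReal_exp_mul_ofReal_exp_neg_mul (a : ℝ) (x : ℝ≥0∞) :
    ENNReal.ofReal (Real.exp a) * (ENNReal.ofReal (Real.exp (-a)) * x) = x := by
  rw [← mul_assoc, ← ofReal_exp_add]
  simp

lemma ofReal_exp_neg_mul_le {a : ℝ} {x y : ℝ≥0∞} (h : x ≤ ENNReal.ofReal (Real.exp a) * y) :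
    ENNReal.ofReal (Real.exp (-a)) * x ≤ y := by
  calc ENNReal.ofReal (Real.exp (-a)) * x
      ≤ ENNReal.ofReal (Real.exp (-a)) * (ENNReal.ofReal (Real.exp a) * y) := by gcongr
    _ = y := by simpa using ofReal_exp_mul_ofReal_exp_neg_mul (-a) y

lemma le_ofReal_exp_neg_mul {a : ℝ} {x y : ℝ≥0∞} (h : ENNReal.ofReal (Real.exp a) * x ≤ y) :
    x ≤ ENNReal.ofReal (Real.exp (-a)) * y := by
  rw [← ofReal_exp_mul_ofReal_exp_neg_mul (-a) x, neg_neg]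
  gcongr

end OfRealExp

/-! ### The Feynman–Kac functional of a randomly forced system -/

/-- The functional `𝔼 exp F(y + V(w₀) + ⋯ + V(w_{k-1}))` of the chain `w₀ = w`,
`w_{n+1} = φ(w_n, g_n)` driven by independent noises `g_n` of law `ν`. The vector-valued
observable `V` and the terminal functional `F` allow one argument to cover both the pressure
(`F` linear) and the local probabilities of empirical averages (`F` minus a distance). -/
def feynmanKac {W G E : Type*} [MeasurableSpace G] [Add E] (ν : Measure G) (φ : W → G → W)
    (V : W → E) (F : E → ℝ) : ℕ → E → W → ℝ≥0∞
  | 0, y, _ => ENNReal.ofReal (Real.exp (F y))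
  | k + 1, y, w => ∫⁻ g, feynmanKac ν φ V F k (y + V w) (φ w g) ∂ν

/-- The Markov operator `f ↦ 𝔼 f(φ(·, g))` of the chain with transition map `φ` and noise
law `ν`. -/
def markovOp {W G : Type*} [MeasurableSpace G] (ν : Measure G) (φ : W → G → W) (f : W → ℝ≥0∞)
    (w : W) : ℝ≥0∞ :=
  ∫⁻ g, f (φ w g) ∂ν

namespace feynmanKac

variable {W G E : Type*} [MeasurableSpace G] [NormedAddCommGroup E] (ν : Measure G)
  (φ : W → G → W) (V : W → E)

lemma measurable_uncurry [SFinite ν] [MeasurableSpace W] [MeasurableSpace E] [BorelSpace E]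
    [SecondCountableTopology E] (hφ : Measurable (Function.uncurry φ)) (hV : Measurable V)
    {F : E → ℝ} (hF : Measurable F) (k : ℕ) :
    Measurable fun p : E × W ↦ feynmanKac ν φ V F k p.1 p.2 := by
  induction k with
  | zero => exact (hF.comp measurable_fst).exp.ennreal_ofReal
  | succ k ih =>
    have hstep : Measurable fun q : (E × W) × G ↦ (q.1.1 + V q.1.2, φ q.1.2 q.2) :=
      (measurable_fst.fst.add (hV.comp measurable_fst.snd)).prodMk
        (hφ.comp (measurable_fst.snd.prodMk measurable_snd))
    exact (ih.comp hstep).lintegral_prod_right'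

lemma le_exp_mul_of_forall_le {F F' : E → ℝ} {c : ℝ} {y y' : E}
    (h : ∀ z, F (y + z) ≤ c + F' (y' + z)) (k : ℕ) (w : W) :
    feynmanKac ν φ V F k y w ≤ ENNReal.ofReal (Real.exp c) * feynmanKac ν φ V F' k y' w := by
  induction k generalizing y y' w with
  | zero =>
    simp only [feynmanKac]
    rw [← ofReal_exp_add]
    simpa using ofReal_exp_le (h 0)
  | succ k ih =>
    simp only [feynmanKac]
    rw [← lintegral_const_mul' _ _ ENNReal.ofReal_ne_top]
    exact lintegral_mono fun g ↦ ih (fun z ↦ by simpa [add_assoc] using h (V w + z)) _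

section Lipschitz

variable {V} {F : E → ℝ} {B : ℝ}

lemma le_exp_norm_sub_mul (hF : LipschitzWith 1 F) (k : ℕ) (y y' : E) (w : W) :
    feynmanKac ν φ V F k y w ≤
      ENNReal.ofReal (Real.exp ‖y - y'‖) * feynmanKac ν φ V F k y' w := by
  refine le_exp_mul_of_forall_le ν φ V (fun z ↦ ?_) k w
  have hyz := hF.dist_le_mul (y + z) (y' + z)
  rw [Real.dist_eq, NNReal.coe_one, one_mul, dist_add_right, dist_eq_norm] at hyz
  linarith [le_abs_self (F (y + z) - F (y' + z))]

lemma le_exp_mul_succ [IsProbabilityMeasure ν] (hF : LipschitzWith 1 F) (hB : ∀ w, ‖V w‖ ≤ B)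
    (k : ℕ) (y : E) (w : W) :
    feynmanKac ν φ V F k y w ≤
      ENNReal.ofReal (Real.exp B) * feynmanKac ν φ V F (k + 1) y w := by
  induction k generalizing y w with
  | zero =>
    have hstep : feynmanKac ν φ V F 1 y w = feynmanKac ν φ V F 0 (y + V w) w := by
      simp [feynmanKac]
    rw [hstep]
    refine (le_exp_norm_sub_mul ν φ hF 0 y (y + V w) w).trans ?_
    gcongr
    simpa using hB w
  | succ k ih =>
    rw [feynmanKac, feynmanKac, ← lintegral_const_mul' _ _ ENNReal.ofReal_ne_top]
    exact lintegral_mono fun g ↦ ih _ _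

lemma succ_le_exp_mul [IsProbabilityMeasure ν] (hF : LipschitzWith 1 F) (hB : ∀ w, ‖V w‖ ≤ B)
    (k : ℕ) (y : E) (w : W) :
    feynmanKac ν φ V F (k + 1) y w ≤
      ENNReal.ofReal (Real.exp B) * feynmanKac ν φ V F k y w := by
  induction k generalizing y w with
  | zero =>
    have hstep : feynmanKac ν φ V F 1 y w = feynmanKac ν φ V F 0 (y + V w) w := by
      simp [feynmanKac]
    rw [hstep]
    refine (le_exp_norm_sub_mul ν φ hF 0 (y + V w) y w).trans ?_
    gcongr
    simpa using hB w
  | succ k ih =>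
    rw [feynmanKac, feynmanKac, ← lintegral_const_mul' _ _ ENNReal.ofReal_ne_top]
    exact lintegral_mono fun g ↦ ih _ _

lemma add_le_exp_mul [IsProbabilityMeasure ν] (hF : LipschitzWith 1 F) (hB : ∀ w, ‖V w‖ ≤ B)
    (k j : ℕ) (y : E) (w : W) :
    feynmanKac ν φ V F (k + j) y w ≤
      ENNReal.ofReal (Real.exp (j * B)) * feynmanKac ν φ V F k y w := by
  induction j with
  | zero => simp
  | succ j ih =>
    refine (succ_le_exp_mul ν φ hF hB (k + j) y w).trans ?_
    push_cast
    rw [add_mul, one_mul, add_comm (_ * B), ofReal_exp_add, mul_assoc]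
    gcongr

lemma le_exp [IsProbabilityMeasure ν] (hF : LipschitzWith 1 F) (hB : ∀ w, ‖V w‖ ≤ B)
    (k : ℕ) (y : E) (w : W) :
    feynmanKac ν φ V F k y w ≤ ENNReal.ofReal (Real.exp (k * B + F y)) := by
  simpa only [zero_add, ofReal_exp_add, feynmanKac] using add_le_exp_mul ν φ hF hB 0 k y w

lemma ne_zero [IsProbabilityMeasure ν] (hF : LipschitzWith 1 F) (hB : ∀ w, ‖V w‖ ≤ B)
    (k : ℕ) (y : E) (w : W) : feynmanKac ν φ V F k y w ≠ 0 := by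
  induction k with
  | zero => simp [feynmanKac, Real.exp_pos]
  | succ k ih =>
    intro hzero
    have hk := le_exp_mul_succ ν φ hF hB k y w
    rw [hzero, mul_zero, nonpos_iff_eq_zero] at hk
    exact ih hk

lemma markovOp_iterate_le (hF : LipschitzWith 1 F) (hB : ∀ w, ‖V w‖ ≤ B)
    (k j : ℕ) (y : E) (w : W) :
    (markovOp ν φ)^[j] (feynmanKac ν φ V F k y) w ≤
      ENNReal.ofReal (Real.exp (j * B)) * feynmanKac ν φ V F (k + j) y w := by
  induction j generalizing w with
  | zero => simp
  | succ j ih =>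
    have hshift (g : G) : feynmanKac ν φ V F (k + j) y (φ w g) ≤
        ENNReal.ofReal (Real.exp B) * feynmanKac ν φ V F (k + j) (y + V w) (φ w g) := by
      refine (le_exp_norm_sub_mul ν φ hF (k + j) y (y + V w) (φ w g)).trans ?_
      gcongr
      simpa using hB w
    rw [Function.iterate_succ_apply', markovOp]
    calc ∫⁻ g, (markovOp ν φ)^[j] (feynmanKac ν φ V F k y) (φ w g) ∂ν
        ≤ ∫⁻ g, ENNReal.ofReal (Real.exp ((j + 1 : ℕ) * B)) *
            feynmanKac ν φ V F (k + j) (y + V w) (φ w g) ∂ν := by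
          refine lintegral_mono fun g ↦ (ih _).trans ?_
          push_cast
          rw [add_mul, one_mul, ofReal_exp_add, mul_assoc]
          gcongr
          exact hshift g
      _ = _ := by rw [lintegral_const_mul' _ _ ENNReal.ofReal_ne_top]; rfl

end Lipschitz

lemma mul_le_add {K : Set G} {A : Set W} (hνK : ∀ᵐ g ∂ν, g ∈ K)
    (hA : Set.MapsTo (Function.uncurry φ) (A ×ˢ K) A) {F F₁ F₂ : E → ℝ} {j : ℕ} {c : ℝ≥0∞}
    (hc : ∀ w ∈ A, c ≤ feynmanKac ν φ V F₂ j 0 w) (hc_top : c ≠ ⊤) {y : E}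
    (hF : ∀ z z', F₁ (y + z) + F₂ z' ≤ F (y + z + z')) (k : ℕ) {w : W} (hw : w ∈ A) :
    c * feynmanKac ν φ V F₁ k y w ≤ feynmanKac ν φ V F (k + j) y w := by
  induction k generalizing y w with
  | zero =>
    have hshift : feynmanKac ν φ V F₂ j 0 w ≤
        ENNReal.ofReal (Real.exp (-F₁ y)) * feynmanKac ν φ V F j y w := by
      refine le_exp_mul_of_forall_le ν φ V (fun z ↦ ?_) j w
      have hz := hF 0 z
      rw [add_zero] at hz
      rw [zero_add]
      linarith
    calc c * feynmanKac ν φ V F₁ 0 y w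
        ≤ (ENNReal.ofReal (Real.exp (-F₁ y)) * feynmanKac ν φ V F j y w) *
            feynmanKac ν φ V F₁ 0 y w := by gcongr; exact (hc w hw).trans hshift
      _ = feynmanKac ν φ V F (0 + j) y w := by
          rw [mul_comm, zero_add]
          exact ofReal_exp_mul_ofReal_exp_neg_mul _ _
  | succ k ih =>
    rw [Nat.succ_add]
    simp only [feynmanKac]
    rw [← lintegral_const_mul' _ _ hc_top]
    refine lintegral_mono_ae ?_
    filter_upwards [hνK] with g hg
    exact ih (fun z z' ↦ by simpa [add_assoc] using hF (V w + z) z')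
      (hA (Set.mk_mem_prod hw hg))

end feynmanKac

/-- The measure `ν` and its translate by `h` differ by at most `c` in total variation, expressed on
bounded nonnegative test functions. -/
def ShiftBound {G : Type*} [MeasurableSpace G] [Add G] (ν : Measure G) (h : G) (c : ℝ≥0∞) : Prop :=
  ∀ f : G → ℝ≥0∞, Measurable f → ∀ M : ℝ≥0∞, (∀ g, f g ≤ M) →
    ∫⁻ g, f g ∂ν ≤ ∫⁻ g, f (g + h) ∂ν + c * M

/-- Coupling by a deterministic shift of the noise: for any two states of `A` there is a shift `h`
after which the images are `q` times closer, at the price of a change of the noise law `ν` of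
total variation at most `C` times the distance `D` of the two states. -/
def HasShiftCoupling {W G : Type*} [MeasurableSpace G] [Add G] (ν : Measure G) (φ : W → G → W)
    (K : Set G) (A : Set W) (D : W → W → ℝ) (q C : ℝ) : Prop :=
  ∀ w₁ ∈ A, ∀ w₂ ∈ A, ∃ h : G,
    (∀ g ∈ K, g + h ∈ K → D (φ w₁ (g + h)) (φ w₂ g) ≤ q * D w₁ w₂) ∧
    ShiftBound ν h (ENNReal.ofReal (C * D w₁ w₂))

/-- Uniform irreducibility on `A`: for each `δ` there is a time at which the `δ`-ball of any state
of `A` is visited with probability bounded below, uniformly in the initial state. Stated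
through the Markov operator acting on functions bounded below by a constant on the ball, which
avoids measurability requirements. -/
def UniformlyIrreducibleOn {W G : Type*} [MeasurableSpace G] (ν : Measure G) (φ : W → G → W)
    (A : Set W) (D : W → W → ℝ) : Prop :=
  ∀ δ : ℝ, 0 < δ → ∃ τ : ℕ, ∃ p : ℝ, 0 < p ∧ ∀ w ∈ A, ∀ w' ∈ A, ∀ f : W → ℝ≥0∞, ∀ c : ℝ≥0∞,
    (∀ x ∈ A, D w' x < δ → c ≤ f x) → ENNReal.ofReal p * c ≤ (markovOp ν φ)^[τ] f w

lemma exists_mem_half_iSup_lt {W : Type*} {A : Set W} {f : W → ℝ≥0∞} (h0 : ⨆ x ∈ A, f x ≠ 0)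
    (h_top : ⨆ x ∈ A, f x ≠ ⊤) :
    ∃ x ∈ A, (⨆ x ∈ A, f x) / 2 < f x := by
  simpa only [lt_iSup_iff, exists_prop] using ENNReal.half_lt_self h0 h_top

lemma exp_neg_mul_le_of_half_lt {M x z : ℝ≥0∞} {a b : ℝ} (hM : M ≠ ⊤) (hx : M / 2 ≤ x)
    (hb : b ≤ 1 / 4) (hxz : x ≤ ENNReal.ofReal (Real.exp a) * z + ENNReal.ofReal b * M) :
    ENNReal.ofReal (Real.exp (-(Real.log 4 + a))) * M ≤ z := by
  have hquarter : ENNReal.ofReal (Real.exp (-Real.log 4)) = 4⁻¹ := by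
    rw [Real.exp_neg, Real.exp_log (by norm_num), ENNReal.ofReal_inv_of_pos (by norm_num)]
    simp
  have hb_quarter : ENNReal.ofReal b ≤ 4⁻¹ := by
    simpa [ENNReal.ofReal_inv_of_pos] using ENNReal.ofReal_le_ofReal hb
  have hhalf : M / 2 = 4⁻¹ * M + 4⁻¹ * M := by
    rw [← two_mul, ← mul_assoc, ENNReal.div_eq_inv_mul, show (4 : ℝ≥0∞) = 2 * 2 by norm_num,
      ENNReal.mul_inv (by simp) (by simp), ← mul_assoc, ENNReal.mul_inv_cancel (by simp) (by simp),
      one_mul]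
  have hsum : 4⁻¹ * M + 4⁻¹ * M ≤ ENNReal.ofReal (Real.exp a) * z + 4⁻¹ * M :=
    hhalf ▸ hx.trans (hxz.trans (by gcongr))
  have hle : 4⁻¹ * M ≤ ENNReal.ofReal (Real.exp a) * z :=
    (ENNReal.add_le_add_iff_right (ENNReal.mul_ne_top (by simp) hM)).1 hsum
  rw [neg_add_rev, ofReal_exp_add, mul_assoc, hquarter]
  exact ofReal_exp_neg_mul_le hle

lemma lintegral_le_of_shift_le {G : Type*} [MeasurableSpace G] [Add G] {ν : Measure G}
    [IsProbabilityMeasure ν] {f f' : G → ℝ≥0∞} {h : G} {a M : ℝ≥0∞} {c e : ℝ} (hc : 0 ≤ c)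
    (he : 0 ≤ e) (ha : a ≠ ⊤)
    (hshift : ∫⁻ g, f g ∂ν ≤ ∫⁻ g, f (g + h) ∂ν + ENNReal.ofReal c * (ENNReal.ofReal e * M))
    (hf : ∀ᵐ g ∂ν, f (g + h) ≤ a * f' g + ENNReal.ofReal (c * e) * M) :
    ∫⁻ g, f g ∂ν ≤ a * ∫⁻ g, f' g ∂ν + ENNReal.ofReal (2 * (c * e)) * M := by
  have hint : ∫⁻ g, f (g + h) ∂ν ≤ a * ∫⁻ g, f' g ∂ν + ENNReal.ofReal (c * e) * M := by
    refine (lintegral_mono_ae hf).trans_eq ?_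
    rw [lintegral_add_right _ measurable_const, lintegral_const_mul' _ _ ha]
    simp
  refine hshift.trans ((add_le_add_left hint _).trans_eq ?_)
  rw [add_assoc, ← mul_assoc, ← add_mul, ← ENNReal.ofReal_mul' he,
    ← ENNReal.ofReal_add (by positivity) (by positivity), two_mul]

namespace feynmanKac

variable {W G E : Type*} [MeasurableSpace G] [NormedAddCommGroup E] {ν : Measure G}
  [IsProbabilityMeasure ν] {φ : W → G → W} {V : W → E} {F : E → ℝ} {K : Set G} {A : Set W}
  {D : W → W → ℝ} {B q C ε Λ : ℝ}

lemma le_exp_mul_iSup_succ (hF : LipschitzWith 1 F) (hB : ∀ w, ‖V w‖ ≤ B) (k : ℕ) (y : E)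
    (w : W) {x : W} (hx : x ∈ A) :
    feynmanKac ν φ V F k (y + V w) x ≤
      ENNReal.ofReal (Real.exp (2 * B)) * ⨆ x ∈ A, feynmanKac ν φ V F (k + 1) y x := by
  calc feynmanKac ν φ V F k (y + V w) x
      ≤ ENNReal.ofReal (Real.exp ‖y + V w - y‖) * feynmanKac ν φ V F k y x :=
        le_exp_norm_sub_mul ν φ hF k _ _ x
    _ ≤ ENNReal.ofReal (Real.exp B) *
          (ENNReal.ofReal (Real.exp B) * feynmanKac ν φ V F (k + 1) y x) := by
        gcongr
        · simpa using hB w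
        · exact le_exp_mul_succ ν φ hF hB k y x
    _ ≤ _ := by
        rw [← mul_assoc, ← ofReal_exp_add, ← two_mul]
        gcongr
        exact le_iSup₂_of_le x hx le_rfl

-- The contraction `q` absorbs both the factor `2` in the exponent and the factor `e^{2B}`, so
-- that the constants of the bound at time `k` reproduce themselves at time `k + 1`.
lemma feller_bound_of_contraction (hF : LipschitzWith 1 F) (hB : ∀ w, ‖V w‖ ≤ B)
    (hq : q ≤ 1 / 2) (hqB : q * Real.exp (2 * B) ≤ 1 / 2) (hC : 0 ≤ C) (hΛ : 0 ≤ Λ) {d d' : ℝ}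
    (hd : 0 ≤ d) (hd' : d' ≤ q * d) {k : ℕ} {y : E} {w w' u u' : W}
    (hV : ‖V w - V w'‖ ≤ ε + Λ * d)
    (hbound : feynmanKac ν φ V F k (y + V w) u ≤
      ENNReal.ofReal (Real.exp (2 * Λ * d' + k * ε)) * feynmanKac ν φ V F k (y + V w) u' +
        ENNReal.ofReal (2 * C * Real.exp (2 * B) * d') *
          ⨆ x ∈ A, feynmanKac ν φ V F k (y + V w) x) :
    feynmanKac ν φ V F k (y + V w) u ≤
      ENNReal.ofReal (Real.exp (2 * Λ * d + (k + 1 : ℕ) * ε)) *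
          feynmanKac ν φ V F k (y + V w') u' +
        ENNReal.ofReal (C * d * Real.exp (2 * B)) *
          ⨆ x ∈ A, feynmanKac ν φ V F (k + 1) y x := by
  refine hbound.trans (add_le_add ?_ ?_)
  · refine (mul_le_mul_right (le_exp_norm_sub_mul ν φ hF k _ (y + V w') u') _).trans ?_
    rw [← mul_assoc, ← ofReal_exp_add, add_sub_add_left_eq_sub]
    have hΛd : 2 * Λ * d' ≤ Λ * d := by nlinarith [mul_le_mul_of_nonneg_right hq hd]
    refine mul_le_mul_left (ofReal_exp_le ?_) _
    push_cast
    linarith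
  · have hsup : ⨆ x ∈ A, feynmanKac ν φ V F k (y + V w) x ≤
        ENNReal.ofReal (Real.exp (2 * B)) * ⨆ x ∈ A, feynmanKac ν φ V F (k + 1) y x :=
      iSup₂_le fun x hx ↦ le_exp_mul_iSup_succ hF hB k y w hx
    refine (mul_le_mul_right hsup _).trans ?_
    rw [← mul_assoc, ← ENNReal.ofReal_mul' (Real.exp_pos _).le]
    refine mul_le_mul_left (ENNReal.ofReal_le_ofReal ?_) _
    calc 2 * C * Real.exp (2 * B) * d' * Real.exp (2 * B)
        ≤ 2 * C * Real.exp (2 * B) * (q * d) * Real.exp (2 * B) := by gcongr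
      _ = 2 * C * Real.exp (2 * B) * d * (q * Real.exp (2 * B)) := by ring
      _ ≤ 2 * C * Real.exp (2 * B) * d * (1 / 2) := by gcongr
      _ = C * d * Real.exp (2 * B) := by ring

variable [MeasurableSpace W] [AddGroup G] [MeasurableSpace E] [BorelSpace E]
  [SecondCountableTopology E]

/-- An asymptotic strong Feller property, uniform in time relative to the supremum of the
functional over `A`. -/
lemma feller_bound (hνK : ∀ᵐ g ∂ν, g ∈ K) (hK : MeasurableSet K)
    (hA : Set.MapsTo (Function.uncurry φ) (A ×ˢ K) A) (hφ : Measurable (Function.uncurry φ))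
    (hVm : Measurable V) (hB : ∀ w, ‖V w‖ ≤ B) (hD : ∀ w w', 0 ≤ D w w') (hq : q ≤ 1 / 2)
    (hqB : q * Real.exp (2 * B) ≤ 1 / 2) (hC : 0 ≤ C) (hΛ : 0 ≤ Λ)
    (hV : ∀ w ∈ A, ∀ w' ∈ A, ‖V w - V w'‖ ≤ ε + Λ * D w w')
    (hcoup : HasShiftCoupling ν φ K A D q C) (hF : LipschitzWith 1 F) (k : ℕ) (y : E) {w w' : W}
    (hw : w ∈ A) (hw' : w' ∈ A) :
    feynmanKac ν φ V F k y w ≤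
      ENNReal.ofReal (Real.exp (2 * Λ * D w w' + k * ε)) * feynmanKac ν φ V F k y w' +
        ENNReal.ofReal (2 * C * Real.exp (2 * B) * D w w') *
          ⨆ x ∈ A, feynmanKac ν φ V F k y x := by
  induction k generalizing y w w' with
  | zero =>
    refine le_add_right ?_
    simp only [feynmanKac]
    rw [← ofReal_exp_add]
    gcongr
    have := mul_nonneg (mul_nonneg zero_le_two hΛ) (hD w w')
    rw [Nat.cast_zero, zero_mul]
    linarith
  | succ k ih =>
    set M := ⨆ x ∈ A, feynmanKac ν φ V F (k + 1) y x
    set d := D w w'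
    have hd : 0 ≤ d := hD w w'
    obtain ⟨h, hcontr, hshift⟩ := hcoup w hw w' hw'
    set f : G → ℝ≥0∞ := K.indicator fun g ↦ feynmanKac ν φ V F k (y + V w) (φ w g) with hf
    have hfm : Measurable f :=
      ((measurable_uncurry ν φ V hφ hVm hF.continuous.measurable k).comp
        (measurable_const.prodMk (hφ.comp (measurable_const.prodMk measurable_id)))).indicator hK
    have hf_le (g : G) : f g ≤ ENNReal.ofReal (Real.exp (2 * B)) * M :=
      Set.indicator_le' (fun g hg ↦ le_exp_mul_iSup_succ hF hB k y w (hA (Set.mk_mem_prod hw hg)))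
        (fun _ _ ↦ zero_le) g
    have hf_int : feynmanKac ν φ V F (k + 1) y w = ∫⁻ g, f g ∂ν := by
      refine lintegral_congr_ae ?_
      filter_upwards [hνK] with g hg
      rw [hf, Set.indicator_of_mem hg]
    have hf_shift : ∀ᵐ g ∂ν, f (g + h) ≤
        ENNReal.ofReal (Real.exp (2 * Λ * d + (k + 1 : ℕ) * ε)) *
          feynmanKac ν φ V F k (y + V w') (φ w' g) +
        ENNReal.ofReal (C * d * Real.exp (2 * B)) * M := by
      filter_upwards [hνK] with g hg
      by_cases hgh : g + h ∈ K
      · rw [hf, Set.indicator_of_mem hgh]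
        exact feller_bound_of_contraction hF hB hq hqB hC hΛ hd (hcontr g hg hgh)
          (hV w hw w' hw')
          (ih _ (hA (Set.mk_mem_prod hw hgh)) (hA (Set.mk_mem_prod hw' hg)))
      · simp [hf, hgh]
    rw [show 2 * C * Real.exp (2 * B) * d = 2 * (C * d * Real.exp (2 * B)) by ring, hf_int]
    exact lintegral_le_of_shift_le (mul_nonneg hC hd) (Real.exp_pos _).le ENNReal.ofReal_ne_top
      (hshift f hfm _ hf_le) hf_shift

/-- The functional exceeds a fixed fraction of its supremum on a whole ball around an almost
maximizer, and irreducibility carries this lower bound to every starting point. -/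
theorem harnack (hνK : ∀ᵐ g ∂ν, g ∈ K) (hK : MeasurableSet K)
    (hA : Set.MapsTo (Function.uncurry φ) (A ×ˢ K) A) (hφ : Measurable (Function.uncurry φ))
    (hVm : Measurable V) (hB : ∀ w, ‖V w‖ ≤ B) (hD : ∀ w w', 0 ≤ D w w') (hq : q ≤ 1 / 2)
    (hqB : q * Real.exp (2 * B) ≤ 1 / 2) (hC : 0 ≤ C) (hΛ : 0 ≤ Λ)
    (hV : ∀ w ∈ A, ∀ w' ∈ A, ‖V w - V w'‖ ≤ ε + Λ * D w w')
    (hcoup : HasShiftCoupling ν φ K A D q C) (hirr : UniformlyIrreducibleOn ν φ A D) :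
    ∃ C' : ℝ, ∀ F : E → ℝ, LipschitzWith 1 F → ∀ (k : ℕ) (y : E), ∀ w ∈ A, ∀ w' ∈ A,
      feynmanKac ν φ V F k y w ≤
        ENNReal.ofReal (Real.exp (C' + k * ε)) * feynmanKac ν φ V F k y w' := by
  set b := 2 * C * Real.exp (2 * B)
  have : 0 ≤ b := by positivity
  set δ : ℝ := 1 / (4 * (b + 1)) with hδ
  have hδ_pos : 0 < δ := by positivity
  have hbδ : b * δ ≤ 1 / 4 := by
    rw [hδ, mul_one_div, div_le_div_iff₀ (by positivity) (by norm_num)]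
    linarith
  obtain ⟨τ, p, hp, hirr⟩ := hirr δ hδ_pos
  refine ⟨-Real.log p + Real.log 4 + 2 * Λ * δ + 2 * (τ * B), fun F hF k y w hw w' hw' ↦ ?_⟩
  set M := ⨆ x ∈ A, feynmanKac ν φ V F k y x
  have hM_top : M ≠ ⊤ :=
    ne_top_of_le_ne_top ENNReal.ofReal_ne_top (iSup₂_le fun x _ ↦ le_exp ν φ hF hB k y x)
  have hwM : feynmanKac ν φ V F k y w ≤ M := le_iSup₂_of_le w hw le_rfl
  have hM_ne : M ≠ 0 := fun h ↦ ne_zero ν φ hF hB k y w (nonpos_iff_eq_zero.1 (h ▸ hwM))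
  obtain ⟨x₀, hx₀A, hx₀⟩ := exists_mem_half_iSup_lt hM_ne hM_top
  have hball : ∀ x ∈ A, D x₀ x < δ →
      ENNReal.ofReal (Real.exp (-(Real.log 4 + (2 * Λ * δ + k * ε)))) * M ≤
        feynmanKac ν φ V F k y x := by
    intro x hx hxδ
    refine exp_neg_mul_le_of_half_lt (b := b * D x₀ x) hM_top hx₀.le ?_
      ((feller_bound hνK hK hA hφ hVm hB hD hq hqB hC hΛ hV hcoup hF k y hx₀A hx).trans ?_)
    · exact le_trans (by gcongr) hbδ
    · gcongr
  have hspread : ENNReal.ofReal p *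
        (ENNReal.ofReal (Real.exp (-(Real.log 4 + (2 * Λ * δ + k * ε)))) * M) ≤
      ENNReal.ofReal (Real.exp (τ * B)) *
        (ENNReal.ofReal (Real.exp (τ * B)) * feynmanKac ν φ V F k y w') :=
    (hirr w' hw' x₀ hx₀A _ _ hball).trans <| (markovOp_iterate_le ν φ hF hB k τ y w').trans <| by
      gcongr
      exact add_le_exp_mul ν φ hF hB k τ y w'
  rw [← Real.exp_log hp, ← mul_assoc, ← mul_assoc, ← ofReal_exp_add, ← ofReal_exp_add] at hspread
  refine hwM.trans ((le_ofReal_exp_neg_mul hspread).trans_eq ?_)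
  rw [← mul_assoc, ← ofReal_exp_add]
  ring_nf

end feynmanKac

/-! ### Almost superadditive sequences -/

section AlmostSuperadditive

lemma le_of_forall_natCast_mul_le {a b C : ℝ} (h : ∀ k : ℕ, k * a ≤ k * b + C) : a ≤ b := by
  by_contra! hab
  obtain ⟨k, hk⟩ := exists_nat_gt (C / (a - b))
  rw [div_lt_iff₀ (sub_pos.2 hab)] at hk
  linarith [h k]

lemma exists_abs_sub_natCast_mul_le {a : ℕ → ℝ} {L : ℝ}
    (h : Tendsto (fun k : ℕ ↦ a k / k) atTop (𝓝 L)) {ε : ℝ} (hε : 0 < ε) :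
    ∃ C : ℝ, ∀ k : ℕ, |a k - k * L| ≤ ε * k + C := by
  obtain ⟨N, hN⟩ := Metric.tendsto_atTop.1 h ε hε
  have hsum : 0 ≤ ∑ i ∈ Finset.range (N + 1), |a i - i * L| :=
    Finset.sum_nonneg fun _ _ ↦ abs_nonneg _
  refine ⟨∑ i ∈ Finset.range (N + 1), |a i - i * L|, fun k ↦ ?_⟩
  rcases lt_or_ge N k with hk | hk
  · have hk_pos : (0 : ℝ) < k := by exact_mod_cast hk.pos
    have hlt : |a k / k - L| < ε := hN k hk.le
    rw [div_sub' hk_pos.ne', abs_div, abs_of_pos hk_pos, div_lt_iff₀ hk_pos] at hlt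
    linarith
  · have hle := Finset.single_le_sum (f := fun i : ℕ ↦ |a i - i * L|) (fun _ _ ↦ abs_nonneg _)
      (Finset.mem_range.2 (Nat.lt_succ_of_le hk))
    linarith [mul_nonneg hε.le (Nat.cast_nonneg (α := ℝ) k)]

lemma abs_add_sub_le_mul {a : ℕ → ℝ} {B : ℝ} (hB : ∀ k, |a (k + 1) - a k| ≤ B) (k r : ℕ) :
    |a (k + r) - a k| ≤ r * B := by
  have hdist := dist_le_Ico_sum_of_dist_le (f := a) (d := fun _ ↦ B) (Nat.le_add_right k r)
    fun {i} _ _ ↦ by rw [dist_comm]; exact hB i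
  rw [abs_sub_comm]
  simpa [Real.dist_eq] using hdist

lemma add_mul_le_of_forall_add_le {a : ℕ → ℝ} {c : ℝ} {j : ℕ}
    (hstep : ∀ k, a k + j * c ≤ a (k + j)) (n : ℕ) : a 0 + (n * j : ℕ) * c ≤ a (n * j) := by
  induction n with
  | zero => simp
  | succ n ih =>
    rw [Nat.succ_mul]
    push_cast at ih ⊢
    linarith [hstep (n * j)]

lemma exists_forall_mul_sub_le {a : ℕ → ℝ} {B c : ℝ} {j : ℕ} (hj : 0 < j)
    (hB : ∀ k, |a (k + 1) - a k| ≤ B) (hstep : ∀ k, a k + j * c ≤ a (k + j)) :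
    ∃ C : ℝ, ∀ k : ℕ, k * c - C ≤ a k := by
  have hB_nonneg : 0 ≤ B := (abs_nonneg _).trans (hB 0)
  refine ⟨|a 0| + j * B + j * |c|, fun k ↦ ?_⟩
  have hk : k / j * j + k % j = k := Nat.div_add_mod' k j
  have hkr : (k : ℝ) = (k / j * j : ℕ) + (k % j : ℕ) := by exact_mod_cast hk.symm
  have hr : ((k % j : ℕ) : ℝ) ≤ j := by exact_mod_cast (Nat.mod_lt k hj).le
  have hmul := add_mul_le_of_forall_add_le hstep (k / j)
  have hrest := (abs_le.1 (abs_add_sub_le_mul hB (k / j * j) (k % j))).1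
  rw [hk] at hrest
  have hrB : ((k % j : ℕ) : ℝ) * B ≤ j * B := by gcongr
  have hrc : ((k % j : ℕ) : ℝ) * c ≤ j * |c| :=
    (mul_le_mul_of_nonneg_left (le_abs_self c) (Nat.cast_nonneg _)).trans (by gcongr)
  rw [hkr, add_mul]
  linarith [neg_abs_le (a 0)]

lemma eventually_sub_le_div {a : ℕ → ℝ} {c C ε : ℝ} (h : ∀ k : ℕ, k * c - C ≤ a k) (hε : 0 < ε) :
    ∀ᶠ k : ℕ in atTop, c - ε ≤ a k / k := by
  obtain ⟨N, hN⟩ := exists_nat_gt (C / ε)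
  rw [div_lt_iff₀ hε] at hN
  filter_upwards [eventually_gt_atTop N] with k hk
  have hk_pos : (0 : ℝ) < k := by exact_mod_cast hk.pos
  have hNk : N * ε ≤ k * ε := by gcongr
  rw [le_div_iff₀ hk_pos]
  linarith [h k]

lemma abs_div_natCast_le {a : ℕ → ℝ} {B : ℝ} (hB : ∀ k, |a (k + 1) - a k| ≤ B) (k : ℕ) :
    |a k / k| ≤ |a 0| + B := by
  have hB_nonneg : 0 ≤ B := (abs_nonneg _).trans (hB 0)
  rcases Nat.eq_zero_or_pos k with rfl | hk
  · simpa using add_nonneg (abs_nonneg (a 0)) hB_nonneg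
  have hk_one : (1 : ℝ) ≤ k := by exact_mod_cast hk
  have hgrow := abs_add_sub_le_mul hB 0 k
  rw [zero_add] at hgrow
  rw [abs_div, Nat.abs_cast, div_le_iff₀ (by linarith)]
  nlinarith [abs_sub_abs_le_abs_sub (a k) (a 0), abs_nonneg (a 0)]

lemma exists_tendsto_div_of_almost_superadditive {a : ℕ → ℝ} {B : ℝ}
    (hB : ∀ k, |a (k + 1) - a k| ≤ B)
    (hsup : ∀ ε : ℝ, 0 < ε → ∃ C : ℝ, ∀ k j : ℕ, a k + a j - C - ε * j ≤ a (k + j)) :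
    ∃ L, Tendsto (fun k : ℕ ↦ a k / k) atTop (𝓝 L) := by
  have hbdd := fun k ↦ abs_le.1 (abs_div_natCast_le hB k)
  have hbdd_le : IsBoundedUnder (· ≤ ·) atTop (fun k : ℕ ↦ a k / k) :=
    isBoundedUnder_of ⟨_, fun k ↦ (hbdd k).2⟩
  have hbdd_ge : IsBoundedUnder (· ≥ ·) atTop (fun k : ℕ ↦ a k / k) :=
    isBoundedUnder_of ⟨_, fun k ↦ (hbdd k).1⟩
  set s := limsup (fun k : ℕ ↦ a k / k) atTop
  refine ⟨s, tendsto_of_le_liminf_of_limsup_le ?_ le_rfl hbdd_le hbdd_ge⟩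
  refine le_of_forall_pos_le_add fun ε hε ↦ ?_
  obtain ⟨C, hC⟩ := hsup (ε / 4) (by positivity)
  obtain ⟨N, hN⟩ := exists_nat_gt (4 * C / ε)
  obtain ⟨j, hNj, hj⟩ : ∃ j > N, s - ε / 4 < a j / j :=
    frequently_atTop'.1 (frequently_lt_of_lt_limsup hbdd_ge.isCoboundedUnder_le
      (sub_lt_self s (by positivity))) N
  have hj_pos : (0 : ℝ) < j := by exact_mod_cast hNj.pos
  rw [lt_div_iff₀ hj_pos] at hj
  rw [div_lt_iff₀ hε] at hN
  have hNj' : N * ε ≤ j * ε := by gcongr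
  have hstep (k : ℕ) : a k + j * (s - 3 * ε / 4) ≤ a (k + j) := by linarith [hC k j]
  obtain ⟨C', hC'⟩ := exists_forall_mul_sub_le hNj.pos hB hstep
  rw [← sub_le_iff_le_add]
  refine le_liminf_of_le hbdd_le.isCoboundedUnder_ge ?_
  filter_upwards [eventually_sub_le_div hC' (show 0 < ε / 4 by positivity)] with k hk
  linarith

variable {E : Type*} [NormedAddCommGroup E] [NormedSpace ℝ E] {a : ℕ → E → ℝ} {L : E → ℝ}

lemma exists_tendsto_smul_div {B : ℝ} (hB : ∀ k y, |a (k + 1) y - a k y| ≤ B)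
    (hlip : ∀ k y z, |a k y - a k z| ≤ ‖y - z‖)
    (hsup : ∀ ε : ℝ, 0 < ε → ∃ C : ℝ, ∀ (k j : ℕ) (y z : E),
      a k y + a j z - C - ε * j ≤ a (k + j) (y + z)) (x : E) :
    ∃ l, Tendsto (fun k : ℕ ↦ a k ((k : ℝ) • x) / k) atTop (𝓝 l) := by
  refine exists_tendsto_div_of_almost_superadditive (B := B + ‖x‖) (fun k ↦ ?_) fun ε hε ↦ ?_
  · have hx : ((k + 1 : ℕ) : ℝ) • x - (k : ℝ) • x = x := by push_cast; module
    refine (abs_sub_le _ (a k (((k + 1 : ℕ) : ℝ) • x)) _).trans (add_le_add (hB _ _) ?_)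
    simpa only [hx] using hlip k (((k + 1 : ℕ) : ℝ) • x) ((k : ℝ) • x)
  · obtain ⟨C, hC⟩ := hsup ε hε
    refine ⟨C, fun k j ↦ ?_⟩
    simpa only [Nat.cast_add, add_smul] using hC k j ((k : ℝ) • x) ((j : ℝ) • x)

-- Split `k` steps into `i = ⌊s k⌋` steps in the direction `x` and `j = k - i` steps in the
-- direction `x'`.
lemma natCast_mul_le_of_almost_superadditive {x x' : E} {s ε δ C C₁ C₂ : ℝ} (hs : 0 ≤ s)
    (hs' : s ≤ 1) (hε : 0 ≤ ε) (hlip : ∀ k y z, |a k y - a k z| ≤ ‖y - z‖)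
    (hsup : ∀ (k j : ℕ) (y z : E), a k y + a j z - C - ε * j ≤ a (k + j) (y + z))
    (hx : ∀ k : ℕ, |a k ((k : ℝ) • x) - k * L x| ≤ δ * k + C₁)
    (hx' : ∀ k : ℕ, |a k ((k : ℝ) • x') - k * L x'| ≤ δ * k + C₂) (k : ℕ) :
    k * (s * L x + (1 - s) * L x') ≤ a k ((k : ℝ) • (s • x + (1 - s) • x')) + (ε + δ) * k +
      (C + C₁ + C₂ + ‖x - x'‖ + |L x - L x'|) := by
  set i := ⌊s * k⌋₊
  have hi_le : (i : ℝ) ≤ s * k := Nat.floor_le (by positivity)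
  have hi_lt : s * k < i + 1 := Nat.lt_floor_add_one _
  have hik : i ≤ k := Nat.floor_le_of_le (mul_le_of_le_one_left (Nat.cast_nonneg k) hs')
  obtain ⟨j, hj⟩ := Nat.exists_eq_add_of_le hik
  have hjk : (j : ℝ) = k - i := by rw [hj]; push_cast; ring
  have hrem : |(i : ℝ) - s * k| ≤ 1 := abs_le.2 ⟨by linarith, by linarith⟩
  have hdir : (i : ℝ) • x + (j : ℝ) • x' - (k : ℝ) • (s • x + (1 - s) • x') =
      ((i : ℝ) - s * k) • (x - x') := by rw [hjk]; module
  have hdir_le : a k ((i : ℝ) • x + (j : ℝ) • x') - a k ((k : ℝ) • (s • x + (1 - s) • x')) ≤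
      ‖x - x'‖ := by
    refine (le_abs_self _).trans ((hlip k _ _).trans ?_)
    rw [hdir, norm_smul]
    exact mul_le_of_le_one_left (norm_nonneg _) hrem
  have hL_le : (s * k - i) * (L x - L x') ≤ |L x - L x'| := by
    refine (le_abs_self _).trans ?_
    rw [abs_mul, abs_sub_comm]
    exact mul_le_of_le_one_left (abs_nonneg _) hrem
  have hsplit : k * (s * L x + (1 - s) * L x') =
      i * L x + j * L x' + (s * k - i) * (L x - L x') := by rw [hjk]; ring
  have hjε : ε * j ≤ ε * k := by gcongr; omega
  have hδk : δ * k = δ * i + δ * j := by rw [hjk]; ring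
  have hadd := hsup i j ((i : ℝ) • x) ((j : ℝ) • x')
  rw [← hj] at hadd
  linarith [(abs_le.1 (hx i)).1, (abs_le.1 (hx' j)).1]

lemma concaveOn_of_almost_superadditive (hlip : ∀ k y z, |a k y - a k z| ≤ ‖y - z‖)
    (hsup : ∀ ε : ℝ, 0 < ε → ∃ C : ℝ, ∀ (k j : ℕ) (y z : E),
      a k y + a j z - C - ε * j ≤ a (k + j) (y + z))
    (hL : ∀ x, Tendsto (fun k : ℕ ↦ a k ((k : ℝ) • x) / k) atTop (𝓝 (L x))) :
    ConcaveOn ℝ Set.univ L := by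
  refine ⟨convex_univ, fun x _ x' _ s t hs ht hst ↦ le_of_forall_pos_le_add fun ε hε ↦ ?_⟩
  obtain rfl : t = 1 - s := by linarith
  have hε' : 0 < ε / 3 := by positivity
  obtain ⟨C, hC⟩ := hsup (ε / 3) hε'
  obtain ⟨C₁, hC₁⟩ := exists_abs_sub_natCast_mul_le (hL x) hε'
  obtain ⟨C₂, hC₂⟩ := exists_abs_sub_natCast_mul_le (hL x') hε'
  obtain ⟨C₃, hC₃⟩ := exists_abs_sub_natCast_mul_le (hL (s • x + (1 - s) • x')) hε'
  refine le_of_forall_natCast_mul_le (C := C + C₁ + C₂ + ‖x - x'‖ + |L x - L x'| + C₃) fun k ↦ ?_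
  have hk := natCast_mul_le_of_almost_superadditive hs (by linarith) hε'.le hlip hC hC₁ hC₂ k
  simp only [smul_eq_mul]
  linarith [(abs_le.1 (hC₃ k)).2]

lemma lipschitzWith_one_of_tendsto_smul_div (hlip : ∀ k y z, |a k y - a k z| ≤ ‖y - z‖)
    (hL : ∀ x, Tendsto (fun k : ℕ ↦ a k ((k : ℝ) • x) / k) atTop (𝓝 (L x))) :
    LipschitzWith 1 L := by
  refine LipschitzWith.of_dist_le_mul fun x x' ↦ ?_
  rw [NNReal.coe_one, one_mul, Real.dist_eq, dist_eq_norm]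
  refine le_of_tendsto ((hL x).sub (hL x')).abs ?_
  filter_upwards [eventually_gt_atTop 0] with k hk
  have hk_pos : (0 : ℝ) < k := by exact_mod_cast hk
  rw [← sub_div, abs_div, abs_of_pos hk_pos, div_le_iff₀ hk_pos]
  refine (hlip k _ _).trans_eq ?_
  rw [← smul_sub, norm_smul, Real.norm_eq_abs, abs_of_pos hk_pos, mul_comm]

end AlmostSuperadditive

/-! ### Exponential moments of additive functionals -/

section Cgf

variable {Ω : Type*} [MeasurableSpace Ω] {P : Measure Ω} {X X' : Ω → ℝ} {c : ℝ}

lemma lintegral_ofReal_exp_eq_exp_cgf [NeZero P]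
    (hX : Integrable (fun ω ↦ Real.exp (1 * X ω)) P) :
    ∫⁻ ω, ENNReal.ofReal (Real.exp (X ω)) ∂P = ENNReal.ofReal (Real.exp (cgf X P 1)) := by
  rw [exp_cgf hX, mgf, ofReal_integral_eq_lintegral_ofReal hX
    (ae_of_all _ fun _ ↦ (Real.exp_pos _).le)]
  simp only [one_mul]

lemma cgf_one_le_add_of_ae_le [NeZero P] (hX : Integrable (fun ω ↦ Real.exp (1 * X ω)) P)
    (hX' : Integrable (fun ω ↦ Real.exp (1 * X' ω)) P) (h : ∀ᵐ ω ∂P, X ω ≤ X' ω + c) :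
    cgf X P 1 ≤ cgf X' P 1 + c := by
  rw [← Real.exp_le_exp, Real.exp_add, exp_cgf hX, exp_cgf hX', mgf, mgf, ← integral_mul_const]
  refine integral_mono_ae hX (hX'.mul_const _) ?_
  filter_upwards [h] with ω hω
  simpa only [one_mul, ← Real.exp_add] using Real.exp_le_exp.2 hω

lemma abs_cgf_one_sub_le_of_abs_sub_le [NeZero P]
    (hX : Integrable (fun ω ↦ Real.exp (1 * X ω)) P)
    (hX' : Integrable (fun ω ↦ Real.exp (1 * X' ω)) P) (h : ∀ ω, |X ω - X' ω| ≤ c) :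
    |cgf X P 1 - cgf X' P 1| ≤ c := by
  have hle := cgf_one_le_add_of_ae_le (c := c) hX hX'
    (ae_of_all _ fun ω ↦ by linarith [(abs_le.1 (h ω)).2])
  have hge := cgf_one_le_add_of_ae_le (c := c) hX' hX
    (ae_of_all _ fun ω ↦ by linarith [(abs_le.1 (h ω)).1])
  exact abs_le.2 ⟨by linarith, by linarith⟩

lemma cgf_one_convex_comb_le [NeZero P] (hX : Integrable (fun ω ↦ Real.exp (1 * X ω)) P)
    (hX' : Integrable (fun ω ↦ Real.exp (1 * X' ω)) P) {s t : ℝ}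
    (hXX' : Integrable (fun ω ↦ Real.exp (1 * (s * X ω + t * X' ω))) P)
    (hs : 0 ≤ s) (ht : 0 ≤ t) (hst : s + t = 1) :
    cgf (fun ω ↦ s * X ω + t * X' ω) P 1 ≤ s * cgf X P 1 + t * cgf X' P 1 := by
  set α := cgf X P 1 with hα
  set β := cgf X' P 1 with hβ
  have hconv (ω : Ω) : Real.exp (1 * (s * X ω + t * X' ω)) ≤ Real.exp (s * α + t * β) *
      (s * (Real.exp (1 * X ω) * Real.exp (-α)) + t * (Real.exp (1 * X' ω) * Real.exp (-β))) := by
    have h := convexOn_exp.2 (Set.mem_univ (1 * X ω - α)) (Set.mem_univ (1 * X' ω - β)) hs ht hst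
    simp only [smul_eq_mul] at h
    rw [← Real.exp_add, ← Real.exp_add, ← sub_eq_add_neg, ← sub_eq_add_neg]
    calc Real.exp (1 * (s * X ω + t * X' ω))
        = Real.exp (s * α + t * β) * Real.exp (s * (1 * X ω - α) + t * (1 * X' ω - β)) := by
          rw [← Real.exp_add]; ring_nf
      _ ≤ _ := by gcongr
  have hXs := (hX.mul_const (Real.exp (-α))).const_mul s
  have hXt := (hX'.mul_const (Real.exp (-β))).const_mul t
  have hmgf : mgf X P 1 * Real.exp (-α) = 1 ∧ mgf X' P 1 * Real.exp (-β) = 1 := by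
    rw [← exp_cgf hX, ← exp_cgf hX', ← Real.exp_add, ← Real.exp_add]
    simp [hα, hβ]
  rw [← Real.exp_le_exp, exp_cgf hXX', mgf]
  refine (integral_mono hXX' ((hXs.add hXt).const_mul _) hconv).trans_eq ?_
  simp only [Pi.add_apply]
  rw [integral_const_mul, integral_add hXs hXt, integral_const_mul, integral_const_mul,
    integral_mul_const, integral_mul_const]
  change Real.exp _ * (s * (mgf X P 1 * _) + t * (mgf X' P 1 * _)) = _
  rw [hmgf.1, hmgf.2, mul_one, mul_one, hst, mul_one]

end Cgf

section AdditiveFunctional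

variable {Ω W E : Type*} [MeasurableSpace Ω] [MeasurableSpace W] [NormedAddCommGroup E]
  [MeasurableSpace E] [BorelSpace E] [SecondCountableTopology E] {x : ℕ → Ω → W}
  {V : W → E} {B : ℝ} {F : E → ℝ}

lemma norm_sum_comp_le {Ω W E : Type*} [NormedAddCommGroup E] {V : W → E} {B : ℝ}
    (hB : ∀ w, ‖V w‖ ≤ B) (x : ℕ → Ω → W) (s : Finset ℕ) (ω : Ω) :
    ‖∑ n ∈ s, V (x n ω)‖ ≤ s.card * B :=
  (norm_sum_le_of_le _ fun n _ ↦ hB (x n ω)).trans_eq (by simp)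

lemma integrable_exp_comp_sum {P : Measure Ω} [IsFiniteMeasure P] (hx : ∀ n, Measurable (x n))
    (hVm : Measurable V) (hB : ∀ w, ‖V w‖ ≤ B) (hF : LipschitzWith 1 F) (s : Finset ℕ) :
    Integrable (fun ω ↦ Real.exp (1 * F (∑ n ∈ s, V (x n ω)))) P := by
  have hm : Measurable fun ω ↦ F (∑ n ∈ s, V (x n ω)) :=
    hF.continuous.measurable.comp (Finset.measurable_sum _ fun n _ ↦ hVm.comp (hx n))
  refine integrable_exp_mul_of_mem_Icc (a := F 0 - s.card * B) (b := F 0 + s.card * B)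
    hm.aemeasurable (ae_of_all _ fun ω ↦ ?_)
  have hdist := hF.dist_le_mul (∑ n ∈ s, V (x n ω)) 0
  rw [Real.dist_eq, dist_zero_right, NNReal.coe_one, one_mul] at hdist
  have hF0 := abs_le.1 (hdist.trans (norm_sum_comp_le hB x s ω))
  exact ⟨by linarith, by linarith⟩

end AdditiveFunctional

/-- The process `x` follows the recursion `x_{n+1} = φ(x_n, g_n)`, where the noise `g_n` has law
`ν` and is independent of `x_0, …, x_n`. -/
structure IsRandomRecursion {Ω W G : Type*} [MeasurableSpace Ω] [MeasurableSpace W]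
    [MeasurableSpace G] (P : Measure Ω) (ν : Measure G) (φ : W → G → W) (x : ℕ → Ω → W)
    (g : ℕ → Ω → G) : Prop where
  measurable : ∀ n, Measurable (x n)
  measurable_noise : ∀ n, Measurable (g n)
  succ_eq : ∀ n ω, x (n + 1) ω = φ (x n ω) (g n ω)
  map_noise : ∀ n, Measure.map (g n) P = ν
  indepFun : ∀ n, IndepFun (fun ω (i : Fin (n + 1)) ↦ x i ω) (g n) P

namespace IsRandomRecursion

variable {Ω W G E : Type*} [MeasurableSpace Ω] [MeasurableSpace W] [MeasurableSpace G]
  [NormedAddCommGroup E] [MeasurableSpace E] [BorelSpace E] [SecondCountableTopology E]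
  {P : Measure Ω} [IsProbabilityMeasure P] {ν : Measure G}
  {φ : W → G → W} {x : ℕ → Ω → W} {g : ℕ → Ω → G} {V : W → E} {F : E → ℝ}

lemma map_prodMk_eq (hx : IsRandomRecursion P ν φ x g) (hVm : Measurable V) (j : ℕ) :
    P.map (fun ω ↦ ((∑ n ∈ Finset.range j, V (x n ω), x j ω), g j ω)) =
      (P.map fun ω ↦ (∑ n ∈ Finset.range j, V (x n ω), x j ω)).prod ν := by
  have hm : Measurable fun ω ↦ (∑ n ∈ Finset.range j, V (x n ω), x j ω) :=
    (Finset.measurable_sum _ fun n _ ↦ hVm.comp (hx.measurable n)).prodMk (hx.measurable j)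
  have hind : IndepFun (fun ω ↦ (∑ n ∈ Finset.range j, V (x n ω), x j ω)) (g j) P := by
    have hpast : Measurable fun v : Fin (j + 1) → W ↦
        (∑ n : Fin j, V (v n.castSucc), v (Fin.last j)) :=
      (Finset.measurable_sum _ fun n _ ↦ hVm.comp (measurable_pi_apply _)).prodMk
        (measurable_pi_apply _)
    simpa only [Function.comp_def, id, Fin.val_castSucc, Fin.val_last, Finset.sum_range]
      using (hx.indepFun j).comp hpast measurable_id
  rw [← hx.map_noise j]
  exact (indepFun_iff_map_prod_eq_prod_map_map hm.aemeasurable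
    (hx.measurable_noise j).aemeasurable).1 hind

variable [IsProbabilityMeasure ν]

lemma lintegral_feynmanKac_succ (hx : IsRandomRecursion P ν φ x g)
    (hφ : Measurable (Function.uncurry φ)) (hVm : Measurable V) (hF : Measurable F) (k j : ℕ) :
    ∫⁻ ω, feynmanKac ν φ V F (k + 1) (∑ n ∈ Finset.range j, V (x n ω)) (x j ω) ∂P =
      ∫⁻ ω, feynmanKac ν φ V F k (∑ n ∈ Finset.range (j + 1), V (x n ω)) (x (j + 1) ω) ∂P := by
  have hU : Measurable fun ω ↦ (∑ n ∈ Finset.range j, V (x n ω), x j ω) :=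
    (Finset.measurable_sum _ fun n _ ↦ hVm.comp (hx.measurable n)).prodMk (hx.measurable j)
  have hstep : Measurable fun q : (E × W) × G ↦ (q.1.1 + V q.1.2, φ q.1.2 q.2) :=
    (measurable_fst.fst.add (hVm.comp measurable_fst.snd)).prodMk
      (hφ.comp (measurable_fst.snd.prodMk measurable_snd))
  have hfk : Measurable fun q : (E × W) × G ↦
      feynmanKac ν φ V F k (q.1.1 + V q.1.2) (φ q.1.2 q.2) :=
    (feynmanKac.measurable_uncurry ν φ V hφ hVm hF k).comp hstep
  have := Measure.isProbabilityMeasure_map (μ := P) hU.aemeasurable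
  simp only [feynmanKac, Finset.sum_range_succ, hx.succ_eq]
  rw [← lintegral_map (f := fun p : E × W ↦ ∫⁻ h, feynmanKac ν φ V F k (p.1 + V p.2) (φ p.2 h) ∂ν)
    hfk.lintegral_prod_right' hU, ← lintegral_prod _ hfk.aemeasurable, ← hx.map_prodMk_eq hVm,
    lintegral_map hfk (hU.prodMk (hx.measurable_noise j))]

lemma lintegral_feynmanKac (hx : IsRandomRecursion P ν φ x g)
    (hφ : Measurable (Function.uncurry φ)) (hVm : Measurable V) (hF : Measurable F) (k j : ℕ) :
    ∫⁻ ω, feynmanKac ν φ V F k (∑ n ∈ Finset.range j, V (x n ω)) (x j ω) ∂P =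
      ∫⁻ ω, ENNReal.ofReal (Real.exp (F (∑ n ∈ Finset.range (j + k), V (x n ω)))) ∂P := by
  induction k generalizing j with
  | zero => simp [feynmanKac]
  | succ k ih => rw [hx.lintegral_feynmanKac_succ hφ hVm hF, ih, add_right_comm, add_assoc]

lemma lintegral_feynmanKac_zero (hx : IsRandomRecursion P ν φ x g)
    (hφ : Measurable (Function.uncurry φ)) (hVm : Measurable V) {B : ℝ} (hB : ∀ w, ‖V w‖ ≤ B)
    (hF : LipschitzWith 1 F) (k : ℕ) :
    ∫⁻ ω, feynmanKac ν φ V F k 0 (x 0 ω) ∂P =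
      ENNReal.ofReal (Real.exp (cgf (fun ω ↦ F (∑ n ∈ Finset.range k, V (x n ω))) P 1)) := by
  have hsum := hx.lintegral_feynmanKac hφ hVm hF.continuous.measurable k 0
  rw [zero_add] at hsum
  rw [← lintegral_ofReal_exp_eq_exp_cgf (integrable_exp_comp_sum hx.measurable hVm hB hF _),
    ← hsum]
  simp

-- The Harnack inequality makes the functional of the last `j` steps insensitive to the state
-- reached after `k` steps.
lemma cgf_add_cgf_le (hx : IsRandomRecursion P ν φ x g) (hφ : Measurable (Function.uncurry φ))
    (hVm : Measurable V) {B : ℝ} (hB : ∀ w, ‖V w‖ ≤ B) {K : Set G} {A : Set W}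
    (hνK : ∀ᵐ g ∂ν, g ∈ K) (hA : Set.MapsTo (Function.uncurry φ) (A ×ˢ K) A)
    (hx0 : ∀ᵐ ω ∂P, x 0 ω ∈ A) {C ε : ℝ}
    (harnack : ∀ F : E → ℝ, LipschitzWith 1 F → ∀ (k : ℕ) (y : E), ∀ w ∈ A, ∀ w' ∈ A,
      feynmanKac ν φ V F k y w ≤
        ENNReal.ofReal (Real.exp (C + k * ε)) * feynmanKac ν φ V F k y w')
    {F₁ F₂ : E → ℝ} (hF : LipschitzWith 1 F) (hF₁ : LipschitzWith 1 F₁)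
    (hF₂ : LipschitzWith 1 F₂) (hadd : ∀ y z, F₁ y + F₂ z ≤ F (y + z)) (k j : ℕ) :
    cgf (fun ω ↦ F₁ (∑ n ∈ Finset.range k, V (x n ω))) P 1 +
        cgf (fun ω ↦ F₂ (∑ n ∈ Finset.range j, V (x n ω))) P 1 - C - ε * j ≤
      cgf (fun ω ↦ F (∑ n ∈ Finset.range (k + j), V (x n ω))) P 1 := by
  set a₁ := cgf (fun ω ↦ F₁ (∑ n ∈ Finset.range k, V (x n ω))) P 1 with ha₁
  set a₂ := cgf (fun ω ↦ F₂ (∑ n ∈ Finset.range j, V (x n ω))) P 1 with ha₂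
  have hlower : ∀ w ∈ A, ENNReal.ofReal (Real.exp (-(C + j * ε) + a₂)) ≤
      feynmanKac ν φ V F₂ j 0 w := by
    intro w hw
    rw [ofReal_exp_add, ha₂, ← hx.lintegral_feynmanKac_zero hφ hVm hB hF₂]
    refine ofReal_exp_neg_mul_le ?_
    calc ∫⁻ ω, feynmanKac ν φ V F₂ j 0 (x 0 ω) ∂P
        ≤ ∫⁻ _, ENNReal.ofReal (Real.exp (C + j * ε)) * feynmanKac ν φ V F₂ j 0 w ∂P :=
          lintegral_mono_ae (hx0.mono fun ω hω ↦ harnack F₂ hF₂ j 0 _ hω _ hw)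
      _ = _ := by simp
  have hprod : ENNReal.ofReal (Real.exp (-(C + j * ε) + a₂)) * ENNReal.ofReal (Real.exp a₁) ≤
      ENNReal.ofReal (Real.exp
        (cgf (fun ω ↦ F (∑ n ∈ Finset.range (k + j), V (x n ω))) P 1)) := by
    rw [ha₁, ← hx.lintegral_feynmanKac_zero hφ hVm hB hF₁,
      ← hx.lintegral_feynmanKac_zero hφ hVm hB hF, ← lintegral_const_mul' _ _ ENNReal.ofReal_ne_top]
    exact lintegral_mono_ae (hx0.mono fun ω hω ↦
      feynmanKac.mul_le_add ν φ V hνK hA hlower ENNReal.ofReal_ne_top (fun z z' ↦ hadd _ _) k hω)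
  rw [← ofReal_exp_add, ENNReal.ofReal_le_ofReal_iff (Real.exp_pos _).le, Real.exp_le_exp]
    at hprod
  linarith

end IsRandomRecursion

/-! ### The pressure functional -/

/-- Almost superadditivity of the log-exponential moments of the additive functionals
`∑ V(x_n)` with values in a finite-dimensional space: joining two blocks of lengths `k` and `j`
costs at most `C + ε j`, uniformly over `1`-Lipschitz observables `F₁`, `F₂`, `F` of the sums. -/
def AlmostSuperadditive {W Ω : Type*} [TopologicalSpace W] [MeasurableSpace Ω] (P : Measure Ω)
    (x : ℕ → Ω → W) : Prop :=
  ∀ (E : Type) [NormedAddCommGroup E] [NormedSpace ℝ E] [FiniteDimensional ℝ E]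
    (V : W →ᵇ E) (ε : ℝ), 0 < ε → ∃ C : ℝ,
    ∀ F F₁ F₂ : E → ℝ, LipschitzWith 1 F → LipschitzWith 1 F₁ → LipschitzWith 1 F₂ →
    (∀ y z, F₁ y + F₂ z ≤ F (y + z)) → ∀ k j : ℕ,
    cgf (fun ω ↦ F₁ (∑ n ∈ Finset.range k, V (x n ω))) P 1 +
        cgf (fun ω ↦ F₂ (∑ n ∈ Finset.range j, V (x n ω))) P 1 - C - ε * j ≤
      cgf (fun ω ↦ F (∑ n ∈ Finset.range (k + j), V (x n ω))) P 1

/-- The pressure `Q(V) = lim k⁻¹ log 𝔼 exp (V(x_0) + ⋯ + V(x_{k-1}))`. -/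
def pressure {W Ω : Type*} [TopologicalSpace W] [MeasurableSpace Ω] (P : Measure Ω)
    (x : ℕ → Ω → W) (V : W →ᵇ ℝ) : ℝ :=
  limUnder atTop fun k : ℕ ↦ cgf (fun ω ↦ ∑ n ∈ Finset.range k, V (x n ω)) P 1 / k

namespace AlmostSuperadditive

variable {W Ω : Type*} [TopologicalSpace W] [MeasurableSpace W] [OpensMeasurableSpace W]
  [MeasurableSpace Ω] {P : Measure Ω} [IsProbabilityMeasure P] {x : ℕ → Ω → W}

lemma integrable_exp_sum (hx : ∀ n, Measurable (x n)) (V : W →ᵇ ℝ) (s : Finset ℕ) :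
    Integrable (fun ω ↦ Real.exp (1 * ∑ n ∈ s, V (x n ω))) P :=
  integrable_exp_comp_sum hx V.continuous.measurable V.norm_coe_le_norm LipschitzWith.id s

lemma tendsto_pressure (hP : AlmostSuperadditive P x) (hx : ∀ n, Measurable (x n))
    (V : W →ᵇ ℝ) :
    Tendsto (fun k : ℕ ↦ cgf (fun ω ↦ ∑ n ∈ Finset.range k, V (x n ω)) P 1 / k) atTop
      (𝓝 (pressure P x V)) := by
  refine tendsto_nhds_limUnder (exists_tendsto_div_of_almost_superadditive (B := ‖V‖) ?_ ?_)
  · refine fun k ↦ abs_cgf_one_sub_le_of_abs_sub_le (integrable_exp_sum hx V _)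
      (integrable_exp_sum hx V _) fun ω ↦ ?_
    rw [Finset.sum_range_succ, add_sub_cancel_left]
    exact V.norm_coe_le_norm _
  · intro ε hε
    obtain ⟨C, hC⟩ := hP ℝ V ε hε
    exact ⟨C, hC id id id .id .id .id fun y z ↦ le_rfl⟩

lemma abs_sum_Icc_sub_sum_range_le (a : ℕ → ℝ) {B : ℝ} (ha : ∀ n, |a n| ≤ B) (k : ℕ) :
    |∑ n ∈ Finset.Icc 1 k, a n - ∑ n ∈ Finset.range k, a n| ≤ 2 * B := by
  have hshift : ∑ n ∈ Finset.Icc 1 k, a n + a 0 = ∑ n ∈ Finset.range k, a n + a k := by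
    rw [← Finset.sum_range_succ, Finset.sum_range_succ', Finset.range_eq_Ico,
      Finset.sum_Ico_add' a 0 k 1, zero_add, Finset.Ico_add_one_right_eq_Icc]
  have h0 := abs_le.1 (ha 0)
  have hk := abs_le.1 (ha k)
  exact abs_le.2 ⟨by linarith, by linarith⟩

lemma tendsto_pressure_Icc (hP : AlmostSuperadditive P x) (hx : ∀ n, Measurable (x n))
    (V : W →ᵇ ℝ) :
    Tendsto (fun k : ℕ ↦ cgf (fun ω ↦ ∑ n ∈ Finset.Icc 1 k, V (x n ω)) P 1 / k) atTop
      (𝓝 (pressure P x V)) := by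
  refine (hP.tendsto_pressure hx V).congr_dist
    (squeeze_zero (fun _ ↦ dist_nonneg) (fun k ↦ ?_)
      (tendsto_const_div_atTop_nhds_zero_nat (2 * ‖V‖)))
  rw [dist_comm, Real.dist_eq, ← sub_div, abs_div, Nat.abs_cast]
  gcongr
  exact abs_cgf_one_sub_le_of_abs_sub_le (integrable_exp_sum hx V _) (integrable_exp_sum hx V _)
    fun ω ↦ abs_sum_Icc_sub_sum_range_le _ (fun n ↦ V.norm_coe_le_norm (x n ω)) k

lemma convexOn_pressure (hP : AlmostSuperadditive P x) (hx : ∀ n, Measurable (x n)) :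
    ConvexOn ℝ Set.univ (pressure P x) := by
  refine ⟨convex_univ, fun V _ V' _ s t hs ht hst ↦ ?_⟩
  refine le_of_tendsto_of_tendsto' (hP.tendsto_pressure hx (s • V + t • V'))
    (((hP.tendsto_pressure hx V).const_mul s).add ((hP.tendsto_pressure hx V').const_mul t))
    fun k ↦ ?_
  have hsum (ω : Ω) : ∑ n ∈ Finset.range k, (s • V + t • V') (x n ω) =
      s * ∑ n ∈ Finset.range k, V (x n ω) + t * ∑ n ∈ Finset.range k, V' (x n ω) := by
    simp [Finset.sum_add_distrib, Finset.mul_sum]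
  have hint := integrable_exp_sum (P := P) hx (s • V + t • V') (Finset.range k)
  simp only [hsum] at hint ⊢
  rw [mul_div_assoc', mul_div_assoc', ← add_div]
  gcongr
  exact cgf_one_convex_comb_le (integrable_exp_sum hx V _) (integrable_exp_sum hx V' _) hint
    hs ht hst

variable {A : Set W} {V V' : W →ᵇ ℝ}

lemma pressure_le_add (hP : AlmostSuperadditive P x) (hx : ∀ n, Measurable (x n))
    (hA : ∀ᵐ ω ∂P, ∀ n, x n ω ∈ A) {c : ℝ} (h : ∀ w ∈ A, V w ≤ V' w + c) :
    pressure P x V ≤ pressure P x V' + c := by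
  refine le_of_tendsto_of_tendsto (hP.tendsto_pressure hx V)
    ((hP.tendsto_pressure hx V').add_const c) ?_
  filter_upwards [eventually_gt_atTop 0] with k hk
  have hk₀ : (0 : ℝ) < k := Nat.cast_pos.2 hk
  have hsum : ∀ᵐ ω ∂P, ∑ n ∈ Finset.range k, V (x n ω) ≤
      ∑ n ∈ Finset.range k, V' (x n ω) + k * c := by
    filter_upwards [hA] with ω hω
    exact (Finset.sum_le_sum fun n _ ↦ h _ (hω n)).trans_eq (by simp [Finset.sum_add_distrib])
  rw [div_add' _ _ _ hk₀.ne', mul_comm c]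
  gcongr
  exact cgf_one_le_add_of_ae_le (integrable_exp_sum hx V _) (integrable_exp_sum hx V' _) hsum

lemma abs_pressure_sub_le (hP : AlmostSuperadditive P x) (hx : ∀ n, Measurable (x n))
    (hA : ∀ᵐ ω ∂P, ∀ n, x n ω ∈ A) :
    |pressure P x V - pressure P x V'| ≤ ⨆ y : A, |V y - V' y| := by
  have hbdd : BddAbove (Set.range fun y : A ↦ |V y - V' y|) :=
    ⟨‖V - V'‖, Set.forall_mem_range.2 fun y ↦ (V - V').norm_coe_le_norm y⟩
  have hle (w : W) (hw : w ∈ A) : |V w - V' w| ≤ ⨆ y : A, |V y - V' y| :=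
    le_ciSup hbdd (⟨w, hw⟩ : A)
  have h := hP.pressure_le_add hx hA fun w hw ↦ sub_le_iff_le_add'.1 (abs_le.1 (hle w hw)).2
  have h' := hP.pressure_le_add hx hA fun w hw ↦ neg_le_sub_iff_le_add.1 (abs_le.1 (hle w hw)).1
  exact abs_le.2 ⟨by linarith, by linarith⟩

lemma pressure_const (hP : AlmostSuperadditive P x) (hx : ∀ n, Measurable (x n)) (c : ℝ) :
    pressure P x (.const W c) = c := by
  refine tendsto_nhds_unique (hP.tendsto_pressure hx _) (tendsto_const_nhds.congr' ?_)
  filter_upwards [eventually_ne_atTop 0] with k hk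
  simp [hk]

end AlmostSuperadditive

/-! ### The rate function and the large deviation upper bound -/

section LogLimits

lemma eventually_le_exp_natCast_mul (r : ℝ) {ε : ℝ} (hε : 0 < ε) :
    ∀ᶠ k : ℕ in atTop, r ≤ Real.exp (k * ε) :=
  (Real.tendsto_exp_atTop.comp
    (tendsto_natCast_atTop_atTop.atTop_mul_const hε)).eventually_ge_atTop r

lemma inv_mul_log_ofReal_exp_mul {k : ℕ} (hk : k ≠ 0) (c : ℝ) :
    (((k : ℝ)⁻¹ : ℝ) : EReal) * ENNReal.log (ENNReal.ofReal (Real.exp (k * c))) = c := by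
  rw [← EReal.exp_coe, EReal.log_exp, ← EReal.coe_mul,
    inv_mul_cancel_left₀ (Nat.cast_ne_zero.2 hk)]

variable {p : ℕ → ℝ≥0∞} {c : ℝ}

lemma limsup_inv_mul_log_le (h : ∀ᶠ k : ℕ in atTop, p k ≤ ENNReal.ofReal (Real.exp (k * c))) :
    limsup (fun k : ℕ ↦ (((k : ℝ)⁻¹ : ℝ) : EReal) * ENNReal.log (p k)) atTop ≤ c := by
  refine limsup_le_of_le (by isBoundedDefault) ?_
  filter_upwards [h, eventually_ne_atTop 0] with k hpk hk
  rw [← inv_mul_log_ofReal_exp_mul hk c]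
  exact mul_le_mul_of_nonneg_left (ENNReal.log_monotone hpk) (EReal.coe_nonneg.2 (by positivity))

lemma le_liminf_inv_mul_log (h : ∀ᶠ k : ℕ in atTop, ENNReal.ofReal (Real.exp (k * c)) ≤ p k) :
    c ≤ liminf (fun k : ℕ ↦ (((k : ℝ)⁻¹ : ℝ) : EReal) * ENNReal.log (p k)) atTop := by
  refine le_liminf_of_le (by isBoundedDefault) ?_
  filter_upwards [h, eventually_ne_atTop 0] with k hpk hk
  rw [← inv_mul_log_ofReal_exp_mul hk c]
  exact mul_le_mul_of_nonneg_left (ENNReal.log_monotone hpk) (EReal.coe_nonneg.2 (by positivity))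

lemma eventually_measure_biUnion_le_exp {Ω ι : Type*} [MeasurableSpace Ω] {P : Measure Ω}
    {t : Finset ι} {s : ι → ℕ → Set Ω} {c c' : ℝ} (hc : c < c')
    (h : ∀ i ∈ t, ∀ᶠ k : ℕ in atTop, P (s i k) ≤ ENNReal.ofReal (Real.exp (k * c))) :
    ∀ᶠ k : ℕ in atTop, P (⋃ i ∈ t, s i k) ≤ ENNReal.ofReal (Real.exp (k * c')) := by
  filter_upwards [(eventually_all_finset t).2 h,
    eventually_le_exp_natCast_mul t.card (sub_pos.2 hc)] with k hk hcard
  calc P (⋃ i ∈ t, s i k)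
      ≤ ∑ i ∈ t, P (s i k) := measure_biUnion_finset_le _ _
    _ ≤ ∑ _i ∈ t, ENNReal.ofReal (Real.exp (k * c)) := Finset.sum_le_sum hk
    _ = ENNReal.ofReal (t.card * Real.exp (k * c)) := by
        rw [Finset.sum_const, ENNReal.ofReal_mul (Nat.cast_nonneg _), nsmul_eq_mul,
          ENNReal.ofReal_natCast]
    _ ≤ ENNReal.ofReal (Real.exp (k * (c' - c)) * Real.exp (k * c)) := by gcongr
    _ = ENNReal.ofReal (Real.exp (k * c')) := by rw [← Real.exp_add]; ring_nf

end LogLimits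

section Occupation

variable {W : Type*} [MeasurableSpace W]

lemma coe_occ (x : ℕ → W) {k : ℕ} (hk : k ≠ 0) :
    (occ x k : Measure W) = (k : ℝ≥0∞)⁻¹ • ∑ n ∈ Finset.range k, Measure.dirac (x n) :=
  congrArg Subtype.val (dif_neg hk)

lemma occ_compl_eq_zero {x : ℕ → W} {A : Set W} (hA : MeasurableSet A) (hx : ∀ n, x n ∈ A)
    (k : ℕ) : (occ x k : Measure W) Aᶜ = 0 := by
  rcases eq_or_ne k 0 with rfl | hk
  · simp [occ, Measure.dirac_apply' _ hA.compl, hx]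
  · simp [coe_occ x hk, Measure.dirac_apply' _ hA.compl, hx]

lemma integral_occ [TopologicalSpace W] [OpensMeasurableSpace W] (x : ℕ → W) {k : ℕ} (hk : k ≠ 0)
    {E : Type*} [NormedAddCommGroup E] [NormedSpace ℝ E] [CompleteSpace E]
    [SecondCountableTopology E] (V : W →ᵇ E) :
    ∫ w, V w ∂(occ x k : Measure W) = (k : ℝ)⁻¹ • ∑ n ∈ Finset.range k, V (x n) := by
  borelize E
  have hV : StronglyMeasurable V := V.continuous.measurable.stronglyMeasurable
  rw [coe_occ x hk, integral_smul_measure,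
    integral_finsetSum_measure fun n _ ↦ integrable_dirac' hV (by simp)]
  simp [integral_dirac' _ _ hV]

end Occupation

/-- The Legendre transform `I(σ) = sup_V (⟨V, σ⟩ - Q(V))` over bounded continuous `V`, with
values in `[0, ∞]`. The truncation of each term at `0` is harmless when `Q(0) = 0`. -/
def legendreRate {W : Type*} [TopologicalSpace W] [MeasurableSpace W] (Q : (W →ᵇ ℝ) → ℝ)
    (σ : ProbabilityMeasure W) : ℝ≥0∞ :=
  ⨆ V : W →ᵇ ℝ, ENNReal.ofReal ((∫ w, V w ∂(σ : Measure W)) - Q V)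

namespace legendreRate

section Topological

variable {W : Type*} [TopologicalSpace W] [MeasurableSpace W] {Q : (W →ᵇ ℝ) → ℝ}
  {σ : ProbabilityMeasure W}

lemma lowerSemicontinuous [OpensMeasurableSpace W] (Q : (W →ᵇ ℝ) → ℝ) :
    LowerSemicontinuous (legendreRate Q) :=
  lowerSemicontinuous_iSup fun V ↦ (ENNReal.continuous_ofReal.comp
    ((ProbabilityMeasure.continuous_integral_boundedContinuousFunction V).sub
      continuous_const)).lowerSemicontinuous

lemma integral_sub_le (hσ : legendreRate Q σ ≠ ⊤) (V : W →ᵇ ℝ) :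
    (∫ w, V w ∂(σ : Measure W)) - Q V ≤ (legendreRate Q σ).toReal :=
  (ENNReal.ofReal_le_iff_le_toReal hσ).1
    (le_iSup (fun V : W →ᵇ ℝ ↦ ENNReal.ofReal ((∫ w, V w ∂(σ : Measure W)) - Q V)) V)

lemma exists_lt_integral_sub (hQ : Q 0 = 0) {c : ℝ} (hc : (c : EReal) < legendreRate Q σ) :
    ∃ V : W →ᵇ ℝ, c < (∫ w, V w ∂(σ : Measure W)) - Q V := by
  rcases lt_or_ge c 0 with hc₀ | hc₀
  · exact ⟨0, by simpa [hQ] using hc₀⟩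
  · have hlt : ENNReal.ofReal c < legendreRate Q σ := by
      rwa [← EReal.coe_ennreal_lt_coe_ennreal_iff, EReal.coe_ennreal_ofReal, max_eq_left hc₀]
    obtain ⟨V, hV⟩ := lt_iSup_iff.1 hlt
    exact ⟨V, (ENNReal.ofReal_lt_ofReal_iff_of_nonneg hc₀).1 hV⟩

-- `⟨t V, σ⟩` stays bounded as `t → ∞`.
lemma integral_nonpos_of_ne_top (hσ : legendreRate Q σ ≠ ⊤) {V : W →ᵇ ℝ}
    (hQ : ∀ t : ℝ, Q (t • V) = 0) : ∫ w, V w ∂(σ : Measure W) ≤ 0 := by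
  by_contra! hpos
  have h := integral_sub_le hσ
    ((((legendreRate Q σ).toReal + 1) / ∫ w, V w ∂(σ : Measure W)) • V)
  simp only [hQ, sub_zero, coe_smul, smul_eq_mul, integral_const_mul] at h
  rw [div_mul_cancel₀ _ hpos.ne'] at h
  linarith

end Topological

variable {W : Type*} [MetricSpace W] [MeasurableSpace W] [BorelSpace W] {A : Set W}

lemma isCompact_closure_setOf_compl_eq_zero (hA : IsCompact A) :
    IsCompact (closure {σ : ProbabilityMeasure W | (σ : Measure W) Aᶜ = 0}) := by
  refine isCompact_closure_of_isTightMeasureSet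
    (isTightMeasureSet_iff_exists_isCompact_measure_compl_le.2 fun ε _ ↦ ⟨A, hA, ?_⟩)
  rintro _ ⟨σ, hσ, rfl⟩
  exact le_of_eq_of_le hσ zero_le

variable {Q : (W →ᵇ ℝ) → ℝ} {σ : ProbabilityMeasure W}

lemma compl_eq_zero_of_ne_top (hA : IsClosed A) (hne : A.Nonempty)
    (hQ : ∀ V : W →ᵇ ℝ, (∀ w ∈ A, V w = 0) → Q V = 0) (hσ : legendreRate Q σ ≠ ⊤) :
    (σ : Measure W) Aᶜ = 0 := by
  have hbound (w : W) : ‖min 1 (Metric.infDist w A)‖ ≤ 1 := by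
    rw [Real.norm_of_nonneg (le_min zero_le_one Metric.infDist_nonneg)]
    exact min_le_left _ _
  let V : W →ᵇ ℝ :=
    .ofNormedAddCommGroup (fun w ↦ min 1 (Metric.infDist w A)) (by fun_prop) 1 hbound
  have hV₀ : 0 ≤ ⇑V := fun w ↦ le_min zero_le_one Metric.infDist_nonneg
  have hVA (w : W) (hw : w ∈ A) : V w = 0 := by simp [V, Metric.infDist_zero_of_mem hw]
  have hint : ∫ w, V w ∂(σ : Measure W) = 0 :=
    (integral_nonpos_of_ne_top hσ fun t ↦ hQ _ fun w hw ↦ by simp [hVA w hw]).antisymm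
      (integral_nonneg hV₀)
  rw [integral_eq_zero_iff_of_nonneg hV₀ (V.integrable _)] at hint
  suffices ∀ᵐ w ∂(σ : Measure W), w ∈ A from this
  filter_upwards [hint] with w hw
  have hw₀ : min 1 (Metric.infDist w A) = 0 := hw
  exact (hA.mem_iff_infDist_zero hne).2 (by
    rcases min_choice 1 (Metric.infDist w A) with h | h <;> linarith)

lemma goodRate (hA : IsCompact A) (hne : A.Nonempty)
    (hQ : ∀ V : W →ᵇ ℝ, (∀ w ∈ A, V w = 0) → Q V = 0) : GoodRate (legendreRate Q) :=
  ⟨lowerSemicontinuous Q, fun c hc ↦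
    (isCompact_closure_setOf_compl_eq_zero hA).of_isClosed_subset
      ((lowerSemicontinuous Q).isClosed_preimage c) fun _ hσ ↦ subset_closure
        (compl_eq_zero_of_ne_top hA.isClosed hne hQ (ne_top_of_le_ne_top hc hσ))⟩

end legendreRate

namespace AlmostSuperadditive

variable {W Ω : Type*} [MeasurableSpace W] [MeasurableSpace Ω] {P : Measure Ω}
  [IsProbabilityMeasure P] {x : ℕ → Ω → W}

lemma eventually_measure_lt_integral_occ_le [TopologicalSpace W] [OpensMeasurableSpace W]
    (hP : AlmostSuperadditive P x) (hx : ∀ n, Measurable (x n)) (V : W →ᵇ ℝ) {a c : ℝ}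
    (hac : a < c) :
    ∀ᶠ k : ℕ in atTop,
      P {ω | c < (∫ w, V w ∂(occ (fun n ↦ x n ω) k : Measure W)) - pressure P x V} ≤
        ENNReal.ofReal (Real.exp (k * -a)) := by
  filter_upwards [(hP.tendsto_pressure hx V).eventually_lt_const
    (lt_add_of_pos_right _ (sub_pos.2 hac)), eventually_ne_atTop 0] with k hcgf hk
  have hk₀ : (0 : ℝ) < k := by positivity
  rw [div_lt_iff₀ hk₀] at hcgf
  have hsub : {ω | c < (∫ w, V w ∂(occ (fun n ↦ x n ω) k : Measure W)) - pressure P x V} ⊆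
      {ω | k * (c + pressure P x V) ≤ ∑ n ∈ Finset.range k, V (x n ω)} := by
    intro ω hω
    rw [Set.mem_ofPred_eq, integral_occ _ hk, smul_eq_mul, lt_sub_iff_add_lt,
      ← div_eq_inv_mul, lt_div_iff₀' hk₀] at hω
    exact hω.le
  refine (measure_mono hsub).trans ?_
  rw [← ofReal_measureReal]
  refine ENNReal.ofReal_le_ofReal ((measure_ge_le_exp_cgf _ zero_le_one
    (integrable_exp_sum hx V _)).trans (Real.exp_le_exp.2 ?_))
  linarith

-- Chernoff's bound on the half-spaces `c < ⟨V, ·⟩ - Q(V)`, finitely many of which cover the part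
-- of `F` carried by `A`.
lemma limsup_le_neg_iInf_legendreRate [MetricSpace W] [BorelSpace W]
    (hP : AlmostSuperadditive P x) (hx : ∀ n, Measurable (x n)) {A : Set W} (hA : IsCompact A)
    (hxA : ∀ᵐ ω ∂P, ∀ n, x n ω ∈ A) {F : Set (ProbabilityMeasure W)} (hF : IsClosed F) :
    limsup (fun k : ℕ ↦ (((k : ℝ)⁻¹ : ℝ) : EReal) *
        ENNReal.log (P {ω | occ (fun n ↦ x n ω) k ∈ F})) atTop
      ≤ -(⨅ σ ∈ F, (legendreRate (pressure P x) σ : EReal)) := by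
  refine EReal.le_neg_of_le_neg (EReal.ge_of_forall_gt_iff_ge.1 fun a ha ↦
    EReal.le_neg_of_le_neg ?_)
  obtain ⟨c, hac, hc⟩ := EReal.lt_iff_exists_real_btwn.1 ha
  obtain ⟨b, hab, hbc⟩ := exists_between (EReal.coe_lt_coe_iff.1 hac)
  let U (V : W →ᵇ ℝ) : Set (ProbabilityMeasure W) :=
    {σ | c < (∫ w, V w ∂(σ : Measure W)) - pressure P x V}
  have hU (V : W →ᵇ ℝ) : IsOpen (U V) := isOpen_lt continuous_const
    ((ProbabilityMeasure.continuous_integral_boundedContinuousFunction V).sub continuous_const)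
  have hcover : F ⊆ ⋃ V, U V := fun σ hσ ↦ Set.mem_iUnion.2
    (legendreRate.exists_lt_integral_sub (hP.pressure_const hx 0) (hc.trans_le (iInf₂_le σ hσ)))
  obtain ⟨t, ht⟩ := ((legendreRate.isCompact_closure_setOf_compl_eq_zero hA).inter_left
    hF).elim_finite_subcover U hU (Set.inter_subset_left.trans hcover)
  have hsub (k : ℕ) : P {ω | occ (fun n ↦ x n ω) k ∈ F} ≤
      P (⋃ V ∈ t, {ω | occ (fun n ↦ x n ω) k ∈ U V}) := by
    refine measure_mono_ae ?_
    filter_upwards [hxA] with ω hω hmem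
    obtain ⟨V, hVt, hV⟩ := Set.mem_iUnion₂.1
      (ht ⟨hmem, subset_closure (occ_compl_eq_zero hA.measurableSet hω k)⟩)
    exact Set.mem_iUnion₂.2 ⟨V, hVt, hV⟩
  rw [← EReal.coe_neg]
  refine limsup_inv_mul_log_le ?_
  filter_upwards [eventually_measure_biUnion_le_exp (neg_lt_neg hab) fun V _ ↦
    hP.eventually_measure_lt_integral_occ_le hx V hbc] with k hk
  exact (hsub k).trans hk

end AlmostSuperadditive

/-! ### The large deviation lower bound -/

section WeakNeighborhood

variable {W : Type*} [TopologicalSpace W] [MeasurableSpace W] [OpensMeasurableSpace W]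

lemma exists_finite_forall_abs_integral_sub_lt_mem {G : Set (ProbabilityMeasure W)}
    {σ : ProbabilityMeasure W} (hG : G ∈ 𝓝 σ) :
    ∃ (n : ℕ) (U : Fin n → W →ᵇ ℝ), ∀ μ : ProbabilityMeasure W,
      (∀ i, |∫ w, U i w ∂(μ : Measure W) - ∫ w, U i w ∂(σ : Measure W)| < 1) → μ ∈ G := by
  have hle : Tendsto id (⨅ V : W →ᵇ ℝ, comap (fun μ : ProbabilityMeasure W ↦
      ∫ w, V w ∂(μ : Measure W)) (𝓝 (∫ w, V w ∂(σ : Measure W)))) (𝓝 σ) :=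
    ProbabilityMeasure.tendsto_iff_forall_integral_tendsto.2 fun V ↦
      tendsto_comap.mono_left (iInf_le _ V)
  obtain ⟨I, hI, Z, hZ, rfl⟩ := Filter.mem_iInf.1 (hle hG)
  have hball (V : I) : ∃ ε > 0, ∀ μ : ProbabilityMeasure W,
      |∫ w, V.1 w ∂(μ : Measure W) - ∫ w, V.1 w ∂(σ : Measure W)| < ε → μ ∈ Z V := by
    obtain ⟨t, ht, hsub⟩ := Filter.mem_comap.1 (hZ V)
    obtain ⟨ε, hε, hball⟩ := Metric.mem_nhds_iff.1 ht
    exact ⟨ε, hε, fun μ hμ ↦ hsub (hball (by rwa [Metric.mem_ball, Real.dist_eq]))⟩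
  choose ε hε hmem using hball
  have := hI.to_subtype
  obtain ⟨n, ⟨idx⟩⟩ := Finite.exists_equiv_fin I
  refine ⟨n, fun i ↦ (ε (idx.symm i))⁻¹ • (idx.symm i).1, fun μ hμ ↦
    Set.mem_iInter.2 fun V ↦ hmem V μ ?_⟩
  have hV := hμ (idx V)
  simp only [Equiv.symm_apply_apply, coe_smul, smul_eq_mul, integral_const_mul] at hV
  rwa [← mul_sub, abs_mul, abs_of_pos (inv_pos.2 (hε V)), ← div_eq_inv_mul,
    div_lt_one (hε V)] at hV

lemma exists_forall_norm_integral_sub_lt_mem {G : Set (ProbabilityMeasure W)}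
    {σ : ProbabilityMeasure W} (hG : G ∈ 𝓝 σ) :
    ∃ (n : ℕ) (V : W →ᵇ (Fin n → ℝ)), ∀ μ : ProbabilityMeasure W,
      ‖∫ w, V w ∂(μ : Measure W) - ∫ w, V w ∂(σ : Measure W)‖ < 1 → μ ∈ G := by
  obtain ⟨n, U, hU⟩ := exists_finite_forall_abs_integral_sub_lt_mem hG
  let V : W →ᵇ (Fin n → ℝ) :=
    ∑ i, (ContinuousLinearMap.single ℝ (fun _ ↦ ℝ) i).compLeftContinuousBounded W (U i)
  have hV (w : W) (i : Fin n) : V w i = U i w := by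
    simp [V, Finset.sum_apply, Pi.single_apply]
  have hint (μ : ProbabilityMeasure W) (i : Fin n) :
      (∫ w, V w ∂(μ : Measure W)) i = ∫ w, U i w ∂(μ : Measure W) := by
    rw [eval_integral fun i ↦ (V.integrable _).eval i]
    simp only [hV]
  refine ⟨n, V, fun μ hμ ↦ hU μ fun i ↦ ?_⟩
  rw [← hint, ← hint]
  exact (norm_le_pi_norm _ i).trans_lt hμ

end WeakNeighborhood

/-- `log 𝔼 exp (-‖S_k - y‖)` for the partial sums `S_k = V(x_0) + ⋯ + V(x_{k-1})`: it measures how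
unlikely it is for `S_k` to be near `y`. -/
def proximityCgf {W Ω E : Type*} [TopologicalSpace W] [MeasurableSpace Ω] [NormedAddCommGroup E]
    (P : Measure Ω) (x : ℕ → Ω → W) (V : W →ᵇ E) (k : ℕ) (y : E) : ℝ :=
  cgf (fun ω ↦ -‖∑ n ∈ Finset.range k, V (x n ω) - y‖) P 1

namespace proximityCgf

variable {W Ω : Type*} [TopologicalSpace W] [MeasurableSpace W] [OpensMeasurableSpace W]
  [MeasurableSpace Ω] {P : Measure Ω} [IsProbabilityMeasure P] {x : ℕ → Ω → W}
  {E : Type} [NormedAddCommGroup E] [NormedSpace ℝ E] [FiniteDimensional ℝ E] {V : W →ᵇ E}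

lemma lipschitzWith_neg_norm_sub {E : Type*} [NormedAddCommGroup E] (y : E) :
    LipschitzWith 1 fun v : E ↦ -‖v - y‖ := by
  simp only [← dist_eq_norm]
  exact (LipschitzWith.dist_left y).neg

lemma integrable_exp (hx : ∀ n, Measurable (x n)) (V : W →ᵇ E) (k : ℕ) (y : E) :
    Integrable (fun ω ↦ Real.exp (1 * -‖∑ n ∈ Finset.range k, V (x n ω) - y‖)) P := by
  borelize E
  have : ProperSpace E := FiniteDimensional.proper ℝ E
  exact integrable_exp_comp_sum hx V.continuous.measurable V.norm_coe_le_norm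
    (lipschitzWith_neg_norm_sub y) _

lemma abs_succ_sub_le (hx : ∀ n, Measurable (x n)) (V : W →ᵇ E) (k : ℕ) (y : E) :
    |proximityCgf P x V (k + 1) y - proximityCgf P x V k y| ≤ ‖V‖ := by
  refine abs_cgf_one_sub_le_of_abs_sub_le (integrable_exp hx V _ _) (integrable_exp hx V _ _)
    fun ω ↦ ((lipschitzWith_neg_norm_sub y).dist_le_mul _ _).trans ?_
  rw [NNReal.coe_one, one_mul, dist_eq_norm, Finset.sum_range_succ, add_sub_cancel_left]
  exact V.norm_coe_le_norm _

lemma abs_sub_le_norm_sub (hx : ∀ n, Measurable (x n)) (V : W →ᵇ E) (k : ℕ) (y z : E) :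
    |proximityCgf P x V k y - proximityCgf P x V k z| ≤ ‖y - z‖ := by
  refine abs_cgf_one_sub_le_of_abs_sub_le (integrable_exp hx V _ _) (integrable_exp hx V _ _)
    fun ω ↦ ?_
  rw [neg_sub_neg]
  exact (abs_norm_sub_norm_le _ _).trans_eq (by rw [sub_sub_sub_cancel_left])

lemma exists_concave_limit (hP : AlmostSuperadditive P x) (hx : ∀ n, Measurable (x n))
    (V : W →ᵇ E) :
    ∃ L : E → ℝ, (∀ y, Tendsto (fun k : ℕ ↦ proximityCgf P x V k ((k : ℝ) • y) / k) atTop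
      (𝓝 (L y))) ∧ ConcaveOn ℝ Set.univ L ∧ Continuous L := by
  have hsup (ε : ℝ) (hε : 0 < ε) : ∃ C : ℝ, ∀ (k j : ℕ) (y z : E),
      proximityCgf P x V k y + proximityCgf P x V j z - C - ε * j ≤
        proximityCgf P x V (k + j) (y + z) := by
    obtain ⟨C, hC⟩ := hP E V ε hε
    refine ⟨C, fun k j y z ↦ hC _ _ _ (lipschitzWith_neg_norm_sub (y + z))
      (lipschitzWith_neg_norm_sub y) (lipschitzWith_neg_norm_sub z) (fun u v ↦ ?_) k j⟩
    have := norm_add_le (u - y) (v - z)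
    rw [← add_sub_add_comm] at this
    linarith
  choose L hL using exists_tendsto_smul_div (abs_succ_sub_le hx V) (abs_sub_le_norm_sub hx V) hsup
  exact ⟨L, hL, concaveOn_of_almost_superadditive (abs_sub_le_norm_sub hx V) hsup hL,
    (lipschitzWith_one_of_tendsto_smul_div (abs_sub_le_norm_sub hx V) hL).continuous⟩

lemma exp_le_sum_exp_of_net {E : Type*} [NormedAddCommGroup E] [NormedSpace ℝ E]
    (l : E →L[ℝ] ℝ) {B δ : ℝ} {t : Finset E}
    (ht : Metric.closedBall 0 B ⊆ ⋃ y ∈ t, Metric.ball y δ) {k : ℕ} (hk : k ≠ 0) {s : E}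
    (hs : ‖s‖ ≤ k * B) :
    Real.exp (l s) ≤
      ∑ y ∈ t, Real.exp (k * (l y + (‖l‖ + 1) * δ)) * Real.exp (-‖s - (k : ℝ) • y‖) := by
  have hk₀ : (0 : ℝ) < k := by positivity
  have hmem : (k : ℝ)⁻¹ • s ∈ Metric.closedBall (0 : E) B := by
    rwa [mem_closedBall_zero_iff, norm_smul, norm_inv, Real.norm_natCast, inv_mul_le_iff₀ hk₀]
  obtain ⟨y, hy, hdist⟩ := Set.mem_iUnion₂.1 (ht hmem)
  have hnear : ‖s - (k : ℝ) • y‖ ≤ k * δ := by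
    have hsmul : s - (k : ℝ) • y = (k : ℝ) • ((k : ℝ)⁻¹ • s - y) := by
      rw [smul_sub, smul_inv_smul₀ hk₀.ne']
    rw [hsmul, norm_smul, Real.norm_natCast, ← dist_eq_norm]
    exact mul_le_mul_of_nonneg_left (Metric.mem_ball.1 hdist).le hk₀.le
  have hl : l (s - (k : ℝ) • y) ≤ ‖l‖ * (k * δ) :=
    ((le_abs_self _).trans (l.le_opNorm _)).trans (by gcongr)
  rw [map_sub, map_smul, smul_eq_mul] at hl
  calc Real.exp (l s)
      ≤ Real.exp (k * (l y + (‖l‖ + 1) * δ)) * Real.exp (-‖s - (k : ℝ) • y‖) := by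
        rw [← Real.exp_add]
        exact Real.exp_le_exp.2 (by linarith)
    _ ≤ _ := Finset.single_le_sum (f := fun y ↦
        Real.exp (k * (l y + (‖l‖ + 1) * δ)) * Real.exp (-‖s - (k : ℝ) • y‖))
        (fun y _ ↦ by positivity) hy

lemma exp_cgf_comp_le_sum (hx : ∀ n, Measurable (x n)) (l : E →L[ℝ] ℝ) {δ : ℝ} {t : Finset E}
    (ht : Metric.closedBall 0 ‖V‖ ⊆ ⋃ y ∈ t, Metric.ball y δ) {k : ℕ} (hk : k ≠ 0) :
    Real.exp (cgf (fun ω ↦ ∑ n ∈ Finset.range k, l (V (x n ω))) P 1) ≤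
      ∑ y ∈ t, Real.exp (k * (l y + (‖l‖ + 1) * δ) + proximityCgf P x V k ((k : ℝ) • y)) := by
  have hint (y : E) := (integrable_exp (P := P) hx V k ((k : ℝ) • y)).const_mul
    (Real.exp (k * (l y + (‖l‖ + 1) * δ)))
  have hintl : Integrable (fun ω ↦ Real.exp (1 * ∑ n ∈ Finset.range k, l (V (x n ω)))) P :=
    AlmostSuperadditive.integrable_exp_sum hx (l.compLeftContinuousBounded W V) _
  calc Real.exp (cgf (fun ω ↦ ∑ n ∈ Finset.range k, l (V (x n ω))) P 1)
      = ∫ ω, Real.exp (1 * ∑ n ∈ Finset.range k, l (V (x n ω))) ∂P := exp_cgf hintl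
    _ ≤ ∫ ω, ∑ y ∈ t, Real.exp (k * (l y + (‖l‖ + 1) * δ)) *
          Real.exp (1 * -‖∑ n ∈ Finset.range k, V (x n ω) - (k : ℝ) • y‖) ∂P := by
        refine integral_mono hintl (integrable_finsetSum _ fun y _ ↦ hint y) fun ω ↦ ?_
        simp only [one_mul, ← map_sum]
        exact exp_le_sum_exp_of_net l ht hk
          (by simpa using norm_sum_comp_le V.norm_coe_le_norm x (Finset.range k) ω)
    _ = _ := by
        rw [integral_finsetSum _ fun y _ ↦ hint y]
        refine Finset.sum_congr rfl fun y _ ↦ ?_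
        rw [integral_const_mul, Real.exp_add, proximityCgf, exp_cgf (integrable_exp hx V _ _), mgf]

variable {L : E → ℝ}

lemma pressure_comp_le (hP : AlmostSuperadditive P x) (hx : ∀ n, Measurable (x n))
    (hL : ∀ y, Tendsto (fun k : ℕ ↦ proximityCgf P x V k ((k : ℝ) • y) / k) atTop (𝓝 (L y)))
    (l : E →L[ℝ] ℝ) {c : ℝ} (hl : ∀ y, L y + l y ≤ c) :
    pressure P x (l.compLeftContinuousBounded W V) ≤ c := by
  refine le_of_forall_pos_le_add fun ε hε ↦ ?_
  have : ProperSpace E := FiniteDimensional.proper ℝ E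
  have hl₀ : 0 < ‖l‖ + 3 := by positivity
  obtain ⟨δ, hδ, rfl⟩ : ∃ δ > 0, (‖l‖ + 3) * δ = ε :=
    ⟨ε / (‖l‖ + 3), by positivity, mul_div_cancel₀ _ hl₀.ne'⟩
  obtain ⟨t, ht⟩ := (isCompact_closedBall (0 : E) ‖V‖).elim_finite_subcover
    (fun y ↦ Metric.ball y δ) (fun _ ↦ Metric.isOpen_ball)
    (fun y _ ↦ Set.mem_iUnion.2 ⟨y, Metric.mem_ball_self hδ⟩)
  have hnear : ∀ᶠ k : ℕ in atTop, ∀ y ∈ t, proximityCgf P x V k ((k : ℝ) • y) / k < L y + δ :=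
    (Finset.eventually_all t).2 fun y _ ↦ (hL y).eventually_lt_const (lt_add_of_pos_right _ hδ)
  refine le_of_tendsto (AlmostSuperadditive.tendsto_pressure hP hx _) ?_
  filter_upwards [hnear, eventually_le_exp_natCast_mul t.card hδ, eventually_ne_atTop 0]
    with k hk hcard hk₀
  have hk₀' : (0 : ℝ) < k := by positivity
  have hterm (y : E) (hy : y ∈ t) : k * (l y + (‖l‖ + 1) * δ) +
      proximityCgf P x V k ((k : ℝ) • y) ≤ k * (c + (‖l‖ + 2) * δ) := by
    have hky := ((div_lt_iff₀' hk₀').1 (hk y hy)).le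
    linarith [mul_le_mul_of_nonneg_left (hl y) hk₀'.le]
  rw [div_le_iff₀' hk₀', ← Real.exp_le_exp]
  calc _ ≤ _ := exp_cgf_comp_le_sum hx l ht hk₀
    _ ≤ ∑ _y ∈ t, Real.exp (k * (c + (‖l‖ + 2) * δ)) :=
        Finset.sum_le_sum fun y hy ↦ Real.exp_le_exp.2 (hterm y hy)
    _ = t.card * Real.exp (k * (c + (‖l‖ + 2) * δ)) := by rw [Finset.sum_const, nsmul_eq_mul]
    _ ≤ Real.exp (k * δ) * Real.exp (k * (c + (‖l‖ + 2) * δ)) := by gcongr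
    _ = Real.exp (k * (c + (‖l‖ + 3) * δ)) := by rw [← Real.exp_add]; ring_nf

lemma neg_legendreRate_le (hP : AlmostSuperadditive P x) (hx : ∀ n, Measurable (x n))
    (hL : ∀ y, Tendsto (fun k : ℕ ↦ proximityCgf P x V k ((k : ℝ) • y) / k) atTop (𝓝 (L y)))
    (hconc : ConcaveOn ℝ Set.univ L) (hcont : Continuous L) {σ : ProbabilityMeasure W}
    (hσ : legendreRate (pressure P x) σ ≠ ⊤) :
    -(legendreRate (pressure P x) σ).toReal ≤ L (∫ w, V w ∂(σ : Measure W)) := by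
  have : ProperSpace E := FiniteDimensional.proper ℝ E
  have : CompleteSpace E := FiniteDimensional.complete ℝ E
  borelize E
  set m := ∫ w, V w ∂(σ : Measure W)
  refine le_of_forall_pos_le_add fun ε hε ↦ ?_
  obtain ⟨l, c, hle, heq⟩ := hconc.neg.exists_affine_le_of_lt (𝕜 := ℝ) (x := m)
    (a := -L m - ε) (Set.mem_univ m) (sub_lt_self _ hε) isClosed_univ
    (hcont.neg.lowerSemicontinuous.lowerSemicontinuousOn _)
  have hmajorant (y : E) : L y + l y ≤ -c := by
    have : l y + c ≤ -L y := hle ⟨y, Set.mem_univ y⟩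
    linarith
  have hrate := legendreRate.integral_sub_le hσ (l.compLeftContinuousBounded W V)
  have hpressure := pressure_comp_le hP hx hL l hmajorant
  have hint : ∫ w, l.compLeftContinuousBounded W V w ∂(σ : Measure W) = l m :=
    l.integral_comp_comm (V.integrable _)
  have heq' : l m + c = -L m - ε := heq
  linarith

lemma exp_le_measure_add (hx : ∀ n, Measurable (x n)) (V : W →ᵇ E) (k : ℕ) (y : E) (M : ℝ) :
    ENNReal.ofReal (Real.exp (proximityCgf P x V k y)) ≤
      P {ω | ‖∑ n ∈ Finset.range k, V (x n ω) - y‖ < M} + ENNReal.ofReal (Real.exp (-M)) := by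
  borelize E
  have : ProperSpace E := FiniteDimensional.proper ℝ E
  set D := {ω | ‖∑ n ∈ Finset.range k, V (x n ω) - y‖ < M}
  have hD : MeasurableSet D := measurableSet_lt ((Finset.measurable_sum _ fun n _ ↦
    V.continuous.measurable.comp (hx n)).sub_const y).norm measurable_const
  rw [proximityCgf, ← lintegral_ofReal_exp_eq_exp_cgf (integrable_exp hx V k y)]
  calc ∫⁻ ω, ENNReal.ofReal (Real.exp (-‖∑ n ∈ Finset.range k, V (x n ω) - y‖)) ∂P
      ≤ ∫⁻ ω, (D.indicator 1 ω + ENNReal.ofReal (Real.exp (-M))) ∂P := by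
        refine lintegral_mono fun ω ↦ ?_
        by_cases hω : ω ∈ D
        · rw [Set.indicator_of_mem hω]
          exact le_add_right (ENNReal.ofReal_le_one.2 (Real.exp_le_one_iff.2 (by simp)))
        · rw [Set.indicator_of_notMem hω, zero_add]
          exact ENNReal.ofReal_le_ofReal (Real.exp_le_exp.2 (neg_le_neg (not_lt.1 hω)))
    _ = _ := by
        rw [lintegral_add_right _ measurable_const, lintegral_indicator_one hD]
        simp

lemma eventually_exp_le_measure (hx : ∀ n, Measurable (x n)) {y : E} {l : ℝ}
    (hl : Tendsto (fun k : ℕ ↦ proximityCgf P x V k ((k : ℝ) • y) / k) atTop (𝓝 l))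
    {z M : ℝ} (hz : z < l) (hM : -M ≤ z) :
    ∀ᶠ k : ℕ in atTop, ENNReal.ofReal (Real.exp (k * z)) ≤
      P {ω | ‖∑ n ∈ Finset.range k, V (x n ω) - (k : ℝ) • y‖ < k * M} := by
  obtain ⟨z', hzz', hz'l⟩ := exists_between hz
  filter_upwards [hl.eventually_const_lt hz'l,
    eventually_le_exp_natCast_mul 2 (sub_pos.2 hzz'), eventually_gt_atTop 0] with k hcgf hgrow hk
  rw [lt_div_iff₀ (Nat.cast_pos.2 hk)] at hcgf
  have hexp : Real.exp (k * z) + Real.exp (-(k * M)) ≤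
      Real.exp (proximityCgf P x V k ((k : ℝ) • y)) := by
    calc Real.exp (k * z) + Real.exp (-(k * M))
        ≤ Real.exp (k * z) + Real.exp (k * z) := by
          rw [← mul_neg]
          gcongr
      _ = 2 * Real.exp (k * z) := (two_mul _).symm
      _ ≤ Real.exp (k * (z' - z)) * Real.exp (k * z) := by gcongr
      _ = Real.exp (z' * k) := by rw [← Real.exp_add]; ring_nf
      _ ≤ _ := Real.exp_le_exp.2 hcgf.le
  have h := (ENNReal.ofReal_le_ofReal hexp).trans (exp_le_measure_add hx V k _ (k * M))
  rw [ENNReal.ofReal_add (Real.exp_pos _).le (Real.exp_pos _).le] at h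
  exact (ENNReal.add_le_add_iff_right ENNReal.ofReal_ne_top).1 h

end proximityCgf

namespace AlmostSuperadditive

variable {W Ω : Type*} [TopologicalSpace W] [MeasurableSpace W] [OpensMeasurableSpace W]
  [MeasurableSpace Ω] {P : Measure Ω} [IsProbabilityMeasure P] {x : ℕ → Ω → W}

lemma norm_integral_occ_sub_lt_one {n : ℕ} {V : W →ᵇ (Fin n → ℝ)} {x : ℕ → W} {k : ℕ}
    (hk : k ≠ 0) {M : ℝ} (hM : 0 < M) {y : Fin n → ℝ}
    (h : ‖∑ i ∈ Finset.range k, (M • V) (x i) - (k : ℝ) • M • y‖ < k * M) :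
    ‖∫ w, V w ∂(occ x k : Measure W) - y‖ < 1 := by
  have hk₀ : (0 : ℝ) < k := by positivity
  have hscale : ∑ i ∈ Finset.range k, (M • V) (x i) - (k : ℝ) • M • y =
      ((k : ℝ) * M) • (∫ w, V w ∂(occ x k : Measure W) - y) := by
    rw [integral_occ _ hk, smul_sub, mul_comm, mul_smul, mul_smul, smul_inv_smul₀ hk₀.ne',
      Finset.smul_sum, smul_comm M]
    rfl
  rwa [hscale, norm_smul, Real.norm_of_nonneg (by positivity), mul_lt_iff_lt_one_right
    (by positivity)] at h

-- Scaling `V` by `M` makes the event `‖S_k - y‖ ≥ k M` negligible at exponential rate `z > -M`.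
lemma neg_iInf_legendreRate_le_liminf (hP : AlmostSuperadditive P x)
    (hx : ∀ n, Measurable (x n)) {G : Set (ProbabilityMeasure W)} (hG : IsOpen G) :
    -(⨅ σ ∈ G, (legendreRate (pressure P x) σ : EReal)) ≤
      liminf (fun k : ℕ ↦ (((k : ℝ)⁻¹ : ℝ) : EReal) *
        ENNReal.log (P {ω | occ (fun n ↦ x n ω) k ∈ G})) atTop := by
  refine EReal.neg_le_of_neg_le (le_iInf₂ fun σ hσ ↦ EReal.neg_le_of_neg_le ?_)
  by_cases htop : legendreRate (pressure P x) σ = ⊤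
  · simp [htop]
  rw [← EReal.coe_ennreal_toReal htop, ← EReal.coe_neg]
  refine EReal.ge_of_forall_gt_iff_ge.1 fun z hz ↦ ?_
  obtain ⟨n, V, hV⟩ := exists_forall_norm_integral_sub_lt_mem (hG.mem_nhds hσ)
  have hM : 0 < |z| + 1 := by positivity
  obtain ⟨L, hL, hconc, hcont⟩ := proximityCgf.exists_concave_limit hP hx ((|z| + 1) • V)
  have hzL := (EReal.coe_lt_coe_iff.1 hz).trans_le
    (proximityCgf.neg_legendreRate_le hP hx hL hconc hcont htop)
  refine le_liminf_inv_mul_log ?_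
  filter_upwards [proximityCgf.eventually_exp_le_measure hx (hL _) hzL
    (by linarith [neg_abs_le z] : -(|z| + 1) ≤ z), eventually_ne_atTop 0] with k hk hk₀
  refine hk.trans (measure_mono fun ω hω ↦ hV _ (norm_integral_occ_sub_lt_one hk₀ hM ?_))
  rw [← integral_smul]
  exact hω

end AlmostSuperadditive

namespace AlmostSuperadditive

variable {W Ω : Type*} [MetricSpace W] [MeasurableSpace W] [BorelSpace W] [MeasurableSpace Ω]
  {P : Measure Ω} [IsProbabilityMeasure P] {x : ℕ → Ω → W} {A : Set W}

lemma goodRate_legendreRate (hP : AlmostSuperadditive P x) (hx : ∀ n, Measurable (x n))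
    (hA : IsCompact A) (hxA : ∀ᵐ ω ∂P, ∀ n, x n ω ∈ A) :
    GoodRate (legendreRate (pressure P x)) := by
  obtain ⟨ω, hω⟩ := hxA.exists
  refine legendreRate.goodRate hA ⟨x 0 ω, hω 0⟩ fun V hV ↦ ?_
  have h := hP.abs_pressure_sub_le (V := V) (V' := .const W 0) hx hxA
  simpa [hP.pressure_const hx, fun y : A ↦ hV y y.2] using h

lemma ldpof_occ (hP : AlmostSuperadditive P x) (hx : ∀ n, Measurable (x n)) (hA : IsCompact A)
    (hxA : ∀ᵐ ω ∂P, ∀ n, x n ω ∈ A) :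
    LDPof (fun k F ↦ P {ω | occ (fun n ↦ x n ω) k ∈ F}) (legendreRate (pressure P x)) :=
  ⟨fun _ hF ↦ hP.limsup_le_neg_iInf_legendreRate hx hA hxA hF,
    fun _ hG ↦ hP.neg_iInf_legendreRate_le_liminf hx hG⟩

end AlmostSuperadditive

/-! ### The noise -/

section Translation

lemma ShiftBound.zero {G : Type*} [MeasurableSpace G] [AddZeroClass G] (ν : Measure G) :
    ShiftBound ν 0 0 := fun f _ M _ ↦ by
  simp

lemma ShiftBound.add {G : Type*} [MeasurableSpace G] [AddCommSemigroup G] [MeasurableAdd G]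
    {ν : Measure G} {h h' : G} {c c' : ℝ≥0∞} (hc : ShiftBound ν h c) (hc' : ShiftBound ν h' c') :
    ShiftBound ν (h + h') (c + c') := fun f hf M hM ↦ by
  calc ∫⁻ g, f g ∂ν ≤ ∫⁻ g, f (g + h') ∂ν + c' * M := hc' f hf M hM
    _ ≤ ∫⁻ g, f (g + h + h') ∂ν + c * M + c' * M := by
      gcongr
      exact hc (fun g ↦ f (g + h')) (hf.comp (measurable_add_const h')) M fun g ↦ hM _
    _ = ∫⁻ g, f (g + (h + h')) ∂ν + (c + c') * M := by
      simp only [add_assoc, add_mul]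

lemma ShiftBound.mono {G : Type*} [MeasurableSpace G] [Add G] {ν : Measure G} {h : G}
    {c c' : ℝ≥0∞} (hc : ShiftBound ν h c) (hcc' : c ≤ c') : ShiftBound ν h c' :=
  fun f hf M hM ↦ (hc f hf M hM).trans (by gcongr)

lemma shiftBound_withDensity {q : ℝ → ℝ} {L : ℝ≥0} (hq : LipschitzWith L q) {T : Set ℝ}
    (hT : MeasurableSet T) (hqT : Function.support q ⊆ T) (s : ℝ) :
    ShiftBound (volume.withDensity fun x ↦ ENNReal.ofReal (q x)) s
      (ENNReal.ofReal (L * |s|) * volume T) := fun f hf M hM ↦ by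
  have hqm : Measurable fun x ↦ ENNReal.ofReal (q x) := hq.continuous.measurable.ennreal_ofReal
  have hqs : Measurable fun x ↦ ENNReal.ofReal (q (x - s)) := hqm.comp (measurable_sub_const s)
  have hqsf : Measurable fun x ↦ ENNReal.ofReal (q (x - s)) * f x := hqs.mul hf
  have hfs : Measurable fun x ↦ f (x + s) := hf.comp (measurable_add_const s)
  have hpoint (x : ℝ) : ENNReal.ofReal (q x) * f x ≤ ENNReal.ofReal (q (x - s)) * f x +
      T.indicator (fun _ ↦ ENNReal.ofReal (L * |s|) * M) x := by
    by_cases hx : x ∈ T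
    · have hlip : q x ≤ q (x - s) + L * |s| := by
        simpa [Real.dist_eq] using hq.le_add_mul x (x - s)
      calc ENNReal.ofReal (q x) * f x
          ≤ (ENNReal.ofReal (q (x - s)) + ENNReal.ofReal (L * |s|)) * f x := by
            gcongr
            exact (ENNReal.ofReal_le_ofReal hlip).trans ENNReal.ofReal_add_le
        _ ≤ _ := by
            rw [Set.indicator_of_mem hx, add_mul]
            gcongr
            exact hM x
    · simp [Function.notMem_support.1 fun h ↦ hx (hqT h)]
  rw [lintegral_withDensity_eq_lintegral_mul _ hqm hf,
    lintegral_withDensity_eq_lintegral_mul _ hqm hfs]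
  calc ∫⁻ x, ENNReal.ofReal (q x) * f x
      ≤ ∫⁻ x, (ENNReal.ofReal (q (x - s)) * f x +
          T.indicator (fun _ ↦ ENNReal.ofReal (L * |s|) * M) x) := lintegral_mono hpoint
    _ = (∫⁻ x, ENNReal.ofReal (q (x - s)) * f x) + ENNReal.ofReal (L * |s|) * volume T * M := by
        rw [lintegral_add_left hqsf, lintegral_indicator_const hT, mul_right_comm]
    _ = _ := by
        rw [← lintegral_add_right_eq_self (fun x ↦ ENNReal.ofReal (q (x - s)) * f x) s]
        simp only [add_sub_cancel_right, Pi.mul_apply]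

lemma shiftBound_map_add_smul {Ω E : Type*} [MeasurableSpace Ω] [AddCommGroup E] [Module ℝ E]
    [MeasurableSpace E] [MeasurableAdd₂ E] [MeasurableSMul₂ ℝ E]
    {P : Measure Ω} [IsProbabilityMeasure P] {ζ : Ω → E} {X : Ω → ℝ} (hζ : Measurable ζ)
    (hX : Measurable X) (hind : IndepFun ζ X P) (v : E) {s : ℝ} {c : ℝ≥0∞}
    (hs : ShiftBound (P.map X) s c) :
    ShiftBound (P.map fun ω ↦ ζ ω + X ω • v) (s • v) c := fun f hf M hM ↦ by
  have := Measure.isProbabilityMeasure_map (μ := P) hζ.aemeasurable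
  have := Measure.isProbabilityMeasure_map (μ := P) hX.aemeasurable
  have hdisintegrate (F : E → ℝ≥0∞) (hF : Measurable F) : ∫⁻ g, F g ∂(P.map fun ω ↦
      ζ ω + X ω • v) = ∫⁻ z, ∫⁻ x, F (z + x • v) ∂(P.map X) ∂(P.map ζ) := by
    have hFm : Measurable fun q : E × ℝ ↦ F (q.1 + q.2 • v) := hF.comp (by fun_prop)
    rw [lintegral_map hF (by fun_prop), ← lintegral_prod _ hFm.aemeasurable,
      ← (indepFun_iff_map_prod_eq_prod_map_map hζ.aemeasurable hX.aemeasurable).1 hind,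
      lintegral_map hFm (hζ.prodMk hX)]
  rw [hdisintegrate f hf, hdisintegrate (fun g ↦ f (g + s • v)) (hf.comp (by fun_prop))]
  calc ∫⁻ z, ∫⁻ x, f (z + x • v) ∂(P.map X) ∂(P.map ζ)
      ≤ ∫⁻ z, (∫⁻ x, f (z + (x + s) • v) ∂(P.map X) + c * M) ∂(P.map ζ) :=
        lintegral_mono fun z ↦ hs (fun x ↦ f (z + x • v)) (hf.comp (by fun_prop)) M fun x ↦ hM _
    _ = _ := by
        rw [lintegral_add_right _ measurable_const, lintegral_const, measure_univ, mul_one]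
        simp only [add_smul, add_assoc]

end Translation

section Independence

variable {Ω : Type*} [MeasurableSpace Ω] {P : Measure Ω}

/-- The σ-algebra generated by the variables `X i` with `i ∈ T`. -/
abbrev generatedBy {Ω ι α : Type*} [MeasurableSpace α] (X : ι → Ω → α) (T : Set ι) :
    MeasurableSpace Ω :=
  ⨆ i ∈ T, MeasurableSpace.comap (X i) inferInstance

lemma measurable_generatedBy {Ω ι α : Type*} [MeasurableSpace α] (X : ι → Ω → α) {T : Set ι}
    {i : ι} (hi : i ∈ T) : Measurable[generatedBy X T] (X i) :=
  measurable_iff_comap_le.2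
    (le_iSup₂ (f := fun i (_ : i ∈ T) ↦ MeasurableSpace.comap (X i) inferInstance) i hi)

lemma indepFun_of_measurable_generatedBy {ι α β γ : Type*} [MeasurableSpace α]
    [MeasurableSpace β] [MeasurableSpace γ] {X : ι → Ω → α} (hX : ∀ i, Measurable (X i))
    (hind : iIndepFun X P) {T T' : Set ι} (hT : Disjoint T T') {f : Ω → β} {g : Ω → γ}
    (hf : Measurable[generatedBy X T] f) (hg : Measurable[generatedBy X T'] g) :
    IndepFun f g P := by
  have hT : Indep (generatedBy X T) (generatedBy X T') P :=
    indep_iSup_of_disjoint (fun i ↦ (hX i).comap_le) hind hT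
  exact indep_of_indep_of_le_left (indep_of_indep_of_le_right hT hg.comap_le) hf.comap_le

lemma indepFun_prodMk_left {X Y Z : Type*} [MeasurableSpace X] [MeasurableSpace Y]
    [MeasurableSpace Z] [IsProbabilityMeasure P] {a : Ω → X} {c : Ω → Y} {d : Ω → Z}
    (ha : Measurable a) (hc : Measurable c) (hd : Measurable d)
    (hacd : IndepFun a (fun ω ↦ (c ω, d ω)) P) (hcd : IndepFun c d P) :
    IndepFun (fun ω ↦ (a ω, c ω)) d P := by
  have := Measure.isProbabilityMeasure_map (μ := P) ha.aemeasurable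
  have := Measure.isProbabilityMeasure_map (μ := P) hc.aemeasurable
  have := Measure.isProbabilityMeasure_map (μ := P) hd.aemeasurable
  have hac : IndepFun a c P := hacd.comp measurable_id measurable_fst
  rw [indepFun_iff_map_prod_eq_prod_map_map (by fun_prop) (by fun_prop)] at hac hcd hacd ⊢
  rw [hcd] at hacd
  have hassoc : (fun ω ↦ ((a ω, c ω), d ω)) =
      MeasurableEquiv.prodAssoc.symm ∘ fun ω ↦ (a ω, (c ω, d ω)) := rfl
  rw [hassoc, ← Measure.map_map (by fun_prop) (by fun_prop), hacd, hac, ← Measure.prodAssoc_prod,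
    Measure.map_map (by fun_prop) (by fun_prop)]
  simp

end Independence

section Coordinates

lemma measurableEmbedding_repr [SecondCountableTopology H] [MeasurableSpace H] [BorelSpace H]
    (e : HilbertBasis ℕ ℝ H) : MeasurableEmbedding fun (u : H) (j : ℕ) ↦ e.repr u j := by
  refine Continuous.measurableEmbedding (continuous_pi fun j ↦ ?_) fun u v huv ↦ ?_
  · simp only [e.repr_apply_apply]
    fun_prop
  · exact e.repr.injective (lp.ext huv)

lemma measurable_of_measurable_repr [SecondCountableTopology H] [MeasurableSpace H] [BorelSpace H]
    (e : HilbertBasis ℕ ℝ H) {Ω : Type*} {_ : MeasurableSpace Ω} {ζ : Ω → H}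
    (hζ : ∀ j, Measurable fun ω ↦ e.repr (ζ ω) j) : Measurable ζ :=
  (measurableEmbedding_repr e).measurable_comp_iff.1 (measurable_pi_iff.2 hζ)

variable {E : Type} [NormedAddCommGroup E] [InnerProductSpace ℝ E] (e : HilbertBasis ℕ ℝ E)

lemma repr_eq_of_hasSum {a : ℕ → ℝ} {u : E}
    (h : HasSum (fun j ↦ a j • e j) u) (j : ℕ) : e.repr u j = a j := by
  have hinner := (innerSL ℝ (e j)).hasSum h
  simp only [innerSL_apply_apply, inner_smul_right, orthonormal_iff_ite.1 e.orthonormal, mul_ite,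
    mul_one, mul_zero] at hinner
  rw [e.repr_apply_apply, hinner.unique (hasSum_single j fun i hi ↦ if_neg hi.symm), if_pos rfl]

lemma hasSum_repr_sq (u : E) :
    HasSum (fun j ↦ e.repr u j ^ 2) (‖u‖ ^ 2) := by
  simpa only [real_inner_self_eq_norm_sq, e.repr_apply_apply, ← sq, real_inner_comm u] using
    e.hasSum_inner_mul_inner u u

lemma abs_repr_le_norm (u : E) (j : ℕ) : |e.repr u j| ≤ ‖u‖ := by
  simpa [e.repr_apply_apply, e.orthonormal.1 j] using abs_real_inner_le_norm (e j) u

lemma projB_succ (N : ℕ) (u : E) :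
    projB e (N + 1) u = projB e N u + e.repr u N • e N :=
  Finset.sum_range_succ _ _

lemma norm_sq_le_of_abs_le {b x : ℕ → ℝ} {u : E}
    (hb : Summable fun j ↦ b j ^ 2) (hu : ∀ j, e.repr u j = b j * x j) {N : ℕ} {δ : ℝ}
    (hx : ∀ j, |x j| ≤ 1) (hxδ : ∀ j < N, |x j| ≤ δ) :
    ‖u‖ ^ 2 ≤ δ ^ 2 * ∑ j ∈ Finset.range N, b j ^ 2 + ∑' j, b (j + N) ^ 2 := by
  have hsum := hasSum_repr_sq e u
  simp only [hu, mul_pow] at hsum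
  have hcoord {j : ℕ} {ε : ℝ} (hε : |x j| ≤ ε) : b j ^ 2 * x j ^ 2 ≤ ε ^ 2 * b j ^ 2 := by
    rw [mul_comm, ← sq_abs (x j)]
    gcongr
  rw [← hsum.tsum_eq, ← hsum.summable.sum_add_tsum_nat_add N, Finset.mul_sum]
  refine add_le_add (Finset.sum_le_sum fun j hj ↦ hcoord (hxδ j (Finset.mem_range.1 hj)))
    (Summable.tsum_le_tsum (fun j ↦ ?_) ((summable_nat_add_iff N).2 hsum.summable)
      ((summable_nat_add_iff N).2 hb))
  simpa using hcoord (hx (j + N))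

end Coordinates

lemma ae_mem_msupp {X : Type*} [TopologicalSpace X] [SecondCountableTopology X]
    [MeasurableSpace X] (μ : Measure X) : ∀ᵐ x ∂μ, x ∈ msupp μ := by
  have hsupp : msupp μ = μ.support := Set.ext fun x ↦ (Measure.mem_support_iff_forall x).symm
  exact hsupp ▸ Measure.support_mem_ae

namespace CondD

section Coordinates

variable {E : Type} [NormedAddCommGroup E] [InnerProductSpace ℝ E] [MeasurableSpace E]
  {Ω : Type*} [MeasurableSpace Ω] {P : Measure Ω} {e : HilbertBasis ℕ ℝ E} {η : ℕ → Ω → E}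
  {b : ℕ → ℝ} {ξ : ℕ → ℕ → Ω → ℝ} {p : ℕ → ℝ → ℝ}

lemma measurable_coord (hD : CondD P e η b ξ p) (j k : ℕ) : Measurable (ξ j k) := hD.2.2.2.1 j k

lemma iIndepFun_coord (hD : CondD P e η b ξ p) : iIndepFun (fun jk : ℕ × ℕ ↦ ξ jk.1 jk.2) P :=
  hD.2.2.2.2.1

lemma iIndepFun_coord_slice (hD : CondD P e η b ξ p) (k : ℕ) : iIndepFun (fun j ↦ ξ j k) P :=
  hD.iIndepFun_coord.precomp (g := fun j : ℕ ↦ (j, k)) fun _ _ h ↦ (Prod.mk.inj h).1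

lemma map_coord (hD : CondD P e η b ξ p) (j k : ℕ) :
    P.map (ξ j k) = volume.withDensity fun x ↦ ENNReal.ofReal (p j x) := hD.2.2.2.2.2.1 j k

lemma exists_lipschitzWith (hD : CondD P e η b ξ p) (j : ℕ) : ∃ L : ℝ≥0, LipschitzWith L (p j) :=
  hD.2.2.2.2.2.2.1 j

lemma density_zero_pos (hD : CondD P e η b ξ p) (j : ℕ) : 0 < p j 0 := hD.2.2.2.2.2.2.2.1 j

lemma support_density_subset (hD : CondD P e η b ξ p) (j : ℕ) :
    Function.support (p j) ⊆ Set.Icc (-1) 1 := hD.2.2.2.2.2.2.2.2 j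

lemma repr_noise (hD : CondD P e η b ξ p) (k : ℕ) (ω : Ω) (j : ℕ) :
    e.repr (η k ω) j = b j * ξ j k ω :=
  repr_eq_of_hasSum e (hD.2.2.1 k ω) j

lemma ae_abs_coord_le_one (hD : CondD P e η b ξ p) (j k : ℕ) : ∀ᵐ ω ∂P, |ξ j k ω| ≤ 1 := by
  obtain ⟨L, hL⟩ := hD.exists_lipschitzWith j
  refine ae_of_ae_map (p := fun x ↦ |x| ≤ 1) (hD.measurable_coord j k).aemeasurable ?_
  rw [hD.map_coord, ae_withDensity_iff hL.continuous.measurable.ennreal_ofReal]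
  refine Eventually.of_forall fun x hx ↦ abs_le.2 (hD.support_density_subset j fun hpx ↦ hx ?_)
  rw [hpx, ENNReal.ofReal_zero]

lemma measure_coord_mem_ball_ne_zero (hD : CondD P e η b ξ p) (j k : ℕ) {δ : ℝ} (hδ : 0 < δ) :
    P (ξ j k ⁻¹' Metric.ball 0 δ) ≠ 0 := by
  obtain ⟨L, hL⟩ := hD.exists_lipschitzWith j
  rw [← Measure.map_apply (hD.measurable_coord j k) measurableSet_ball, hD.map_coord,
    Ne, withDensity_apply_eq_zero hL.continuous.measurable.ennreal_ofReal]
  simp only [ne_eq, ENNReal.ofReal_eq_zero, not_le]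
  have hopen : IsOpen ({x | 0 < p j x} ∩ Metric.ball 0 δ) :=
    (isOpen_lt continuous_const hL.continuous).inter Metric.isOpen_ball
  exact (hopen.measure_pos volume ⟨0, hD.density_zero_pos j, Metric.mem_ball_self hδ⟩).ne'

lemma zero_mem_msupp [BorelSpace E] (hD : CondD P e η b ξ p) (hη : ∀ k, Measurable (η k)) (k : ℕ) :
    (0 : E) ∈ msupp (P.map (η k)) := by
  intro U hU
  obtain ⟨r, hr, hrU⟩ := Metric.mem_nhds_iff.1 hU
  refine lt_of_lt_of_le ?_ (measure_mono hrU)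
  rw [Measure.map_apply (hη k) measurableSet_ball]
  have hr2 : (0 : ℝ) < r ^ 2 / 2 := by positivity
  obtain ⟨N, hN⟩ := ((tendsto_sum_nat_add fun j ↦ b j ^ 2).eventually_lt_const hr2).exists
  obtain ⟨δ, hδs, hδ⟩ : ∃ δ : ℝ, δ ^ 2 * ∑ j ∈ Finset.range N, b j ^ 2 < r ^ 2 / 2 ∧ 0 < δ := by
    have hcont : Continuous fun δ : ℝ ↦ δ ^ 2 * ∑ j ∈ Finset.range N, b j ^ 2 := by fun_prop
    have hev := (hcont.tendsto 0).eventually_lt_const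
      (show (0 : ℝ) ^ 2 * ∑ j ∈ Finset.range N, b j ^ 2 < r ^ 2 / 2 by simpa using hr2)
    exact ((hev.filter_mono nhdsWithin_le_nhds).and (self_mem_nhdsWithin (s := Set.Ioi 0))).exists
  have hpos : P (⋂ j ∈ Finset.range N, ξ j k ⁻¹' Metric.ball 0 δ) ≠ 0 := by
    rw [(hD.iIndepFun_coord_slice k).measure_inter_preimage_eq_mul (Finset.range N)
      (sets := fun _ ↦ Metric.ball 0 δ) fun _ _ ↦ measurableSet_ball]
    exact Finset.prod_ne_zero_iff.2 fun j _ ↦ hD.measure_coord_mem_ball_ne_zero j k hδ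
  refine (pos_iff_ne_zero.2 hpos).trans_le (measure_mono_ae ?_)
  filter_upwards [ae_all_iff.2 fun j ↦ hD.ae_abs_coord_le_one j k] with ω hω hsmall
  have hcoord (j : ℕ) (hj : j < N) : |ξ j k ω| ≤ δ := by
    simpa using (mem_ball_zero_iff.1 (Set.mem_iInter₂.1 hsmall j (Finset.mem_range.2 hj))).le
  have hnorm := norm_sq_le_of_abs_le e hD.2.1 (hD.repr_noise k ω) hω hcoord
  exact mem_ball_zero_iff.2 (lt_of_pow_lt_pow_left₀ 2 hr.le (by linarith))

end Coordinates

variable [SecondCountableTopology H] [MeasurableSpace H] [BorelSpace H] {Ω : Type*}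
  [MeasurableSpace Ω] {P : Measure Ω} {e : HilbertBasis ℕ ℝ H} {η : ℕ → Ω → H} {b : ℕ → ℝ}
  {ξ : ℕ → ℕ → Ω → ℝ} {p : ℕ → ℝ → ℝ}

lemma map_noise_eq (hD : CondD P e η b ξ p) (hη : ∀ k, Measurable (η k)) (k l : ℕ) :
    P.map (η k) = P.map (η l) := by
  have hemb := measurableEmbedding_repr e
  have hcoords (k : ℕ) : (P.map (η k)).map (fun (u : H) (j : ℕ) ↦ e.repr u j) =
      Measure.infinitePi fun j ↦ (volume.withDensity fun x ↦ ENNReal.ofReal (p j x)).map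
        fun x ↦ b j * x := by
    have hind : iIndepFun (fun j ω ↦ b j * ξ j k ω) P :=
      (hD.iIndepFun_coord_slice k).comp (fun j x ↦ b j * x) fun j ↦ measurable_const_mul (b j)
    rw [Measure.map_map hemb.measurable (hη k)]
    simp only [Function.comp_def, hD.repr_noise,
      hind.map_fun_eq_infinitePi_map fun j ↦ (hD.measurable_coord j k).const_mul (b j),
      ← hD.map_coord _ k]
    congr 1
    funext j
    exact (Measure.map_map (measurable_const_mul _) (hD.measurable_coord j k)).symm
  rw [← hemb.comap_map (P.map (η k)), hcoords k, ← hcoords l, hemb.comap_map]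

lemma ae_noise_mem_msupp (hD : CondD P e η b ξ p) (hη : ∀ k, Measurable (η k)) (k l : ℕ) :
    ∀ᵐ ω ∂P, η k ω ∈ msupp (P.map (η l)) :=
  ae_of_ae_map (hη k).aemeasurable (hD.map_noise_eq hη k l ▸ ae_mem_msupp _)

lemma measurable_noise_generatedBy (hD : CondD P e η b ξ p) {k : ℕ} {T : Set (ℕ × ℕ)}
    (hT : ∀ j, (j, k) ∈ T) : Measurable[generatedBy (fun jk ↦ ξ jk.1 jk.2) T] (η k) := by
  refine measurable_of_measurable_repr e fun j ↦ ?_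
  simp only [hD.repr_noise]
  exact (measurable_const_mul (b j)).comp
    (measurable_generatedBy (fun jk : ℕ × ℕ ↦ ξ jk.1 jk.2) (hT j))

lemma indepFun_noise_lt (hD : CondD P e η b ξ p) (N : ℕ) :
    IndepFun (fun ω (i : Fin N) ↦ η i ω) (η N) P := by
  refine indepFun_of_measurable_generatedBy (fun jk : ℕ × ℕ ↦ hD.measurable_coord jk.1 jk.2)
    hD.iIndepFun_coord (T := {jk | jk.2 < N}) (T' := {jk | jk.2 = N})
    (Set.disjoint_left.2 fun _ hlt heq ↦ hlt.ne heq)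
    (@measurable_pi_iff _ _ _ (generatedBy _ _) _ _ |>.2 fun i ↦ ?_)
    (hD.measurable_noise_generatedBy fun _ ↦ rfl)
  exact hD.measurable_noise_generatedBy fun _ ↦ i.2

lemma indepFun_noise_sub_coord (hD : CondD P e η b ξ p) (j k : ℕ) :
    IndepFun (fun ω ↦ η k ω - (b j * ξ j k ω) • e j) (ξ j k) P := by
  have hrepr (i : ℕ) (ω : Ω) : e.repr (η k ω - (b j * ξ j k ω) • e j) i =
      if i = j then 0 else b i * ξ i k ω := by
    rw [map_sub, map_smul, e.repr_self, lp.coeFn_sub, lp.coeFn_smul, Pi.sub_apply, Pi.smul_apply,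
      hD.repr_noise]
    split_ifs with hij
    · subst hij
      simp
    · simp [hij]
  have hmeas : Measurable[generatedBy (fun jk : ℕ × ℕ ↦ ξ jk.1 jk.2) {(j, k)}ᶜ]
      fun ω ↦ η k ω - (b j * ξ j k ω) • e j := by
    refine measurable_of_measurable_repr e fun i ↦ ?_
    simp only [hrepr]
    split_ifs with hij
    · exact measurable_const
    · exact (measurable_const_mul (b i)).comp (measurable_generatedBy
        (fun jk : ℕ × ℕ ↦ ξ jk.1 jk.2) (T := {(j, k)}ᶜ)
        fun h ↦ hij (Prod.mk.inj h).1)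
  exact indepFun_of_measurable_generatedBy (fun jk : ℕ × ℕ ↦ hD.measurable_coord jk.1 jk.2)
    hD.iIndepFun_coord disjoint_compl_left hmeas
    (measurable_generatedBy (fun jk : ℕ × ℕ ↦ ξ jk.1 jk.2) (Set.mem_singleton (j, k)))

variable [IsProbabilityMeasure P]

lemma exists_shiftBound_smul (hD : CondD P e η b ξ p) (hη : ∀ k, Measurable (η k)) {j : ℕ}
    (hb : b j ≠ 0) (k : ℕ) :
    ∃ C : ℝ≥0, ∀ c : ℝ, ShiftBound (P.map (η k)) (c • e j) (ENNReal.ofReal (C * |c|)) := by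
  obtain ⟨L, hL⟩ := hD.exists_lipschitzWith j
  refine ⟨2 * L / ‖b j‖₊, fun c ↦ ?_⟩
  have hξ := hD.measurable_coord j k
  have hshift : ShiftBound (P.map (ξ j k)) (c / b j) (ENNReal.ofReal (L * |c / b j|) * 2) := by
    have h := shiftBound_withDensity hL measurableSet_Icc (hD.support_density_subset j) (c / b j)
    rw [Real.volume_Icc, sub_neg_eq_add, one_add_one_eq_two, ENNReal.ofReal_ofNat] at h
    rwa [hD.map_coord]
  have h := shiftBound_map_add_smul ((hη k).sub ((hξ.const_mul (b j)).smul_const (e j))) hξ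
    (hD.indepFun_noise_sub_coord j k) (b j • e j) hshift
  simp only [smul_smul, div_mul_cancel₀ _ hb, mul_comm _ (b j), Pi.sub_apply, sub_add_cancel] at h
  refine h.mono (le_of_eq ?_)
  rw [← ENNReal.ofReal_ofNat, ← ENNReal.ofReal_mul (by positivity), abs_div]
  congr 1
  push_cast
  rw [Real.norm_eq_abs]
  ring

lemma exists_shiftBound_projB (hD : CondD P e η b ξ p) (hη : ∀ k, Measurable (η k))
    (hb : ∀ j, b j ≠ 0) (k N : ℕ) :
    ∃ C : ℝ≥0, ∀ u : H, ShiftBound (P.map (η k)) (projB e N u) (ENNReal.ofReal (C * ‖u‖)) := by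
  induction N with
  | zero => exact ⟨0, fun u ↦ (ShiftBound.zero _).mono zero_le⟩
  | succ N ih =>
    obtain ⟨C, hC⟩ := ih
    obtain ⟨C', hC'⟩ := hD.exists_shiftBound_smul hη (hb N) k
    refine ⟨C + C', fun u ↦ ?_⟩
    rw [projB_succ]
    refine ((hC u).add (hC' (e.repr u N))).mono ?_
    rw [← ENNReal.ofReal_add (by positivity) (by positivity), NNReal.coe_add, add_mul]
    gcongr
    exact abs_repr_le_norm e u N

end CondD

section Trajectory

lemma measurable_traj {E : Type} [NormedAddCommGroup E] [SecondCountableTopology E]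
    [MeasurableSpace E] [BorelSpace E] {Ω : Type*} [MeasurableSpace Ω] {S : E → E}
    {η : ℕ → Ω → E} {u₀ : Ω → E} (hη : ∀ k, Measurable (η k)) (hS : Continuous S)
    (hu₀ : Measurable u₀) (k : ℕ) : Measurable (traj S η u₀ k) := by
  induction k with
  | zero => exact hu₀
  | succ k ih => exact (hS.measurable.comp ih).add (hη _)

lemma measurable_traj_comap {E : Type} [NormedAddCommGroup E] [SecondCountableTopology E]
    [MeasurableSpace E] [BorelSpace E] {Ω : Type*} {S : E → E} {η : ℕ → Ω → E} {u₀ : Ω → E}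
    (hS : Continuous S) {N k : ℕ} (hk : k < N) :
    Measurable[MeasurableSpace.comap (fun ω ↦ (u₀ ω, fun i : Fin N ↦ η i ω)) inferInstance]
      (traj S η u₀ k) := by
  let past : Ω → E × (Fin N → E) := fun ω ↦ (u₀ ω, fun i ↦ η i ω)
  have hpair : Measurable[MeasurableSpace.comap past inferInstance] past := comap_measurable past
  induction k with
  | zero => exact measurable_fst.comp hpair
  | succ k ih =>
    have hnoise : Measurable[MeasurableSpace.comap past inferInstance] (η (k + 1)) :=
      ((measurable_pi_apply (⟨k + 1, hk⟩ : Fin N)).comp measurable_snd).comp hpair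
    exact (hS.measurable.comp (ih (Nat.lt_of_succ_lt hk))).add hnoise

lemma indepFun_traj_segments [SecondCountableTopology H] [MeasurableSpace H] [BorelSpace H]
    {Ω : Type*} [MeasurableSpace Ω] {S : H → H} {η : ℕ → Ω → H} {u₀ : Ω → H} {P : Measure Ω}
    [IsProbabilityMeasure P] {e : HilbertBasis ℕ ℝ H} {b : ℕ → ℝ} {ξ : ℕ → ℕ → Ω → ℝ}
    {p : ℕ → ℝ → ℝ} (hD : CondD P e η b ξ p) (hη : ∀ k, Measurable (η k)) (hS : Continuous S)
    (hu₀ : Measurable u₀) (hindep : IndepFun u₀ (fun ω (k : ℕ) ↦ η k ω) P) (m n : ℕ) :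
    IndepFun (fun ω (i : Fin (n + 1)) (j : Fin (m + 1)) ↦ traj S η u₀ (i + j) ω)
      (η (n + (m + 1))) P := by
  set N := n + (m + 1)
  have hsplit : Measurable fun g : ℕ → H ↦ ((fun i : Fin N ↦ g i), g N) := by fun_prop
  have hpast : IndepFun (fun ω ↦ (u₀ ω, fun i : Fin N ↦ η i ω)) (η N) P :=
    indepFun_prodMk_left hu₀ (measurable_pi_iff.2 fun i ↦ hη i) (hη N)
      (hindep.comp measurable_id hsplit) (hD.indepFun_noise_lt N)
  refine indep_of_indep_of_le_left hpast (Measurable.comap_le ?_)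
  exact @measurable_pi_lambda _ _ _ (_) _ _ fun i ↦ @measurable_pi_lambda _ _ _ (_) _ _ fun j ↦
    measurable_traj_comap hS (by omega)

end Trajectory

/-! ### The domain of attainability -/

section Attainability

variable {E : Type*} [AddCommGroup E] {S : E → E} {K B : Set E}

lemma monotone_attain (hB : B ⊆ S '' B + K) : Monotone (attain S K B) := by
  refine monotone_nat_of_le_succ fun n ↦ ?_
  induction n with
  | zero => exact hB
  | succ n ih => exact Set.add_subset_add_right (Set.image_mono ih)

variable [TopologicalSpace E]

lemma attain_subset_attainDom (n : ℕ) : attain S K B n ⊆ attainDom S K B :=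
  (Set.subset_iUnion _ n).trans subset_closure

lemma image_attainDom_add_subset [ContinuousAdd E] (hS : Continuous S) :
    S '' attainDom S K B + K ⊆ attainDom S K B := by
  rintro _ ⟨_, ⟨u, hu, rfl⟩, z, hz, rfl⟩
  refine map_mem_closure (f := fun u ↦ S u + z) (by fun_prop) hu fun v hv ↦ ?_
  obtain ⟨n, hn⟩ := Set.mem_iUnion.1 hv
  exact Set.mem_iUnion.2 ⟨n + 1, Set.add_mem_add (Set.mem_image_of_mem S hn) hz⟩

end Attainability

lemma isCompact_attainDom {E : Type*} [NormedAddCommGroup E] [CompleteSpace E] {S : E → E}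
    {K B : Set E} (hB : IsCompact B) (hK : IsCompact K)
    (hS : TotallyBounded (S '' attainDom S K B)) : IsCompact (attainDom S K B) := by
  have hclosure : IsCompact (closure (S '' attainDom S K B)) :=
    hS.closure.isCompact_of_isClosed isClosed_closure
  have hunion := hB.union (hclosure.add hK)
  refine hunion.of_isClosed_subset isClosed_closure
    (closure_minimal (Set.iUnion_subset fun n ↦ ?_) hunion.isClosed)
  cases n with
  | zero => exact Set.subset_union_left
  | succ n =>
    refine Set.subset_union_of_subset_right (Set.add_subset_add_right ?_) _
    exact (Set.image_mono (attain_subset_attainDom n)).trans subset_closure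

lemma totallyBounded_of_norm_sub_projB_le {E : Type} [NormedAddCommGroup E]
    [InnerProductSpace ℝ E] (e : HilbertBasis ℕ ℝ E) {T : Set E} (hT : Bornology.IsBounded T)
    (hproj : ∀ ε > 0, ∃ N, ∀ u ∈ T, ‖u - projB e N u‖ ≤ ε) : TotallyBounded T := by
  obtain ⟨R, hR⟩ := hT.exists_norm_le
  rw [Metric.totallyBounded_iff]
  intro ε hε
  obtain ⟨N, hN⟩ := hproj (ε / 2) (half_pos hε)
  have hcompact : IsCompact ((fun a : ℕ → ℝ ↦ ∑ j ∈ Finset.range N, a j • e j) ''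
      Set.univ.pi fun _ ↦ Set.Icc (-R) R) :=
    (isCompact_univ_pi fun _ ↦ isCompact_Icc).image (by fun_prop)
  obtain ⟨t, ht, hcover⟩ := Metric.totallyBounded_iff.1 hcompact.totallyBounded _ (half_pos hε)
  refine ⟨t, ht, fun u hu ↦ ?_⟩
  have hmem := hcover ⟨e.repr u, fun j _ ↦ abs_le.1 ((abs_repr_le_norm e u j).trans (hR u hu)), rfl⟩
  simp only [Set.mem_iUnion, Metric.mem_ball, exists_prop] at hmem ⊢
  obtain ⟨y, hy, hdist⟩ := hmem
  refine ⟨y, hy, ?_⟩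
  calc dist u y ≤ dist u (projB e N u) + dist (projB e N u) y := dist_triangle _ _ _
    _ < ε / 2 + ε / 2 := add_lt_add_of_le_of_lt (dist_eq_norm u _ ▸ hN u hu) hdist
    _ = ε := add_halves ε

/-! ### Segments of trajectories -/

section Segments

variable {E : Type*} [AddCommGroup E] {S : E → E} {K A : Set E} {m : ℕ}

/-- The dynamics induced on segments of length `m + 1`: drop the first state and append the image
of the last one, perturbed by `g`. -/
def segmentStep (S : E → E) (m : ℕ) (w : Fin (m + 1) → E) (g : E) : Fin (m + 1) → E :=
  Fin.snoc (Fin.tail w) (S (w (Fin.last m)) + g)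

lemma segmentStep_castSucc (w : Fin (m + 1) → E) (g : E) (i : Fin m) :
    segmentStep S m w g i.castSucc = w i.succ :=
  Fin.snoc_castSucc (α := fun _ ↦ E) _ _ i

lemma segmentStep_last (w : Fin (m + 1) → E) (g : E) :
    segmentStep S m w g (Fin.last m) = S (w (Fin.last m)) + g :=
  Fin.snoc_last (α := fun _ ↦ E) _ _

lemma segmentStep_segment {t : ℕ → E} {n : ℕ} {g : E} (ht : t (n + m + 1) = S (t (n + m)) + g) :
    segmentStep S m (fun i ↦ t (n + i)) g = fun i : Fin (m + 1) ↦ t (n + 1 + i) := by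
  funext i
  induction i using Fin.lastCases with
  | last => simp only [segmentStep_last, Fin.val_last, ← ht, add_right_comm]
  | cast i =>
    simp only [segmentStep_castSucc, Fin.val_succ, Fin.val_castSucc, add_assoc, add_comm 1]

lemma apply_eq_last_of_segmentStep {X : ℕ → Fin (m + 1) → E} {c : ℕ → E}
    (hX : ∀ n, X (n + 1) = segmentStep S m (X n) (c n)) (n : ℕ) (i : Fin (m + 1)) :
    X (n + m) i = X (n + i) (Fin.last m) := by
  have hdiag : X (n + i + (m - i)) i = X (n + i) (Fin.last m) := by
    generalize n + i = k
    induction i using Fin.reverseInduction with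
    | last => simp
    | cast i ih =>
      have hi : m - (i.castSucc : ℕ) = m - (i.succ : ℕ) + 1 := by
        simp only [Fin.val_castSucc, Fin.val_succ]
        omega
      rw [hi, ← add_assoc, hX, segmentStep_castSucc, ih]
  rwa [show n + i + (m - i) = n + m by omega] at hdiag

lemma mem_attainM_succ_iff [TopologicalSpace E] {w : Fin (m + 1) → E} :
    w ∈ attainM S K A (m + 1) ↔ w 0 ∈ A ∧ ∀ i : Fin m, w i.succ - S (w i.castSucc) ∈ K := by
  refine and_congr ⟨fun h ↦ h m.succ_pos, fun h _ ↦ h⟩ ⟨fun h i ↦ ?_, fun h i hi ↦ ?_⟩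
  · obtain ⟨z, hz, heq⟩ := h i (Nat.succ_lt_succ i.2)
    rwa [show w i.succ = S (w i.castSucc) + z from heq, add_sub_cancel_left]
  · exact ⟨_, h ⟨i, Nat.lt_of_succ_lt_succ hi⟩, (add_sub_cancel _ _).symm⟩

lemma apply_mem_of_mem_attainM [TopologicalSpace E] (hA : S '' A + K ⊆ A) {w : Fin (m + 1) → E}
    (hw : w ∈ attainM S K A (m + 1)) (i : Fin (m + 1)) : w i ∈ A := by
  rw [mem_attainM_succ_iff] at hw
  induction i using Fin.induction with
  | zero => exact hw.1
  | succ i ih =>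
    rw [← add_sub_cancel (S (w i.castSucc)) (w i.succ)]
    exact hA (Set.add_mem_add (Set.mem_image_of_mem S ih) (hw.2 i))

lemma mapsTo_segmentStep_attainM [TopologicalSpace E] (hA : S '' A + K ⊆ A) :
    Set.MapsTo (Function.uncurry (segmentStep S m)) (attainM S K A (m + 1) ×ˢ K)
      (attainM S K A (m + 1)) := by
  rintro ⟨w, g⟩ ⟨hw, hg⟩
  have hwA := apply_mem_of_mem_attainM hA hw
  rw [Function.uncurry_apply_pair, mem_attainM_succ_iff]
  have hstep (i : Fin (m + 1)) : segmentStep S m w g i ∈ A := by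
    induction i using Fin.lastCases with
    | last =>
      rw [segmentStep_last]
      exact hA (Set.add_mem_add (Set.mem_image_of_mem S (hwA _)) hg)
    | cast i => exact segmentStep_castSucc (S := S) w g i ▸ hwA _
  refine ⟨hstep 0, fun i ↦ ?_⟩
  cases m with
  | zero => exact i.elim0
  | succ m =>
    induction i using Fin.lastCases with
    | last => rwa [Fin.succ_last, segmentStep_last, segmentStep_castSucc, Fin.succ_last,
        add_sub_cancel_left]
    | cast i =>
      rw [Fin.succ_castSucc, segmentStep_castSucc, segmentStep_castSucc, Fin.succ_castSucc]
      exact (mem_attainM_succ_iff.1 hw).2 i.succ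

variable [TopologicalSpace E] [IsTopologicalAddGroup E]

lemma continuous_segmentStep (hS : Continuous S) (m : ℕ) :
    Continuous (Function.uncurry (segmentStep S m)) := by
  unfold segmentStep Function.uncurry Fin.tail
  fun_prop

lemma isCompact_attainM [T2Space E] (hS : Continuous S) (hA : S '' A + K ⊆ A)
    (hAc : IsCompact A) (hKc : IsCompact K) : IsCompact (attainM S K A (m + 1)) := by
  refine (isCompact_univ_pi fun _ ↦ hAc).of_isClosed_subset ?_
    fun w hw i _ ↦ apply_mem_of_mem_attainM hA hw i
  have hset : attainM S K A (m + 1) = (fun w ↦ w 0) ⁻¹' A ∩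
      ⋂ i : Fin m, (fun w ↦ w i.succ - S (w i.castSucc)) ⁻¹' K := by
    ext w
    simp [mem_attainM_succ_iff]
  rw [hset]
  exact (hAc.isClosed.preimage (by fun_prop)).inter
    (isClosed_iInter fun i ↦ hKc.isClosed.preimage (by fun_prop))

end Segments

/-! ### Irreducibility -/

section Irreducibility

variable {W G : Type*}

/-- The state lies in `A ∩ O` at time `τ` with probability at least `p` when started from `w`,
expressed through the Markov operator as in `UniformlyIrreducibleOn`. -/
def HittingBound [MeasurableSpace G] (ν : Measure G) (φ : W → G → W) (A O : Set W) (τ : ℕ) (p : ℝ)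
    (w : W) : Prop :=
  ∀ (f : W → ℝ≥0∞) (c : ℝ≥0∞), (∀ x ∈ A, x ∈ O → c ≤ f x) →
    ENNReal.ofReal p * c ≤ (markovOp ν φ)^[τ] f w

/-- At every large time the set `O` can be reached from each point of `A` by controls in `K`. -/
def EventuallyReachable (φ : W → G → W) (K : Set G) (A O : Set W) : Prop :=
  ∃ τ₀ : ℕ, ∀ τ ≥ τ₀, ∀ w ∈ A, ∃ l : List G, l.length = τ ∧ (∀ g ∈ l, g ∈ K) ∧ l.foldl φ w ∈ O

lemma HittingBound.mono [MeasurableSpace G] {ν : Measure G} {φ : W → G → W} {A O O' : Set W}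
    {τ : ℕ} {p p' : ℝ} {w : W} (h : HittingBound ν φ A O τ p w) (hO : O ⊆ O') (hp : p' ≤ p) :
    HittingBound ν φ A O' τ p' w := fun f c hc ↦
  le_trans (by gcongr) (h f c fun x hxA hxO ↦ hc x hxA (hO hxO))

variable [TopologicalSpace W] [TopologicalSpace G] {φ : W → G → W} {K : Set G} {A : Set W}

lemma continuous_foldl (hφ : Continuous (Function.uncurry φ)) (l : List G) :
    Continuous fun w ↦ l.foldl φ w := by
  induction l with
  | nil => exact continuous_id
  | cons g l ih => exact ih.comp (hφ.comp (Continuous.prodMk_left g))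

lemma eventuallyReachable_of_attractor (hφ : Continuous (Function.uncurry φ)) {g₀ : G}
    (hg₀ : g₀ ∈ K) {o : W}
    (hattr : ∀ U ∈ 𝓝 o, ∀ᶠ n in atTop, ∀ w ∈ A, (fun w ↦ φ w g₀)^[n] w ∈ U) {w' : W}
    (hw' : w' ∈ closure {y | ∃ l : List G, (∀ g ∈ l, g ∈ K) ∧ l.foldl φ o = y})
    {O : Set W} (hO : O ∈ 𝓝 w') : EventuallyReachable φ K A O := by
  obtain ⟨_, hlO, l, hl, rfl⟩ := mem_closure_iff_nhds.1 hw' _ (interior_mem_nhds.2 hO)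
  have hU := (continuous_foldl hφ l).continuousAt.preimage_mem_nhds
    (isOpen_interior.mem_nhds hlO)
  obtain ⟨n₀, hn₀⟩ := eventually_atTop.1 (hattr _ hU)
  refine ⟨n₀ + l.length, fun τ hτ w hw ↦ ⟨List.replicate (τ - l.length) g₀ ++ l, ?_, ?_, ?_⟩⟩
  · rw [List.length_append, List.length_replicate]
    omega
  · intro g hg
    obtain hg | hg := List.mem_append.1 hg
    · exact List.eq_of_mem_replicate hg ▸ hg₀
    · exact hl g hg
  · have hiter (n : ℕ) : (List.replicate n g₀).foldl φ w = (fun w ↦ φ w g₀)^[n] w := by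
      induction n with
      | zero => rfl
      | succ n ih => rw [List.replicate_succ', List.foldl_append, ih, Function.iterate_succ_apply']
                     rfl
    rw [List.foldl_append, hiter]
    exact interior_subset (hn₀ _ (by omega) w hw)

variable [MeasurableSpace G] [OpensMeasurableSpace G] {ν : Measure G} [IsProbabilityMeasure ν]

lemma exists_nhds_hittingBound (hφ : Continuous (Function.uncurry φ)) (hνK : ∀ᵐ g ∂ν, g ∈ K)
    (hKν : K ⊆ msupp ν) (hA : Set.MapsTo (Function.uncurry φ) (A ×ˢ K) A) {O : Set W}
    (hO : IsOpen O) {l : List G} (hl : ∀ g ∈ l, g ∈ K) {w : W} (hw : l.foldl φ w ∈ O) :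
    ∃ U ∈ 𝓝 w, ∃ p : ℝ, 0 < p ∧ ∀ x ∈ A ∩ U, HittingBound ν φ A O l.length p x := by
  induction l generalizing w with
  | nil => exact ⟨O, hO.mem_nhds hw, 1, one_pos, fun x hx f c hc ↦ by simpa using hc x hx.1 hx.2⟩
  | cons g l ih =>
    obtain ⟨U, hU, p, hp, hhit⟩ := ih (fun g' hg' ↦ hl g' (List.mem_cons_of_mem g hg')) hw
    have hprod := hφ.continuousAt.preimage_mem_nhds (x := (w, g)) hU
    rw [nhds_prod_eq, mem_prod_iff] at hprod
    obtain ⟨U', hU', N, hN, hUN⟩ := hprod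
    obtain ⟨N', hN'N, hN'o, hgN'⟩ := mem_nhds_iff.1 hN
    have hνN : 0 < ν.real N' :=
      ENNReal.toReal_pos (hKν (hl g List.mem_cons_self) N' (hN'o.mem_nhds hgN')).ne'
        (measure_ne_top _ _)
    refine ⟨U', hU', p * ν.real N', by positivity, fun x hx f c hc ↦ ?_⟩
    rw [List.length_cons, Function.iterate_succ_apply', ENNReal.ofReal_mul hp.le,
      ofReal_measureReal]
    calc ENNReal.ofReal p * ν N' * c = ∫⁻ g, N'.indicator (fun _ ↦ ENNReal.ofReal p * c) g ∂ν := by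
          rw [lintegral_indicator_const hN'o.measurableSet, mul_right_comm]
      _ ≤ _ := by
        refine lintegral_mono_ae (hνK.mono fun g hg ↦ ?_)
        by_cases hgN : g ∈ N'
        · rw [Set.indicator_of_mem hgN]
          exact hhit _ ⟨hA (Set.mk_mem_prod hx.1 hg), hUN (Set.mk_mem_prod hx.2 (hN'N hgN))⟩ f c hc
        · rw [Set.indicator_of_notMem hgN]
          exact zero_le

lemma EventuallyReachable.exists_hittingBound (hφ : Continuous (Function.uncurry φ))
    (hνK : ∀ᵐ g ∂ν, g ∈ K) (hKν : K ⊆ msupp ν)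
    (hA : Set.MapsTo (Function.uncurry φ) (A ×ˢ K) A) (hAc : IsCompact A) {O : Set W}
    (hO : IsOpen O) (hreach : EventuallyReachable φ K A O) :
    ∃ τ₀ : ℕ, ∀ τ ≥ τ₀, ∃ p : ℝ, 0 < p ∧ ∀ w ∈ A, HittingBound ν φ A O τ p w := by
  obtain ⟨τ₀, hτ₀⟩ := hreach
  refine ⟨τ₀, fun τ hτ ↦ hAc.induction_on
    (p := fun s ↦ ∃ p : ℝ, 0 < p ∧ ∀ w ∈ s, HittingBound ν φ A O τ p w) ⟨1, one_pos, by simp⟩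
    (fun s t hst ⟨p, hp, h⟩ ↦ ⟨p, hp, fun w hw ↦ h w (hst hw)⟩) ?_ fun w hw ↦ ?_⟩
  · rintro s t ⟨p, hp, hs⟩ ⟨p', hp', ht⟩
    refine ⟨min p p', lt_min hp hp', fun w hw ↦ hw.elim (fun hw ↦ ?_) fun hw ↦ ?_⟩
    · exact (hs w hw).mono subset_rfl (min_le_left _ _)
    · exact (ht w hw).mono subset_rfl (min_le_right _ _)
  · obtain ⟨l, rfl, hl, hlO⟩ := hτ₀ τ hτ w hw
    obtain ⟨U, hU, hp⟩ := exists_nhds_hittingBound hφ hνK hKν hA hO hl hlO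
    exact ⟨A ∩ U, inter_mem self_mem_nhdsWithin (mem_nhdsWithin_of_mem_nhds hU), hp⟩

lemma uniformlyIrreducibleOn_of_eventuallyReachable (hφ : Continuous (Function.uncurry φ))
    (hνK : ∀ᵐ g ∂ν, g ∈ K) (hKν : K ⊆ msupp ν)
    (hA : Set.MapsTo (Function.uncurry φ) (A ×ˢ K) A) (hAc : IsCompact A) {D : W → W → ℝ}
    (hDc : Continuous (Function.uncurry D)) (hD0 : ∀ w, D w w = 0)
    (hreach : ∀ w' ∈ A, ∀ O ∈ 𝓝 w', EventuallyReachable φ K A O) :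
    UniformlyIrreducibleOn ν φ A D := by
  intro δ hδ
  suffices h : ∃ τ₀ : ℕ, ∀ τ ≥ τ₀, ∃ p : ℝ, 0 < p ∧ ∀ w' ∈ A, ∀ w ∈ A,
      HittingBound ν φ A {x | D w' x < δ} τ p w by
    obtain ⟨τ, hτ⟩ := h
    obtain ⟨p, hp, hhit⟩ := hτ τ le_rfl
    exact ⟨τ, p, hp, fun w hw w' hw' ↦ hhit w' hw' w hw⟩
  refine hAc.induction_on (p := fun s ↦ ∃ τ₀ : ℕ, ∀ τ ≥ τ₀, ∃ p : ℝ, 0 < p ∧ ∀ w' ∈ s, ∀ w ∈ A,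
      HittingBound ν φ A {x | D w' x < δ} τ p w) ⟨0, fun _ _ ↦ ⟨1, one_pos, by simp⟩⟩
    (fun s t hst ⟨τ₀, h⟩ ↦ ⟨τ₀, fun τ hτ ↦ (h τ hτ).imp fun p hp ↦
      ⟨hp.1, fun w' hw' ↦ hp.2 w' (hst hw')⟩⟩) ?_ fun v hv ↦ ?_
  · rintro s t ⟨τ₀, hs⟩ ⟨τ₀', ht⟩
    refine ⟨max τ₀ τ₀', fun τ hτ ↦ ?_⟩
    obtain ⟨p, hp, hs⟩ := hs τ (le_of_max_le_left hτ)
    obtain ⟨p', hp', ht⟩ := ht τ (le_of_max_le_right hτ)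
    refine ⟨min p p', lt_min hp hp', fun w' hw' w hw ↦ hw'.elim (fun hw' ↦ ?_) fun hw' ↦ ?_⟩
    · exact (hs w' hw' w hw).mono subset_rfl (min_le_left _ _)
    · exact (ht w' hw' w hw).mono subset_rfl (min_le_right _ _)
  · have hball : {x : W × W | D x.1 x.2 < δ} ∈ 𝓝 (v, v) :=
      hDc.continuousAt.eventually_lt_const (by simpa [hD0] using hδ)
    obtain ⟨N, hN, O, hO, hvO, hNO⟩ : ∃ N ∈ 𝓝 v, ∃ O, IsOpen O ∧ v ∈ O ∧
        N ×ˢ O ⊆ {x : W × W | D x.1 x.2 < δ} := by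
      obtain ⟨N, O, hN, hvN, hO, hvO, hNO⟩ := mem_nhds_prod_iff'.1 hball
      exact ⟨N, hN.mem_nhds hvN, O, hO, hvO, hNO⟩
    obtain ⟨τ₀, hτ₀⟩ := (hreach v hv O (hO.mem_nhds hvO)).exists_hittingBound hφ hνK hKν hA hAc hO
    refine ⟨N, mem_nhdsWithin_of_mem_nhds hN, τ₀, fun τ hτ ↦ ?_⟩
    obtain ⟨p, hp, hhit⟩ := hτ₀ τ hτ
    exact ⟨p, hp, fun w' hw' w hw ↦
      (hhit w hw).mono (fun x hx ↦ hNO (Set.mk_mem_prod hw' hx)) le_rfl⟩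

end Irreducibility

section SegmentReachability

variable {E : Type*} [NormedAddCommGroup E] {S : E → E} {K A : Set E} {m : ℕ}

lemma eventually_iterate_segmentStep_mem (hA : S '' A + K ⊆ A)
    (hattr : TendstoUniformlyOn (fun n ↦ S^[n]) (fun _ ↦ 0) atTop A)
    {U : Set (Fin (m + 1) → E)} (hU : U ∈ 𝓝 0) :
    ∀ᶠ n in atTop, ∀ w ∈ attainM S K A (m + 1), (fun w ↦ segmentStep S m w 0)^[n] w ∈ U := by
  obtain ⟨r, hr, hrU⟩ := Metric.mem_nhds_iff.1 hU
  obtain ⟨n₀, hn₀⟩ := eventually_atTop.1 (Metric.tendstoUniformlyOn_iff.1 hattr r hr)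
  refine eventually_atTop.2 ⟨n₀ + m, fun n hn w hw ↦ hrU ?_⟩
  obtain ⟨k, rfl⟩ := Nat.exists_eq_add_of_le' ((Nat.le_add_left m n₀).trans hn)
  rw [mem_ball_zero_iff, pi_norm_lt_iff hr]
  intro i
  have hlast : Function.Semiconj (fun w : Fin (m + 1) → E ↦ w (Fin.last m))
      (fun w ↦ segmentStep S m w 0) S := fun w ↦ by
    simp only [segmentStep_last, add_zero]
  rw [apply_eq_last_of_segmentStep (X := fun n ↦ (fun w ↦ segmentStep S m w 0)^[n] w)
    (c := fun _ ↦ 0) (fun n ↦ Function.iterate_succ_apply' _ n w),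
    (hlast.iterate_right (k + i)).eq, ← dist_zero_left]
  exact hn₀ (k + i) (by omega) _ (apply_mem_of_mem_attainM hA hw _)

lemma exists_foldl_segmentStep_last_eq {u v : E} {n : ℕ} (hv : v ∈ attain S K {u} n) :
    ∃ l : List E, (∀ g ∈ l, g ∈ K) ∧ l.foldl (segmentStep S m) (fun _ ↦ u) (Fin.last m) = v := by
  induction n generalizing v with
  | zero => exact ⟨[], by simp, hv.symm⟩
  | succ n ih =>
    obtain ⟨_, ⟨v', hv', rfl⟩, z, hz, rfl⟩ := hv
    obtain ⟨l, hl, rfl⟩ := ih hv'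
    refine ⟨l ++ [z], by simpa [or_imp, forall_and] using ⟨hl, hz⟩, ?_⟩
    rw [List.foldl_append, List.foldl_cons, List.foldl_nil, segmentStep_last]

lemma foldl_range_succ {W G : Type*} (φ : W → G → W) (c : ℕ → G) (w : W) (n : ℕ) :
    ((List.range (n + 1)).map c).foldl φ w = φ (((List.range n).map c).foldl φ w) (c n) := by
  simp [List.range_succ]

lemma foldl_range_segmentStep_apply (c : ℕ → E) (y : Fin (m + 1) → E) (i : Fin (m + 1)) :
    ((List.range m).map c).foldl (segmentStep S m) y i =
      ((List.range i).map c).foldl (segmentStep S m) y (Fin.last m) := by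
  simpa only [zero_add] using apply_eq_last_of_segmentStep
    (X := fun n ↦ ((List.range n).map c).foldl (segmentStep S m) y)
    (foldl_range_succ (segmentStep S m) c y) 0 i

lemma foldl_range_segmentStep_congr (c : ℕ → E) {y y' : Fin (m + 1) → E}
    (hy : y (Fin.last m) = y' (Fin.last m)) :
    ((List.range m).map c).foldl (segmentStep S m) y =
      ((List.range m).map c).foldl (segmentStep S m) y' := by
  funext i
  rw [foldl_range_segmentStep_apply, foldl_range_segmentStep_apply]
  generalize (i : ℕ) = n
  induction n with
  | zero => exact hy
  | succ n ih => rw [foldl_range_succ, foldl_range_succ, segmentStep_last, segmentStep_last, ih]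

lemma foldl_range_segmentStep_eq {w : Fin (m + 1) → E} {c : ℕ → E}
    (hc : ∀ i : Fin m, w i.succ = S (w i.castSucc) + c i) {y : Fin (m + 1) → E}
    (hy : y (Fin.last m) = w 0) : ((List.range m).map c).foldl (segmentStep S m) y = w := by
  funext i
  rw [foldl_range_segmentStep_apply]
  induction i using Fin.induction with
  | zero => exact hy
  | succ i ih => rw [Fin.val_succ, foldl_range_succ, segmentStep_last, hc, ← ih, Fin.val_castSucc]

lemma mem_closure_reachable_of_mem_attainM (hS : Continuous S) {u : E} {w : Fin (m + 1) → E}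
    (hw : w ∈ attainM S K (attainDom S K {u}) (m + 1)) :
    w ∈ closure {y | ∃ l : List E, (∀ g ∈ l, g ∈ K) ∧
      l.foldl (segmentStep S m) (fun _ ↦ u) = y} := by
  rw [mem_attainM_succ_iff] at hw
  let c (n : ℕ) : E := if h : n < m then w (Fin.succ ⟨n, h⟩) - S (w (Fin.castSucc ⟨n, h⟩)) else 0
  have hc (i : Fin m) : c i = w i.succ - S (w i.castSucc) := dif_pos i.2
  have hcK : ∀ g ∈ (List.range m).map c, g ∈ K := by
    intro g hg
    obtain ⟨n, hn, rfl⟩ := List.mem_map.1 hg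
    rw [List.mem_range] at hn
    exact hc ⟨n, hn⟩ ▸ hw.2 ⟨n, hn⟩
  let Φ (v : E) : Fin (m + 1) → E := ((List.range m).map c).foldl (segmentStep S m) fun _ ↦ v
  have hΦ : Continuous Φ := (continuous_foldl (continuous_segmentStep hS m) _).comp (by fun_prop)
  have hΦw : Φ (w 0) = w := foldl_range_segmentStep_eq (fun i ↦ by rw [hc, add_sub_cancel]) rfl
  rw [← hΦw]
  refine map_mem_closure hΦ hw.1 fun v hv ↦ ?_
  obtain ⟨n, hn⟩ := Set.mem_iUnion.1 hv
  obtain ⟨l, hl, hlast⟩ := exists_foldl_segmentStep_last_eq (m := m) hn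
  refine ⟨l ++ (List.range m).map c, fun g hg ↦ (List.mem_append.1 hg).elim (hl g) (hcK g), ?_⟩
  rw [List.foldl_append]
  exact foldl_range_segmentStep_congr c hlast

lemma uniformlyIrreducibleOn_segmentStep [MeasurableSpace E] [OpensMeasurableSpace E]
    {ν : Measure E} [IsProbabilityMeasure ν] (hS : Continuous S)
    (hνK : ∀ᵐ g ∂ν, g ∈ K) (hKν : K ⊆ msupp ν) (hKc : IsCompact K) (hK0 : 0 ∈ K)
    (hAc : IsCompact (attainDom S K {0}))
    (hattr : TendstoUniformlyOn (fun n ↦ S^[n]) (fun _ ↦ 0) atTop (attainDom S K {0}))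
    {D : (Fin (m + 1) → E) → (Fin (m + 1) → E) → ℝ} (hDc : Continuous (Function.uncurry D))
    (hD0 : ∀ w, D w w = 0) :
    UniformlyIrreducibleOn ν (segmentStep S m) (attainM S K (attainDom S K {0}) (m + 1)) D := by
  have hinv := image_attainDom_add_subset (K := K) (B := {0}) hS
  have hcont := continuous_segmentStep hS m
  exact uniformlyIrreducibleOn_of_eventuallyReachable hcont hνK hKν
    (mapsTo_segmentStep_attainM hinv) (isCompact_attainM hS hinv hAc hKc) hDc hD0
    fun w' hw' O hO ↦ eventuallyReachable_of_attractor hcont hK0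
      (fun U hU ↦ eventually_iterate_segmentStep_mem hinv hattr hU)
      (mem_closure_reachable_of_mem_attainM hS hw') hO

end SegmentReachability

/-! ### Almost superadditivity along segments of trajectories -/

section SegmentDist

variable {E : Type*} [NormedAddCommGroup E] {lam : ℝ} {m : ℕ} (w w' : Fin (m + 1) → E)

/-- A weighted distance on segments. The weights `lam ^ i` make dropping the first state a
contraction by the factor `lam⁻¹`. -/
def segmentDist (lam : ℝ) (m : ℕ) (w w' : Fin (m + 1) → E) : ℝ :=
  ∑ i : Fin (m + 1), lam ^ (i : ℕ) * ‖w i - w' i‖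

lemma segmentDist_self : segmentDist lam m w w = 0 := by
  simp [segmentDist]

lemma continuous_segmentDist (lam : ℝ) (m : ℕ) :
    Continuous (Function.uncurry (segmentDist (E := E) lam m)) := by
  unfold segmentDist Function.uncurry
  fun_prop

lemma pow_mul_norm_sub_le_segmentDist (hlam : 0 ≤ lam) (i : Fin (m + 1)) :
    lam ^ (i : ℕ) * ‖w i - w' i‖ ≤ segmentDist lam m w w' :=
  Finset.single_le_sum (f := fun i : Fin (m + 1) ↦ lam ^ (i : ℕ) * ‖w i - w' i‖)
    (fun i _ ↦ by positivity) (Finset.mem_univ i)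

lemma dist_le_segmentDist (hlam : 1 ≤ lam) : dist w w' ≤ segmentDist lam m w w' := by
  have hle (i : Fin (m + 1)) : dist (w i) (w' i) ≤ segmentDist lam m w w' :=
    calc dist (w i) (w' i) = ‖w i - w' i‖ := dist_eq_norm _ _
      _ ≤ lam ^ (i : ℕ) * ‖w i - w' i‖ :=
        le_mul_of_one_le_left (norm_nonneg _) (one_le_pow₀ hlam)
      _ ≤ segmentDist lam m w w' :=
        pow_mul_norm_sub_le_segmentDist w w' (zero_le_one.trans hlam) i
  exact (dist_pi_le_iff (dist_nonneg.trans (hle 0))).2 hle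

lemma segmentDist_segmentStep_le (hlam : 0 < lam) {S : E → E} {g g' : E} {γ : ℝ} (hγ : 0 ≤ γ)
    (h : ‖S (w (Fin.last m)) + g - (S (w' (Fin.last m)) + g')‖ ≤
      γ * ‖w (Fin.last m) - w' (Fin.last m)‖) :
    segmentDist lam m (segmentStep S m w g) (segmentStep S m w' g') ≤
      (lam⁻¹ + γ) * segmentDist lam m w w' := by
  have hfirst : ∑ i : Fin m, lam ^ (i : ℕ) * ‖w i.succ - w' i.succ‖ ≤
      lam⁻¹ * segmentDist lam m w w' := by
    rw [segmentDist, Fin.sum_univ_succ, mul_add, Finset.mul_sum]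
    refine le_add_of_nonneg_of_le (by positivity) (Finset.sum_le_sum fun i _ ↦ le_of_eq ?_)
    rw [Fin.val_succ, pow_succ']
    field_simp
  have hlast : lam ^ m * ‖S (w (Fin.last m)) + g - (S (w' (Fin.last m)) + g')‖ ≤
      γ * segmentDist lam m w w' :=
    calc _ ≤ lam ^ m * (γ * ‖w (Fin.last m) - w' (Fin.last m)‖) := by gcongr
      _ = γ * (lam ^ m * ‖w (Fin.last m) - w' (Fin.last m)‖) := by ring
      _ ≤ _ := by
        gcongr
        exact pow_mul_norm_sub_le_segmentDist w w' hlam.le (Fin.last m)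
  rw [segmentDist, Fin.sum_univ_castSucc, add_mul]
  simpa only [segmentStep_castSucc, segmentStep_last, Fin.val_castSucc, Fin.val_last]
    using add_le_add hfirst hlast

-- Shifting the noise by `T (S u' - S u)` replaces the difference of the two images by its
-- component `(I - T) (S u' - S u)`, which squeezing makes small.
lemma hasShiftCoupling_segmentStep [MeasurableSpace E] {ν : Measure E} {S T : E → E} {K A : Set E}
    (hA : S '' A + K ⊆ A) {L C : ℝ≥0} (hlip : LipschitzOnWith L S A) {γ : ℝ} (hγ : 0 ≤ γ)
    (hsq : ∀ u ∈ A, ∀ v ∈ A, ‖(S u - S v) - T (S u - S v)‖ ≤ γ * ‖u - v‖)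
    (hT : ∀ u, ShiftBound ν (T u) (ENNReal.ofReal (C * ‖u‖))) (hlam : 1 ≤ lam) (m : ℕ) :
    HasShiftCoupling ν (segmentStep S m) K (attainM S K A (m + 1)) (segmentDist lam m) (lam⁻¹ + γ)
      (C * L) := by
  intro w hw w' hw'
  have hu := apply_mem_of_mem_attainM hA hw (Fin.last m)
  have hu' := apply_mem_of_mem_attainM hA hw' (Fin.last m)
  refine ⟨T (S (w' (Fin.last m)) - S (w (Fin.last m))), fun g _ _ ↦ ?_, (hT _).mono ?_⟩
  · refine segmentDist_segmentStep_le w w' (zero_lt_one.trans_le hlam) hγ ?_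
    rw [norm_sub_rev, norm_sub_rev (w _)]
    refine le_of_eq_of_le ?_ (hsq _ hu' _ hu)
    congr 1
    abel
  · refine ENNReal.ofReal_le_ofReal ?_
    rw [mul_assoc]
    gcongr
    calc ‖S (w' (Fin.last m)) - S (w (Fin.last m))‖
        ≤ L * ‖w' (Fin.last m) - w (Fin.last m)‖ := hlip.norm_sub_le hu' hu
      _ ≤ L * segmentDist lam m w w' := by
        gcongr
        rw [norm_sub_rev, ← dist_eq_norm]
        exact (dist_le_pi_dist w w' _).trans (dist_le_segmentDist w w' hlam)

end SegmentDist

lemma exists_norm_sub_le_add_mul_dist {W E : Type*} [PseudoMetricSpace W]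
    [SeminormedAddCommGroup E] {A : Set W} (hA : IsCompact A) (V : W →ᵇ E) {ε : ℝ} (hε : 0 < ε) :
    ∃ Λ : ℝ≥0, ∀ w ∈ A, ∀ w' ∈ A, ‖V w - V w'‖ ≤ ε + Λ * dist w w' := by
  obtain ⟨δ, hδ, hV⟩ := Metric.uniformContinuousOn_iff.1
    (hA.uniformContinuousOn_of_continuous V.continuous.continuousOn) ε hε
  refine ⟨.mk (2 * ‖V‖ / δ) (by positivity), fun w hw w' hw' ↦ ?_⟩
  rw [← dist_eq_norm, NNReal.coe_mk]
  rcases lt_or_ge (dist w w') δ with hdist | hdist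
  · exact (hV w hw w' hw' hdist).le.trans (le_add_of_nonneg_right (by positivity))
  · calc dist (V w) (V w') ≤ 2 * ‖V‖ := V.dist_le_two_norm w w'
      _ = 2 * ‖V‖ / δ * δ := by field_simp
      _ ≤ 2 * ‖V‖ / δ * dist w w' := by gcongr
      _ ≤ ε + 2 * ‖V‖ / δ * dist w w' := le_add_of_nonneg_left hε.le

theorem IsRandomRecursion.almostSuperadditive {Ω W G : Type*} [MeasurableSpace Ω]
    [PseudoMetricSpace W] [MeasurableSpace W] [OpensMeasurableSpace W] [MeasurableSpace G]
    [AddGroup G] {P : Measure Ω} [IsProbabilityMeasure P] {ν : Measure G}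
    [IsProbabilityMeasure ν] {φ : W → G → W} {x : ℕ → Ω → W} {g : ℕ → Ω → G}
    (hx : IsRandomRecursion P ν φ x g)
    (hφ : Measurable (Function.uncurry φ)) {K : Set G} (hνK : ∀ᵐ g ∂ν, g ∈ K)
    (hK : MeasurableSet K) {A : Set W} (hA : Set.MapsTo (Function.uncurry φ) (A ×ˢ K) A)
    (hAc : IsCompact A) (hx0 : ∀ᵐ ω ∂P, x 0 ω ∈ A)
    (hmix : ∀ q : ℝ, 0 < q → q ≤ 1 / 2 → ∃ (D : W → W → ℝ) (C : ℝ≥0),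
      (∀ w w', dist w w' ≤ D w w') ∧ HasShiftCoupling ν φ K A D q C ∧
        UniformlyIrreducibleOn ν φ A D) :
    AlmostSuperadditive P x := by
  intro E _ _ _ V ε hε
  borelize E
  have := FiniteDimensional.proper_real E
  let q := Real.exp (-(2 * ‖V‖)) / 2
  have hq : q ≤ 1 / 2 := by
    have hexp : Real.exp (-(2 * ‖V‖)) ≤ 1 := Real.exp_le_one_iff.2 (by simp)
    simp only [q]
    linarith
  have hqV : q * Real.exp (2 * ‖V‖) ≤ 1 / 2 := by
    rw [div_mul_eq_mul_div, ← Real.exp_add, neg_add_cancel, Real.exp_zero]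
  obtain ⟨D, C, hD, hcoup, hirr⟩ := hmix q (by positivity) hq
  obtain ⟨Λ, hΛ⟩ := exists_norm_sub_le_add_mul_dist hAc V hε
  have hVD : ∀ w ∈ A, ∀ w' ∈ A, ‖V w - V w'‖ ≤ ε + Λ * D w w' := fun w hw w' hw' ↦
    (hΛ w hw w' hw').trans (by gcongr; exact hD w w')
  obtain ⟨C', hC'⟩ := feynmanKac.harnack hνK hK hA hφ V.continuous.measurable V.norm_coe_le_norm
    (fun w w' ↦ dist_nonneg.trans (hD w w')) hq hqV C.coe_nonneg Λ.coe_nonneg hVD hcoup hirr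
  exact ⟨C', fun F F₁ F₂ hF hF₁ hF₂ hadd k j ↦ hx.cgf_add_cgf_le hφ V.continuous.measurable
    V.norm_coe_le_norm hνK hA hx0 hC' hF hF₁ hF₂ hadd k j⟩

section Trajectories

lemma isCompact_attainDom_of_squeezing {S : H → H} {e : HilbertBasis ℕ ℝ H} {K : Set H}
    (hS : Continuous S) (hS0 : S 0 = 0) (hK : IsCompact K) (hK0 : 0 ∈ K)
    (hbdd : Bornology.IsBounded (attainDom S K {0}))
    (hsq : ∀ ε > 0, ∃ N, ∀ u ∈ attainDom S K {0}, ∀ v ∈ attainDom S K {0},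
      ‖(S u - S v) - projB e N (S u - S v)‖ ≤ ε * ‖u - v‖) :
    IsCompact (attainDom S K {0}) := by
  have hmaps : S '' attainDom S K {0} ⊆ attainDom S K {0} := fun u hu ↦
    image_attainDom_add_subset hS (add_zero u ▸ Set.add_mem_add hu hK0)
  refine isCompact_attainDom isCompact_singleton hK
    (totallyBounded_of_norm_sub_projB_le e (hbdd.subset hmaps) fun ε hε ↦ ?_)
  obtain ⟨R, hR, hle⟩ := hbdd.exists_pos_norm_le
  obtain ⟨N, hN⟩ := hsq (ε / R) (by positivity)
  refine ⟨N, Set.forall_mem_image.2 fun u hu ↦ ?_⟩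
  have hu0 := hN u hu 0 (attain_subset_attainDom 0 rfl)
  rw [hS0, sub_zero, sub_zero] at hu0
  calc _ ≤ ε / R * ‖u‖ := hu0
    _ ≤ ε / R * R := by gcongr; exact hle u hu
    _ = ε := div_mul_cancel₀ ε hR.ne'

lemma ae_forall_traj_segment_mem_attainM {E : Type} {Ω : Type*} [NormedAddCommGroup E]
    [MeasurableSpace Ω] {P : Measure Ω} {S : E → E} {η : ℕ → Ω → E} {u₀ : Ω → E} {K A : Set E}
    (hA : S '' A + K ⊆ A) (hη : ∀ k, ∀ᵐ ω ∂P, η k ω ∈ K) (hu₀ : ∀ᵐ ω ∂P, u₀ ω ∈ A)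
    (m : ℕ) :
    ∀ᵐ ω ∂P, ∀ n, (fun i : Fin m ↦ traj S η u₀ (n + i) ω) ∈ attainM S K A m := by
  filter_upwards [ae_all_iff.2 hη, hu₀] with ω hηω hu₀ω n
  have htraj (k : ℕ) : traj S η u₀ k ω ∈ A := by
    induction k with
    | zero => exact hu₀ω
    | succ k ih => exact hA (Set.add_mem_add (Set.mem_image_of_mem S ih) (hηω (k + 1)))
  exact ⟨fun _ ↦ htraj _, fun i _ ↦ ⟨η (n + i + 1) ω, hηω _, rfl⟩⟩

variable [SecondCountableTopology H] [MeasurableSpace H] [BorelSpace H] {Ω : Type*}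
  [MeasurableSpace Ω] {P : Measure Ω} {S : H → H} {e : HilbertBasis ℕ ℝ H} {η : ℕ → Ω → H}
  {b : ℕ → ℝ} {ξ : ℕ → ℕ → Ω → ℝ} {p : ℕ → ℝ → ℝ} {u₀ : Ω → H} {K : Set H}

lemma isRandomRecursion_traj_segment [IsProbabilityMeasure P] (hD : CondD P e η b ξ p)
    (hη : ∀ k, Measurable (η k)) (hS : Continuous S) (hu₀ : Measurable u₀)
    (hindep : IndepFun u₀ (fun ω (k : ℕ) ↦ η k ω) P) (m : ℕ) :
    IsRandomRecursion P (P.map (η 1)) (segmentStep S m)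
      (fun n ω (i : Fin (m + 1)) ↦ traj S η u₀ (n + i) ω) fun n ↦ η (n + (m + 1)) where
  measurable _ := measurable_pi_iff.2 fun _ ↦ measurable_traj hη hS hu₀ _
  measurable_noise _ := hη _
  succ_eq _ ω := (segmentStep_segment (t := fun k ↦ traj S η u₀ k ω) rfl).symm
  map_noise _ := hD.map_noise_eq hη _ _
  indepFun n := indepFun_traj_segments hD hη hS hu₀ hindep m n

lemma almostSuperadditive_traj_segment [IsProbabilityMeasure P] (hD : CondD P e η b ξ p)
    (hb : ∀ j, b j ≠ 0) (hη : ∀ k, Measurable (η k)) (hS : Continuous S) (hu₀ : Measurable u₀)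
    (hindep : IndepFun u₀ (fun ω (k : ℕ) ↦ η k ω) P) (hK : K = msupp (P.map (η 1)))
    (hKc : IsCompact K) (hAc : IsCompact (attainDom S K {0}))
    (hattr : TendstoUniformlyOn (fun n ↦ S^[n]) (fun _ ↦ 0) atTop (attainDom S K {0}))
    {L : ℝ≥0} (hlip : LipschitzOnWith L S (attainDom S K {0}))
    (hsq : ∀ ε > 0, ∃ N, ∀ u ∈ attainDom S K {0}, ∀ v ∈ attainDom S K {0},
      ‖(S u - S v) - projB e N (S u - S v)‖ ≤ ε * ‖u - v‖) {m : ℕ}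
    (hxA : ∀ᵐ ω ∂P, ∀ n, (fun i : Fin (m + 1) ↦ traj S η u₀ (n + i) ω) ∈
      attainM S K (attainDom S K {0}) (m + 1)) :
    AlmostSuperadditive P fun n ω (i : Fin (m + 1)) ↦ traj S η u₀ (n + i) ω := by
  have hinv := image_attainDom_add_subset (K := K) (B := {0}) hS
  have hK0 : 0 ∈ K := hK ▸ hD.zero_mem_msupp hη 1
  have hνK : ∀ᵐ g ∂P.map (η 1), g ∈ K := hK ▸ ae_mem_msupp _
  have := Measure.isProbabilityMeasure_map (μ := P) (hη 1).aemeasurable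
  refine (isRandomRecursion_traj_segment hD hη hS hu₀ hindep m).almostSuperadditive
    (continuous_segmentStep hS m).measurable hνK hKc.measurableSet
    (mapsTo_segmentStep_attainM hinv) (isCompact_attainM hS hinv hAc hKc)
    (hxA.mono fun ω hω ↦ hω 0) fun q hq hq2 ↦ ?_
  have hlam : 1 ≤ 2 / q := by
    rw [le_div_iff₀ hq]
    linarith
  obtain ⟨N, hN⟩ := hsq (q / 2) (half_pos hq)
  obtain ⟨C, hC⟩ := hD.exists_shiftBound_projB hη hb 1 N
  have hcoup := hasShiftCoupling_segmentStep hinv hlip (half_pos hq).le hN hC hlam m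
  rw [inv_div, add_halves, ← NNReal.coe_mul] at hcoup
  exact ⟨segmentDist (2 / q) m, C * L, fun w w' ↦ dist_le_segmentDist w w' hlam, hcoup,
    uniformlyIrreducibleOn_segmentStep hS hνK hK.subset hKc hK0 hAc hattr
      (continuous_segmentDist _ m) segmentDist_self⟩

end Trajectories

section Conditions

lemma map_zero_of_tendstoUniformlyOn_iterate {E : Type*} [NormedAddCommGroup E] {S : E → E}
    (hS : Continuous S) {A : Set E} (h0 : 0 ∈ A)
    (hattr : TendstoUniformlyOn (fun n ↦ S^[n]) (fun _ ↦ 0) atTop A) : S 0 = 0 :=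
  isFixedPt_of_tendsto_iterate (hattr.tendsto_at h0) hS.continuousAt

lemma CondB.exists_attainDom_subset_closedBall {E : Type} [NormedAddCommGroup E] {S : E → E}
    {K : Set E} (hB : CondB S K) (hS0 : S 0 = 0) (hK0 : 0 ∈ K) :
    ∃ ρ > 0, attainDom S K {0} ⊆ Metric.closedBall 0 ρ := by
  obtain ⟨ρ, hρ, k₀, -, hatt⟩ := hB
  refine ⟨ρ, hρ, closure_minimal (Set.iUnion_subset fun n ↦ ?_) Metric.isClosed_closedBall⟩
  have hmono : Monotone (attain S K {0}) :=
    monotone_attain (Set.singleton_subset_iff.2 ⟨0, ⟨0, rfl, hS0⟩, 0, hK0, add_zero 0⟩)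
  have hball := hatt 0 le_rfl (max n (k₀ 0)) (le_max_right _ _)
  rw [Metric.closedBall_zero] at hball
  exact (hmono (le_max_left n (k₀ 0))).trans hball

variable {E : Type} [NormedAddCommGroup E] [InnerProductSpace ℝ E] {S : E → E} {R : ℝ}

namespace CondA

lemma eventually_norm_iterate_le (hA : CondA S) {r : ℝ} (hr : 0 < r) (hrR : r < R) :
    ∀ᶠ n in atTop, ∀ u ∈ Metric.closedBall (0 : E) R, ‖S^[n] u‖ ≤ r := by
  obtain ⟨-, -, a, ha0, ha1, n₀, -, -, hstab⟩ := hA.2 R r hr hrR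
  have hball (j : ℕ) : max (a ^ j * R) r ≤ R :=
    max_le (mul_le_of_le_one_left (hr.trans hrR).le (pow_le_one₀ ha0.le ha1.le)) hrR.le
  have hiter (j : ℕ) {u : E} (hu : u ∈ Metric.closedBall (0 : E) R) :
      ‖S^[j * n₀] u‖ ≤ max (a ^ j * R) r := by
    induction j with
    | zero => simpa using Or.inl hu
    | succ j ih =>
      rw [Nat.succ_mul, add_comm, Function.iterate_add_apply]
      refine (hstab _ (mem_closedBall_zero_iff.2 (ih.trans (hball j))) n₀ le_rfl).trans
        (max_le ?_ (le_max_right _ _))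
      calc a * ‖S^[j * n₀] u‖ ≤ a * max (a ^ j * R) r := by gcongr
        _ = max (a ^ (j + 1) * R) (a * r) := by
          rw [mul_max_of_nonneg _ _ ha0.le, pow_succ', mul_assoc]
        _ ≤ max (a ^ (j + 1) * R) r :=
          max_le_max_left _ (mul_le_of_le_one_left hr.le ha1.le)
  have hpow : Tendsto (fun j : ℕ ↦ a ^ j * R) atTop (𝓝 0) := by
    simpa using (tendsto_pow_atTop_nhds_zero_of_lt_one ha0.le ha1).mul_const R
  obtain ⟨j, hj⟩ := (hpow.eventually_le_const hr).exists
  filter_upwards [eventually_ge_atTop (n₀ + j * n₀)] with n hn u hu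
  have hu' := (hiter j hu).trans (max_le hj le_rfl)
  rw [← Nat.sub_add_cancel (le_of_add_le_right hn), Function.iterate_add_apply]
  refine (hstab _ (mem_closedBall_zero_iff.2 (hu'.trans hrR.le)) _
    (Nat.le_sub_of_add_le hn)).trans (max_le ?_ le_rfl)
  exact (mul_le_of_le_one_left (norm_nonneg _) ha1.le).trans hu'

lemma tendstoUniformlyOn_iterate (hA : CondA S) (R : ℝ) :
    TendstoUniformlyOn (fun n ↦ S^[n]) (fun _ ↦ 0) atTop (Metric.closedBall 0 R) := by
  rw [Metric.tendstoUniformlyOn_iff]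
  intro ε hε
  filter_upwards [hA.eventually_norm_iterate_le (half_pos hε)
    ((half_lt_self hε).trans_le (le_max_right R ε))] with n hn u hu
  rw [dist_zero_left]
  exact (hn u (Metric.closedBall_subset_closedBall (le_max_left R ε) hu)).trans_lt
    (half_lt_self hε)

lemma exists_lipschitzOnWith (hA : CondA S) (hR : 0 < R) :
    ∃ L : ℝ≥0, LipschitzOnWith L S (Metric.closedBall 0 R) := by
  obtain ⟨C, hC, -, -, -, -, -, hlip, -⟩ := hA.2 R (R / 2) (half_pos hR) (half_lt_self hR)
  exact ⟨.mk C hC.le, .of_dist_le_mul fun u hu v hv ↦ by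
    simpa only [dist_eq_norm, NNReal.coe_mk] using hlip u hu v hv⟩

end CondA

lemma CondC.exists_norm_sub_projB_le {e : HilbertBasis ℕ ℝ E} (hC : CondC S e) (hR : 0 < R)
    {ε : ℝ} (hε : 0 < ε) : ∃ N, ∀ u ∈ Metric.closedBall (0 : E) R,
      ∀ v ∈ Metric.closedBall (0 : E) R,
        ‖(S u - S v) - projB e N (S u - S v)‖ ≤ ε * ‖u - v‖ := by
  obtain ⟨γ, -, -, hγ, hsq⟩ := hC R hR
  obtain ⟨N, hN⟩ := (hγ.eventually_le_const hε).exists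
  exact ⟨N, fun u hu v hv ↦ (hsq N u hu v hv).trans (by gcongr)⟩

end Conditions

theorem statement3_general
    {H : Type} [NormedAddCommGroup H] [InnerProductSpace ℝ H] [CompleteSpace H]
    [SecondCountableTopology H] [MeasurableSpace H] [BorelSpace H]
    {Ω : Type*} [MeasurableSpace Ω] (P : Measure Ω) [IsProbabilityMeasure P]
    (S : H → H) (e : HilbertBasis ℕ ℝ H)
    (η : ℕ → Ω → H) (hηmeas : ∀ k, Measurable (η k))
    (b : ℕ → ℝ) (ξ : ℕ → ℕ → Ω → ℝ) (p : ℕ → ℝ → ℝ)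
    (K : Set H) (hK : K = msupp (Measure.map (η 1) P)) (hKcomp : IsCompact K)
    (hS : Continuous S) (hbdd : Bornology.IsBounded (attainDom S K {0}))
    (hattr : TendstoUniformlyOn (fun n ↦ S^[n]) (fun _ ↦ 0) atTop (attainDom S K {0}))
    (hlip : ∃ L : ℝ≥0, LipschitzOnWith L S (attainDom S K {0}))
    (hsq : ∀ ε > 0, ∃ N, ∀ u ∈ attainDom S K {0}, ∀ v ∈ attainDom S K {0},
      ‖(S u - S v) - projB e N (S u - S v)‖ ≤ ε * ‖u - v‖)
    (hD : CondD P e η b ξ p) (hb : ∀ j, b j ≠ 0)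
    (u₀ : Ω → H) (hu₀ : Measurable u₀)
    (hindep : IndepFun u₀ (fun ω (k : ℕ) ↦ η k ω) P)
    (hsupp : Measure.map u₀ P (attainDom S K {0}) = 1)
    (m : ℕ) (hm : 1 ≤ m) :
    ∃ Qm : ((Fin m → H) →ᵇ ℝ) → ℝ,
      (∀ V : (Fin m → H) →ᵇ ℝ,
        Tendsto (fun k : ℕ ↦ (k : ℝ)⁻¹ *
            Real.log (∫ ω, Real.exp (∑ n ∈ Finset.Icc 1 k,
              V (fun i : Fin m ↦ traj S η u₀ (n + i) ω)) ∂P))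
          atTop (𝓝 (Qm V))) ∧
      ConvexOn ℝ Set.univ Qm ∧
      (∀ V₁ V₂ : (Fin m → H) →ᵇ ℝ,
        |Qm V₁ - Qm V₂| ≤
          ⨆ y : attainM S K (attainDom S K ({0} : Set H)) m,
            |V₁ (y : Fin m → H) - V₂ (y : Fin m → H)|) ∧
      (∀ c : ℝ, Qm (BoundedContinuousFunction.const (Fin m → H) c) = c) ∧
      GoodRate (legendreRate Qm) ∧
      LDPof (fun k F ↦ P {ω | occ (fun n (i : Fin m) ↦ traj S η u₀ (n + i) ω) k ∈ F})
        (legendreRate Qm) := by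
  obtain ⟨m, rfl⟩ := Nat.exists_eq_add_of_le' hm
  have hinv := image_attainDom_add_subset (K := K) (B := {0}) hS
  have h0 : 0 ∈ attainDom S K {0} := attain_subset_attainDom 0 rfl
  have hS0 := map_zero_of_tendstoUniformlyOn_iterate hS h0 hattr
  have hAc := isCompact_attainDom_of_squeezing hS hS0 hKcomp
    (hK ▸ hD.zero_mem_msupp hηmeas 1) hbdd hsq
  have hu₀A : ∀ᵐ ω ∂P, u₀ ω ∈ attainDom S K {0} := by
    have := Measure.isProbabilityMeasure_map (μ := P) hu₀.aemeasurable
    exact ae_of_ae_map hu₀.aemeasurable ((mem_ae_iff_prob_eq_one hAc.measurableSet).2 hsupp)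
  have hxA := ae_forall_traj_segment_mem_attainM hinv
    (fun k ↦ hK ▸ hD.ae_noise_mem_msupp hηmeas k 1) hu₀A (m + 1)
  have hx := (isRandomRecursion_traj_segment hD hηmeas hS hu₀ hindep m).measurable
  have hAMc : IsCompact (attainM S K (attainDom S K {0}) (m + 1)) :=
    isCompact_attainM hS hinv hAc hKcomp
  obtain ⟨L, hL⟩ := hlip
  have hP := almostSuperadditive_traj_segment hD hb hηmeas hS hu₀ hindep hK hKcomp hAc hattr hL
    hsq hxA
  refine ⟨pressure P fun n ω i ↦ traj S η u₀ (n + i) ω, fun V ↦ ?_, hP.convexOn_pressure hx,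
    fun V₁ V₂ ↦ hP.abs_pressure_sub_le hx hxA, hP.pressure_const hx,
    hP.goodRate_legendreRate hx hAMc hxA, hP.ldpof_occ hx hAMc hxA⟩
  simpa only [cgf, mgf, one_mul, div_eq_inv_mul] using hP.tendsto_pressure_Icc hx V

/-- **Theorem 2.6**: under Conditions (A)–(D) with `b_j ≠ 0`, for any initial state whose law
is supported by `𝒜`, the occupation measures
`ζ_k^m = k⁻¹ ∑_{n=0}^{k-1} δ_{(u_n,…,u_{n+m-1})}`, concentrated on `𝒜^{(m)}`, satisfy the LDP
with a good rate function `I_m(σ) = sup_V (⟨V,σ⟩ - Q_m(V))`, where `Q_m` is a `1`-Lipschitz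
convex function with `Q_m(C) = C` on constants. -/
theorem statement3
    {H : Type} [NormedAddCommGroup H] [InnerProductSpace ℝ H] [CompleteSpace H]
    [SecondCountableTopology H] [MeasurableSpace H] [BorelSpace H]
    {Ω : Type} [MeasurableSpace Ω] (P : Measure Ω) [IsProbabilityMeasure P]
    (S : H → H) (e : HilbertBasis ℕ ℝ H)
    (η : ℕ → Ω → H) (hηmeas : ∀ k, Measurable (η k))
    (b : ℕ → ℝ) (ξ : ℕ → ℕ → Ω → ℝ) (p : ℕ → ℝ → ℝ)
    (K : Set H) (hK : K = msupp (Measure.map (η 1) P)) (hKcomp : IsCompact K)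
    (hA : CondA S) (hB : CondB S K) (hC : CondC S e) (hD : CondD P e η b ξ p)
    (hb : ∀ j, b j ≠ 0)
    (u₀ : Ω → H) (hu₀ : Measurable u₀)
    (hindep : IndepFun u₀ (fun ω (k : ℕ) => η k ω) P)
    (hsupp : Measure.map u₀ P (attainDom S K {0}) = 1)
    (m : ℕ) (hm : 1 ≤ m) :
    ∃ Qm : ((Fin m → H) →ᵇ ℝ) → ℝ,
      -- `Q_m` is the limit of `k⁻¹ log 𝔼 exp(∑_{n=1}^k V(𝐮_n))`
      (∀ V : (Fin m → H) →ᵇ ℝ,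
        Tendsto (fun k : ℕ => (k : ℝ)⁻¹ *
            Real.log (∫ ω, Real.exp (∑ n ∈ Finset.Icc 1 k,
              V (fun i : Fin m => traj S η u₀ (n + i) ω)) ∂P))
          atTop (𝓝 (Qm V))) ∧
      ConvexOn ℝ Set.univ Qm ∧
      (∀ V₁ V₂ : (Fin m → H) →ᵇ ℝ,
        |Qm V₁ - Qm V₂| ≤
          ⨆ y : attainM S K (attainDom S K ({0} : Set H)) m,
            |V₁ (y : Fin m → H) - V₂ (y : Fin m → H)|) ∧
      (∀ c : ℝ, Qm (BoundedContinuousFunction.const (Fin m → H) c) = c) ∧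
      GoodRate (fun σ : ProbabilityMeasure (Fin m → H) =>
        ⨆ V : (Fin m → H) →ᵇ ℝ,
          ENNReal.ofReal ((∫ x, V x ∂(σ : Measure (Fin m → H))) - Qm V)) ∧
      LDPof
        (fun k F =>
          P {ω | occ (fun n (i : Fin m) => traj S η u₀ (n + i) ω) k ∈ F})
        (fun σ : ProbabilityMeasure (Fin m → H) =>
          ⨆ V : (Fin m → H) →ᵇ ℝ,
            ENNReal.ofReal ((∫ x, V x ∂(σ : Measure (Fin m → H))) - Qm V)) := by
  have hS := hA.1.continuous
  have hS0 := map_zero_of_tendstoUniformlyOn_iterate hS (Metric.mem_closedBall_self zero_le_one)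
    (hA.tendstoUniformlyOn_iterate 1)
  obtain ⟨ρ, hρ, hball⟩ := hB.exists_attainDom_subset_closedBall hS0
    (hK ▸ hD.zero_mem_msupp hηmeas 1)
  refine statement3_general P S e η hηmeas b ξ p K hK hKcomp hS
    (Metric.isBounded_closedBall.subset hball) ((hA.tendstoUniformlyOn_iterate ρ).mono hball)
    ((hA.exists_lipschitzOnWith hρ).imp fun _ h ↦ h.mono hball) (fun ε hε ↦ ?_) hD hb u₀ hu₀
    hindep hsupp m hm
  exact (hC.exists_norm_sub_projB_le hρ hε).imp fun _ h u hu v hv ↦ h u (hball hu) v (hball hv)
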